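/- Let m and d be integers with 0 ≤ m ≤ d−1, let p be a prime, and for each 0 ≤ ℓ ≤ m let r_ℓ = p^{e_ℓ} be a power of p with integer e_ℓ ≥ 0. Set N_ℓ = (r_ℓ−1)(2d+2−m). For each 0 ≤ ℓ ≤ m let the vertex set of Δ_{N_ℓ} be partitioned into d+1 color classes, each of cardinality at most 2r_ℓ−1. Assume that p(d−m) is even, or m = 0. Then for every collection of continuous maps f_0: Δ_{N_0} → ℝ^d, …, f_m: Δ_{N_m} → ℝ^d there exist an m-dimensional affine subspace L of ℝ^d and, for each 0 ≤ ℓ ≤ m, r_ℓ pairwise disjoint rainbow faces σ_1^ℓ, …, σ_{r_ℓ}^ℓ of Δ_{N_ℓ} such that f_ℓ(σ_j^ℓ) ∩ L ≠ ∅ for all 1 ≤ j ≤ r_ℓ. (The topological transversal weak colored Tverberg theorem.) -/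

import Mathlib

/-! The proof is by the configuration space / test map scheme, with the required Borsuk–Ulam theorem
proved on the chain level.

**Configuration space.** Put `r = p ^ e ℓ` and `A = (ℤ/p) ^ e ℓ`. A point of the join of `N ℓ + 1`
copies of `A` is a convex combination of vertices of the simplex `Δ_{N ℓ}`, each of them assigned to
one element of `A`; equivalently, it is a family of points `x_g` (`g ∈ A`) of the cone over the
simplex with pairwise disjoint supports and total weight `1`. The configuration space is the product
of these joins over `ℓ`, times auxiliary joins of copies of `ℤ/p` from which nonzero vectors `z s`
of `𝕂 ^ d` are read off (`frameVector_ne_zero`). Here `𝕂 = ℝ` for `p = 2` and `𝕂 = ℂ` for odd `p`.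
The vectors `z s` (and their conjugates) give `d - m` functionals `φ t`. If certain products of the
`z s` vanish, the `φ t` are independent, so that their common kernel is an `m`-dimensional subspace
`D` (`FrameSystem`). Pairing each vector with its conjugate is what needs `d - m` to be even when
`p` is odd. For `m = 0` the coordinate functionals suffice.

**Test functions.** The nontrivial Fourier coefficients over `A` of the weights of `x_g`, of the
numbers `colorExcess` measuring how far `x_g` is from using each color once, and of `φ t` applied to
the images `f ℓ (x_g)` are equivariant functions, and so are the products required to vanish and the
`φ t` of differences of the barycenters of the images in the different blocks. At a common zero all
`x_g` have the same weight and the same color excesses. As a color class has fewer than `2 r`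
vertices, some `x_g` uses at most one of them, so this color excess is zero for that `x_g` and hence
for all: the supports are rainbow. Moreover, all images lie in one translate of `D`, the required
affine subspace. For odd `p` it is enough to use one of each pair `χ`, `-χ` of characters, as
complex conjugation yields the other. The number `(r - 1)(d + 2 + (d - m))` of real equations in
block `ℓ` is exactly `N ℓ`.

**Existence of a common zero.** The characters of the test functions are triangular: in a suitable
order each has a leading index, and the leading indices in each block are at most as many as its
dimension allows. Hence the product of the Euler classes, a product of linear forms over `ℤ/p`, has
a monomial with nonzero coefficient that can be evaluated on a chain of the configuration space.
This `fundamentalChain` is a product of initial pieces of the periodic resolution of `ℤ/p`; its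
boundary is a combination of whole orbit sums, which are invisible modulo `p`. The Euler classes are
represented by explicit cocycles on labels: the difference of signs for `p = 2`, and the carry in
the addition of angles for odd `p`. If there were no common zero, labelling each point by the signs
or arguments of the test functions would give an equivariant labelling for which the product cocycle
vanishes on all small simplices. But after iterated barycentric subdivision its value on the
fundamental chain is the same for all equivariant labellings, and it is nonzero for the labelling by
characters: a contradiction. -/

open scoped BigOperators

noncomputable section

/-- The standard `N`-dimensional simplex, realized in Euclidean space `ℝ^{N+1}`. -/
def stdSimp (N : ℕ) : Set (EuclideanSpace ℝ (Fin (N + 1))) :=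
  {x | (∀ i, 0 ≤ x i) ∧ ∑ i, x i = 1}

/-- The face of the standard simplex spanned by the vertex set `S`. -/
def simpFace (N : ℕ) (S : Finset (Fin (N + 1))) : Set (EuclideanSpace ℝ (Fin (N + 1))) :=
  {x ∈ stdSimp N | ∀ i, x i ≠ 0 → i ∈ S}

/-! ### Ordered chains -/

/-- The augmented complex of ordered simplicial chains on the vertex set `V`, all degrees at once:
a list of length `n + 1` is an ordered `n`-simplex, and the empty list spans degree `-1`. -/
abbrev OrderedChain (R V : Type*) [Ring R] := List V →₀ R

namespace OrderedChain

open Finsupp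

variable {R V W U M : Type*} [Ring R] [AddCommGroup M] [Module R M]

/-- The cone over a chain with apex `x`. -/
def cone (x : V) : OrderedChain R V →ₗ[R] OrderedChain R V :=
  lmapDomain R R (List.cons x)

/-- The chain map induced by a map of vertices. -/
def map (f : V → W) : OrderedChain R V →ₗ[R] OrderedChain R W :=
  lmapDomain R R (List.map f)

/-- The boundary of a single simplex, by recursion from `∂ (x * l) = l - x * ∂ l`. -/
def simplexBoundary (R : Type*) [Ring R] : List V → OrderedChain R V
  | [] => 0
  | x :: l => single l 1 - cone x (simplexBoundary R l)

/-- The boundary operator of the augmented ordered chain complex. -/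
def boundary : OrderedChain R V →ₗ[R] OrderedChain R V :=
  linearCombination R (simplexBoundary R)

@[simp] lemma cone_single (x : V) (l : List V) (r : R) :
    cone x (single l r) = single (x :: l) r := by
  simp [cone]

@[simp] lemma map_single (f : V → W) (l : List V) (r : R) :
    map f (single l r) = single (l.map f) r := by
  simp [map]

@[simp] lemma boundary_single (l : List V) (r : R) :
    boundary (single l r) = r • simplexBoundary R l := by
  simp [boundary]

@[simp] lemma simplexBoundary_nil : simplexBoundary R ([] : List V) = 0 := rfl

lemma simplexBoundary_cons (x : V) (l : List V) :
    simplexBoundary R (x :: l) = single l 1 - cone x (simplexBoundary R l) := rfl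

lemma linearMap_ext {f g : OrderedChain R V →ₗ[R] M}
    (h : ∀ l, f (single l 1) = g (single l 1)) : f = g :=
  lhom_ext' fun l => LinearMap.ext_ring (h l)

lemma boundary_cone (x : V) (c : OrderedChain R V) :
    boundary (cone x c) = c - cone x (boundary c) := by
  have : boundary ∘ₗ cone x = LinearMap.id - cone (R := R) x ∘ₗ boundary :=
    linearMap_ext fun l => by simp [simplexBoundary_cons]
  exact LinearMap.congr_fun this c

lemma boundary_simplexBoundary (l : List V) : boundary (simplexBoundary R l) = 0 := by
  induction l with
  | nil => simp
  | cons x l ih => simp [simplexBoundary_cons, boundary_cone, ih]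

lemma map_cone (f : V → W) (x : V) (c : OrderedChain R V) :
    map f (cone x c) = cone (f x) (map f c) := by
  have : map f ∘ₗ cone x = cone (R := R) (f x) ∘ₗ map f := linearMap_ext fun l => by simp
  exact LinearMap.congr_fun this c

lemma map_simplexBoundary (f : V → W) (l : List V) :
    map f (simplexBoundary R l) = simplexBoundary R (l.map f) := by
  induction l with
  | nil => simp
  | cons x l ih => simp [simplexBoundary_cons, map_cone, ih]

lemma boundary_comp_map (f : V → W) :
    boundary ∘ₗ map f = map (R := R) f ∘ₗ boundary :=
  linearMap_ext fun l => by simp [map_simplexBoundary]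

lemma map_comp_map (g : W → U) (f : V → W) : map g ∘ₗ map f = map (R := R) (g ∘ f) :=
  linearMap_ext fun l => by simp

/-- The chains all of whose simplices satisfy `P`. -/
abbrev supportedOn (R : Type*) [Ring R] (P : List V → Prop) : Submodule R (OrderedChain R V) :=
  supported R R {l | P l}

lemma single_mem_supportedOn {P : List V → Prop} {l : List V} (h : P l) (r : R) :
    single l r ∈ supportedOn R P :=
  single_mem_supported R r h

lemma supportedOn_mono {P Q : List V → Prop} (h : ∀ l, P l → Q l) :
    supportedOn R P ≤ supportedOn R Q :=
  supported_mono h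

lemma apply_mem_of_mem_supportedOn {P : List V → Prop} {f : OrderedChain R V →ₗ[R] M}
    {N : Submodule R M} (h : ∀ l, P l → f (single l 1) ∈ N) {c : OrderedChain R V}
    (hc : c ∈ supportedOn R P) : f c ∈ N := by
  have hle : supportedOn R P ≤ N.comap f := by
    rw [supportedOn, supported_eq_span_single, Submodule.span_le]
    rintro _ ⟨l, hl, rfl⟩
    exact h l hl
  exact hle hc

lemma eqOn_supportedOn {P : List V → Prop} {f g : OrderedChain R V →ₗ[R] M}
    (h : ∀ l, P l → f (single l 1) = g (single l 1)) : Set.EqOn f g (supportedOn R P) := by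
  intro c hc
  have : (f - g) c ∈ (⊥ : Submodule R M) :=
    apply_mem_of_mem_supportedOn (fun l hl => by simp [h l hl]) hc
  simpa [sub_eq_zero] using this

lemma cone_mem_supportedOn {P Q : List V → Prop} {x : V} (h : ∀ l, P l → Q (x :: l))
    {c : OrderedChain R V} (hc : c ∈ supportedOn R P) : cone x c ∈ supportedOn R Q :=
  apply_mem_of_mem_supportedOn
    (fun l hl => by rw [cone_single]; exact single_mem_supportedOn (h l hl) _) hc

/-! ### Induction and recursion on faces -/

/-- `l'` is obtained from `l` by deleting one vertex. -/
def IsFacet (l' l : List V) : Prop :=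
  l'.Sublist l ∧ l'.length + 1 = l.length

lemma simplexBoundary_mem_supportedOn_isFacet (l : List V) :
    simplexBoundary R l ∈ supportedOn R (IsFacet · l) := by
  induction l with
  | nil => simp
  | cons x l ih =>
    refine Submodule.sub_mem _ (single_mem_supportedOn ⟨by simp, by simp⟩ 1)
      (cone_mem_supportedOn ?_ ih)
    rintro l' ⟨hsub, hlen⟩
    exact ⟨hsub.cons_cons x, by simp [hlen]⟩

lemma facet_induction {P : List V → Prop} (nil : P [])
    (step : ∀ l ≠ [], (∀ l', IsFacet l' l → P l') → P l) (l : List V) : P l := by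
  induction hn : l.length generalizing l with
  | zero => rwa [List.length_eq_zero_iff.1 hn]
  | succ n ih =>
    refine step l (by rintro rfl; simp at hn) fun l' hl' => ih l' ?_
    have := hl'.2
    omega

lemma eqOn_supportedOn_of_simplexBoundary {P : List V → Prop}
    (hP : ∀ l l', P l → l'.Sublist l → P l') {f g : OrderedChain R V →ₗ[R] M}
    (nil : f (single [] 1) = g (single [] 1))
    (step : ∀ l ≠ [], P l → f (simplexBoundary R l) = g (simplexBoundary R l) →
      f (single l 1) = g (single l 1)) :
    Set.EqOn f g (supportedOn R P) := by
  refine eqOn_supportedOn fun l => ?_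
  induction l using facet_induction with
  | nil => exact fun _ => nil
  | step l hl ih =>
    exact fun hPl => step l hl hPl <|
      eqOn_supportedOn (fun l' hl' => ih l' hl' (hP l l' hPl hl'.1))
        (simplexBoundary_mem_supportedOn_isFacet l)

lemma linearMap_ext_of_simplexBoundary {f g : OrderedChain R V →ₗ[R] M}
    (nil : f (single [] 1) = g (single [] 1))
    (step : ∀ l ≠ [], f (simplexBoundary R l) = g (simplexBoundary R l) →
      f (single l 1) = g (single l 1)) : f = g := by
  refine LinearMap.ext fun c => ?_
  exact eqOn_supportedOn_of_simplexBoundary (P := fun _ => True) (fun _ _ _ _ => trivial) nil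
    (fun l hl _ => step l hl) (fun _ _ => trivial : c ∈ supportedOn R fun _ => True)

/-- `facetRec` on simplices with at most `k` vertices. -/
def facetRecAux (z : M) (F : List V → M → M) : ℕ → List V → M
  | 0, _ => z
  | k + 1, l => F l (linearCombination R (facetRecAux z F k) (simplexBoundary R l))

/-- The linear map `K` with `K [] = z` and `K l = F l (K (∂ l))` for every simplex `l ≠ []`. -/
def facetRec (z : M) (F : List V → M → M) : OrderedChain R V →ₗ[R] M :=
  linearCombination R fun l => facetRecAux (R := R) z F l.length l

@[simp] lemma facetRec_nil (z : M) (F : List V → M → M) :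
    facetRec z F (single [] (1 : R)) = z := by
  simp [facetRec, facetRecAux]

lemma facetRec_single (z : M) (F : List V → M → M) {l : List V} (hl : l ≠ []) :
    facetRec z F (single l (1 : R)) = F l (facetRec z F (simplexBoundary R l)) := by
  obtain ⟨x, l, rfl⟩ := List.exists_cons_of_ne_nil hl
  simp only [facetRec, linearCombination_single, one_smul, List.length_cons, facetRecAux]
  congr 1
  refine eqOn_supportedOn ?_ (simplexBoundary_mem_supportedOn_isFacet (x :: l))
  rintro l' ⟨-, hlen⟩
  have : l'.length = l.length := by simpa using hlen
  simp [this]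

/-! ### Invariance of equivariant cochains under equivariant homotopy -/

/-- The homotopy between `Φ` and `Ψ` which cones off `Φ l - Ψ l - H (∂ l)` with apex `a l`. -/
def coneHomotopy (a : List V → W) (Φ Ψ : OrderedChain R V →ₗ[R] OrderedChain R W) :
    OrderedChain R V →ₗ[R] OrderedChain R W :=
  facetRec 0 fun l c => cone (a l) (Φ (single l 1) - Ψ (single l 1) - c)

lemma coneHomotopy_single (a : List V → W) (Φ Ψ : OrderedChain R V →ₗ[R] OrderedChain R W)
    {l : List V} (hl : l ≠ []) :
    coneHomotopy a Φ Ψ (single l 1) =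
      cone (a l) (Φ (single l 1) - Ψ (single l 1) - coneHomotopy a Φ Ψ (simplexBoundary R l)) :=
  facetRec_single _ _ hl

lemma boundary_coneHomotopy (a : List V → W) {Φ Ψ : OrderedChain R V →ₗ[R] OrderedChain R W}
    (hΦ : boundary ∘ₗ Φ = Φ ∘ₗ boundary) (hΨ : boundary ∘ₗ Ψ = Ψ ∘ₗ boundary)
    (h0 : Φ (single [] 1) = Ψ (single [] 1)) :
    boundary ∘ₗ coneHomotopy a Φ Ψ + coneHomotopy a Φ Ψ ∘ₗ boundary = Φ - Ψ := by
  refine linearMap_ext_of_simplexBoundary (by simp [coneHomotopy, h0]) fun l hl ih => ?_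
  have hΦl : boundary (Φ (single l 1)) = Φ (simplexBoundary R l) := by
    simpa using LinearMap.congr_fun hΦ (single l 1)
  have hΨl : boundary (Ψ (single l 1)) = Ψ (simplexBoundary R l) := by
    simpa using LinearMap.congr_fun hΨ (single l 1)
  simp only [LinearMap.add_apply, LinearMap.comp_apply, LinearMap.sub_apply,
    boundary_simplexBoundary, map_zero, add_zero] at ih
  simp only [LinearMap.add_apply, LinearMap.comp_apply, LinearMap.sub_apply, boundary_single,
    one_smul, coneHomotopy_single a Φ Ψ hl, boundary_cone, map_sub, hΦl, hΨl, ih]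
  abel

lemma coneHomotopy_map {a : List V → W} {Φ Ψ : OrderedChain R V →ₗ[R] OrderedChain R W}
    {τ : V → V} {θ : W → W} {P : List V → Prop} (hP : ∀ l l', P l → l'.Sublist l → P l')
    (ha : ∀ l ≠ [], a (l.map τ) = θ (a l))
    (hΦ : ∀ l, P l → Φ (single (l.map τ) 1) = map θ (Φ (single l 1)))
    (hΨ : ∀ l, P l → Ψ (single (l.map τ) 1) = map θ (Ψ (single l 1))) :
    Set.EqOn (coneHomotopy a Φ Ψ ∘ₗ map τ) (map θ ∘ₗ coneHomotopy a Φ Ψ) (supportedOn R P) := by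
  refine eqOn_supportedOn_of_simplexBoundary hP (by simp [coneHomotopy]) fun l hl hPl ih => ?_
  simp only [LinearMap.comp_apply, map_simplexBoundary] at ih
  simp only [LinearMap.comp_apply, map_single, coneHomotopy_single a Φ Ψ hl,
    coneHomotopy_single a Φ Ψ (l := l.map τ) (by simpa using hl), map_cone, map_sub, ha l hl,
    hΦ l hPl, hΨ l hPl, ih]

/-- A chain whose unaugmented boundary vanishes in the coinvariants, tested by `R`-valued
functionals, of the maps `τ g` on the chains supported on `P`. -/
def IsCycleModOrbits {G : Type*} (τ : G → V → V) (P : List V → Prop) (c : OrderedChain R V) :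
    Prop :=
  ∀ Λ : OrderedChain R V →ₗ[R] R, Λ (single [] 1) = 0 →
    (∀ g, ∀ b ∈ supportedOn R P, Λ (map (τ g) b) = Λ b) → Λ (boundary c) = 0

/-- An invariant cocycle takes the same value on the images of a cycle modulo orbits under any two
equivariant chain maps, since the coned-off homotopy between them can be chosen equivariant. -/
lemma IsCycleModOrbits.cocycle_apply_eq [Nonempty V] {G : Type*} {τ : G → V → V} {θ : G → W → W}
    {P : List V → Prop} (hP : ∀ l l', P l → l'.Sublist l → P l') {c : OrderedChain R V}
    (hc : IsCycleModOrbits τ P c) {u : OrderedChain R W →ₗ[R] R} (hu : u ∘ₗ boundary = 0)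
    (huθ : ∀ g, u ∘ₗ map (θ g) = u) {ψ : V → W} (hψ : ∀ g v, ψ (τ g v) = θ g (ψ v))
    {Φ : OrderedChain R V →ₗ[R] OrderedChain R W} (hΦ : boundary ∘ₗ Φ = Φ ∘ₗ boundary)
    (hΦ0 : Φ (single [] 1) = single [] 1)
    (hΦτ : ∀ g l, P l → Φ (single (l.map (τ g)) 1) = map (θ g) (Φ (single l 1))) :
    u (Φ c) = u (map ψ c) := by
  let apex : List V → W := fun l => ψ (l.headD (Classical.arbitrary V))
  let H := coneHomotopy apex Φ (map ψ)
  have hapex : ∀ g, ∀ l ≠ [], apex (l.map (τ g)) = θ g (apex l) := by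
    intro g l hl
    obtain ⟨x, l, rfl⟩ := List.exists_cons_of_ne_nil hl
    simp [apex, hψ]
  have hψτ : ∀ g (l : List V), map ψ (single (l.map (τ g)) (1 : R)) =
      map (θ g) (map ψ (single l 1)) := fun g l => by
    simp [Function.comp_def, hψ]
  have hHc : u (H (boundary c)) = 0 := hc (u ∘ₗ H) (by simp [H, coneHomotopy]) fun g b hb => by
    have hHg : H (map (τ g) b) = map (θ g) (H b) :=
      coneHomotopy_map hP (hapex g) (hΦτ g) (fun l _ => hψτ g l) hb
    rw [LinearMap.comp_apply, hHg]
    exact LinearMap.congr_fun (huθ g) (H b)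
  have hH : boundary (H c) + H (boundary c) = Φ c - map ψ c :=
    LinearMap.congr_fun (boundary_coneHomotopy apex hΦ (boundary_comp_map ψ) (by simpa)) c
  have hu0 : u (boundary (H c)) = 0 := LinearMap.congr_fun hu (H c)
  rw [← sub_eq_zero, ← map_sub, ← hH, map_add, hu0, hHc, add_zero]

end OrderedChain

/-! ### Barycentric subdivision -/

namespace OrderedChain

open Finsupp

variable {R E E' : Type*} [Ring R] [NormedAddCommGroup E] [NormedSpace ℝ E]
  [NormedAddCommGroup E'] [NormedSpace ℝ E']

/-- The barycenter of an ordered simplex; a repeated vertex counts with its multiplicity. -/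
def barycenter (l : List E) : E := (l.length : ℝ)⁻¹ • l.sum

/-- Barycentric subdivision, by recursion from `sd l = barycenter l * sd (∂ l)`. -/
def subdivide (R E : Type*) [Ring R] [NormedAddCommGroup E] [NormedSpace ℝ E] :
    Module.End R (OrderedChain R E) :=
  facetRec (single [] 1) fun l c => cone (barycenter l) c

lemma subdivide_nil : subdivide R E (single [] 1) = single [] 1 := facetRec_nil _ _

lemma subdivide_single {l : List E} (hl : l ≠ []) :
    subdivide R E (single l 1) = cone (barycenter l) (subdivide R E (simplexBoundary R l)) :=
  facetRec_single _ _ hl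

lemma commute_boundary_subdivide : Commute boundary (subdivide R E) := by
  refine linearMap_ext_of_simplexBoundary (by simp [subdivide_nil]) fun l hl ih => ?_
  simp only [Module.End.mul_apply, boundary_simplexBoundary, map_zero] at ih
  simp [subdivide_single hl, boundary_cone, ih]

lemma map_barycenter (ρ : E →ₗ[ℝ] E') (l : List E) : barycenter (l.map ρ) = ρ (barycenter l) := by
  simp [barycenter, map_list_sum]

lemma subdivide_comp_map (ρ : E →ₗ[ℝ] E') :
    subdivide R E' ∘ₗ map ρ = map ρ ∘ₗ subdivide R E := by
  refine linearMap_ext_of_simplexBoundary (by simp [subdivide_nil]) fun l hl ih => ?_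
  simp only [LinearMap.comp_apply, map_simplexBoundary] at ih
  simp [subdivide_single hl, subdivide_single (l := l.map ρ) (by simpa using hl), map_cone,
    map_barycenter, ih]

lemma subdivide_pow_nil (k : ℕ) : (subdivide R E ^ k) (single [] 1) = single [] 1 := by
  rw [Module.End.pow_apply]
  exact Function.iterate_fixed subdivide_nil k

lemma subdivide_pow_comp_map (ρ : E →ₗ[ℝ] E') (k : ℕ) :
    (subdivide R E' ^ k) ∘ₗ map ρ = map ρ ∘ₗ (subdivide R E ^ k) := by
  induction k with
  | zero => rfl
  | succ k ih =>
    rw [pow_succ', Module.End.mul_eq_comp, LinearMap.comp_assoc, ih, ← LinearMap.comp_assoc,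
      subdivide_comp_map, LinearMap.comp_assoc, ← Module.End.mul_eq_comp, ← pow_succ']

lemma barycenter_sub {l : List E} (hl : l ≠ []) (v : E) :
    barycenter l - v = (l.length : ℝ)⁻¹ • (l.map (· - v)).sum := by
  have hsum : ∀ l : List E, (l.map (· - v)).sum = l.sum - (l.length : ℝ) • v := fun l => by
    induction l with
    | nil => simp
    | cons x l ih =>
      simp only [List.map_cons, List.sum_cons, ih, List.length_cons, Nat.cast_succ, add_smul]
      module
  have hlen : (l.length : ℝ) ≠ 0 := by simpa using hl
  rw [hsum, smul_sub, inv_smul_smul₀ hlen, barycenter]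

/-- The vertex `v` itself contributes nothing to the distance from the barycenter to `v`; this is
what makes the mesh shrink. -/
lemma dist_barycenter_le {l : List E} {D : ℝ} (hD : ∀ x ∈ l, ∀ y ∈ l, dist x y ≤ D) {v : E}
    (hv : v ∈ l) : dist v (barycenter l) ≤ (1 - (l.length : ℝ)⁻¹) * D := by
  have hsum : (l.map fun x => ‖x - v‖).sum ≤ (l.length - 1) * D := by
    obtain ⟨s, t, rfl⟩ := List.append_of_mem hv
    have h := List.sum_le_card_nsmul ((s ++ t).map fun x => ‖x - v‖) D (by
      simp only [List.mem_map]
      rintro _ ⟨x, hx, rfl⟩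
      rw [← dist_eq_norm]
      refine hD x (List.mem_append.2 ?_) v hv
      exact (List.mem_append.1 hx).imp_right (List.mem_cons_of_mem v))
    simpa [← add_assoc] using h
  have hlen : 0 < (l.length : ℝ) := by exact_mod_cast List.length_pos_of_mem hv
  have hnorm : ‖(l.map (· - v)).sum‖ ≤ (l.map fun x => ‖x - v‖).sum := by
    simpa [Function.comp_def] using norm_multiset_sum_le (l.map (· - v) : Multiset E)
  calc dist v (barycenter l) = (l.length : ℝ)⁻¹ * ‖(l.map (· - v)).sum‖ := by
        rw [dist_comm, dist_eq_norm, barycenter_sub (List.ne_nil_of_mem hv), norm_smul,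
          Real.norm_of_nonneg (by positivity)]
    _ ≤ (l.length : ℝ)⁻¹ * ((l.length - 1) * D) := by gcongr; exact hnorm.trans hsum
    _ = (1 - (l.length : ℝ)⁻¹) * D := by field_simp

lemma barycenter_mem_convexHull {l : List E} (hl : l ≠ []) :
    barycenter l ∈ convexHull ℝ {x | x ∈ l} := by
  have hsum : ∑ i : Fin l.length, (l.length : ℝ)⁻¹ • l.get i ∈ convexHull ℝ {x | x ∈ l} :=
    (convex_convexHull ℝ _).sum_mem (fun _ _ => by positivity) (by simp [hl])
      fun i _ => subset_convexHull ℝ _ (l.get_mem i)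
  rwa [← Finset.smul_sum, ← List.sum_ofFn, List.ofFn_get] at hsum

/-- The shape of the simplices in a subdivision of a simplex spanned by points of `S`. -/
structure IsSmallSimplex (S : Set E) (n : ℕ) (D : ℝ) (l : List E) : Prop where
  length_eq : l.length = n
  mem_convexHull : ∀ x ∈ l, x ∈ convexHull ℝ S
  dist_le : ∀ x ∈ l, ∀ y ∈ l, dist x y ≤ D

lemma IsSmallSimplex.mono {S T : Set E} {n : ℕ} {D : ℝ} {l : List E} (h : IsSmallSimplex S n D l)
    (hST : S ⊆ convexHull ℝ T) : IsSmallSimplex T n D l :=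
  ⟨h.length_eq, fun x hx => convexHull_min hST (convex_convexHull ℝ T) (h.mem_convexHull x hx),
    h.dist_le⟩

lemma one_sub_inv_natCast_nonneg (N : ℕ) : 0 ≤ 1 - (N : ℝ)⁻¹ :=
  sub_nonneg.2 N.cast_inv_le_one

lemma IsSmallSimplex.barycenter_cons {N : ℕ} {D : ℝ} {l l' : List E} {n : ℕ} (hl : l ≠ [])
    (hN : l.length ≤ N) (hD : ∀ x ∈ l, ∀ y ∈ l, dist x y ≤ D)
    (h : IsSmallSimplex {x | x ∈ l} n ((1 - (N : ℝ)⁻¹) * D) l') :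
    IsSmallSimplex {x | x ∈ l} (n + 1) ((1 - (N : ℝ)⁻¹) * D) (barycenter l :: l') := by
  obtain ⟨v, hv⟩ := List.exists_mem_of_ne_nil l hl
  have hD0 : 0 ≤ D := dist_nonneg.trans (hD v hv v hv)
  have hlen : 0 < (l.length : ℝ) := by exact_mod_cast List.length_pos_of_mem hv
  have hball : convexHull ℝ {x | x ∈ l} ⊆
      Metric.closedBall (barycenter l) ((1 - (N : ℝ)⁻¹) * D) := by
    refine convexHull_min (fun v hv => (dist_barycenter_le hD hv).trans ?_) (convex_closedBall _ _)
    gcongr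
  have hdist : ∀ y ∈ l', dist y (barycenter l) ≤ (1 - (N : ℝ)⁻¹) * D :=
    fun y hy => hball (h.mem_convexHull y hy)
  refine ⟨by simp [h.length_eq], ?_, ?_⟩
  · exact List.forall_mem_cons.2 ⟨barycenter_mem_convexHull hl, h.mem_convexHull⟩
  · refine List.forall_mem_cons.2 ⟨List.forall_mem_cons.2 ⟨?_, fun y hy => ?_⟩, fun x hx =>
      List.forall_mem_cons.2 ⟨hdist x hx, h.dist_le x hx⟩⟩
    · simpa using mul_nonneg (one_sub_inv_natCast_nonneg N) hD0
    · rw [dist_comm]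
      exact hdist y hy

lemma subdivide_single_mem_supportedOn {N : ℕ} {D : ℝ} (l : List E) (hN : l.length ≤ N)
    (hD : ∀ x ∈ l, ∀ y ∈ l, dist x y ≤ D) :
    subdivide R E (single l 1) ∈
      supportedOn R (IsSmallSimplex {x | x ∈ l} l.length ((1 - (N : ℝ)⁻¹) * D)) := by
  induction l using facet_induction with
  | nil =>
    rw [subdivide_nil]
    exact single_mem_supportedOn ⟨rfl, by simp, by simp⟩ _
  | step l hl ih =>
    rw [subdivide_single hl]
    refine cone_mem_supportedOn
      (P := IsSmallSimplex {x | x ∈ l} (l.length - 1) ((1 - (N : ℝ)⁻¹) * D)) (fun l' hl' => ?_)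
      (apply_mem_of_mem_supportedOn (fun l' hl' => ?_)
        (simplexBoundary_mem_supportedOn_isFacet l))
    · have hlen := List.length_pos_of_ne_nil hl
      simpa [Nat.sub_add_cancel hlen] using hl'.barycenter_cons hl hN hD
    · obtain ⟨hsub, hlen⟩ := hl'
      rw [← hlen, Nat.add_sub_cancel]
      exact supportedOn_mono
        (fun _ h => h.mono fun x hx => subset_convexHull ℝ _ (hsub.subset hx))
        (ih l' ⟨hsub, hlen⟩ (by omega)
          fun x hx y hy => hD x (hsub.subset hx) y (hsub.subset hy))

lemma subdivide_pow_single_mem_supportedOn {N : ℕ} {D : ℝ} {l : List E} (hN : l.length ≤ N)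
    (hD : ∀ x ∈ l, ∀ y ∈ l, dist x y ≤ D) (k : ℕ) :
    (subdivide R E ^ k) (single l 1) ∈
      supportedOn R (IsSmallSimplex {x | x ∈ l} l.length ((1 - (N : ℝ)⁻¹) ^ k * D)) := by
  induction k with
  | zero =>
    rw [pow_zero, pow_zero, one_mul]
    exact single_mem_supportedOn ⟨rfl, fun x hx => subset_convexHull ℝ _ hx, hD⟩ _
  | succ k ih =>
    rw [pow_succ', pow_succ', mul_assoc, Module.End.mul_apply]
    refine apply_mem_of_mem_supportedOn (fun l' hl' => ?_) ih
    rw [← hl'.length_eq] at hN ⊢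
    exact supportedOn_mono (fun _ h => h.mono hl'.mem_convexHull)
      (subdivide_single_mem_supportedOn l' hN hl'.dist_le)

/-! ### Equivariant labellings and small simplices -/

variable {V Γ G : Type*} {P : List V → Prop} {vtx : V → E} {X : Set E}

lemma subdivide_pow_map_single_mem_supportedOn
    (hX : ∀ l, P l → convexHull ℝ {x | x ∈ l.map vtx} ⊆ X) {D : ℝ}
    (hD : ∀ x ∈ X, ∀ y ∈ X, dist x y ≤ D) {N k : ℕ} {l : List V} (hl : P l) (hN : l.length ≤ N) :
    (subdivide R E ^ k) (single (l.map vtx) 1) ∈ supportedOn R fun l' =>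
      (∀ x ∈ l', x ∈ X) ∧ ∀ x ∈ l', ∀ y ∈ l', dist x y ≤ (1 - (N : ℝ)⁻¹) ^ k * D := by
  have hmem : ∀ x ∈ l.map vtx, x ∈ X := fun x hx => hX l hl (subset_convexHull ℝ _ hx)
  exact supportedOn_mono
    (fun l' hl' => ⟨fun x hx => hX l hl (hl'.mem_convexHull x hx), hl'.dist_le⟩)
    (subdivide_pow_single_mem_supportedOn (by simpa using hN)
      (fun x hx y hy => hD x (hmem x hx) y (hmem y hy)) k)

lemma exists_subdivide_pow_map_mem_supportedOn (hXb : Bornology.IsBounded X)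
    (hX : ∀ l, P l → convexHull ℝ {x | x ∈ l.map vtx} ⊆ X) {c : OrderedChain R V}
    (hc : c ∈ supportedOn R P) {δ : ℝ} (hδ : 0 < δ) :
    ∃ k : ℕ, (subdivide R E ^ k) (map vtx c) ∈ supportedOn R fun l =>
      (∀ x ∈ l, x ∈ X) ∧ ∀ x ∈ l, ∀ y ∈ l, dist x y < δ := by
  obtain ⟨D, hD⟩ := Metric.isBounded_iff.1 hXb
  let N := c.support.sup List.length + 1
  have hN : c ∈ supportedOn R fun l => P l ∧ l.length ≤ N := fun l hl =>
    ⟨hc hl, (Finset.le_sup (f := List.length) hl).trans (Nat.le_succ _)⟩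
  have hlt : 1 - (N : ℝ)⁻¹ < 1 := sub_lt_self 1 (by positivity)
  obtain ⟨k, hk⟩ : ∃ k : ℕ, (1 - (N : ℝ)⁻¹) ^ k * D < δ := by
    have hlim :=
      (tendsto_pow_atTop_nhds_zero_of_lt_one (one_sub_inv_natCast_nonneg N) hlt).mul_const D
    rw [zero_mul] at hlim
    exact (hlim.eventually (gt_mem_nhds hδ)).exists
  refine ⟨k, apply_mem_of_mem_supportedOn (f := (subdivide R E ^ k) ∘ₗ map vtx)
    (fun l hl => ?_) hN⟩
  rw [LinearMap.comp_apply, map_single]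
  exact supportedOn_mono (fun l' hl' => ⟨hl'.1, fun x hx y hy => (hl'.2 x hx y hy).trans_lt hk⟩)
    (subdivide_pow_map_single_mem_supportedOn hX (fun x hx y hy => hD hx hy) hl.1 hl.2)

lemma map_subdivide_pow_map_equivariant (hXb : Bornology.IsBounded X)
    (hX : ∀ l, P l → convexHull ℝ {x | x ∈ l.map vtx} ⊆ X) {τ : V → V} {ρ : E →ₗ[ℝ] E}
    (hvtx : ∀ v, vtx (τ v) = ρ (vtx v)) {θ : Γ → Γ} {lab : E → Γ}
    (hlab : ∀ x ∈ X, lab (ρ x) = θ (lab x)) (k : ℕ) {l : List V} (hl : P l) :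
    map lab ((subdivide R E ^ k) (single ((l.map τ).map vtx) 1)) =
      map θ (map lab ((subdivide R E ^ k) (single (l.map vtx) 1))) := by
  obtain ⟨D, hD⟩ := Metric.isBounded_iff.1 hXb
  have hmem : (subdivide R E ^ k) (single (l.map vtx) 1) ∈ supportedOn R fun l => ∀ x ∈ l, x ∈ X :=
    supportedOn_mono (fun l' h => h.1)
      (subdivide_pow_map_single_mem_supportedOn hX (fun x hx y hy => hD hx hy) hl le_rfl)
  have hρ : single ((l.map τ).map vtx) (1 : R) = map ρ (single (l.map vtx) 1) := by
    simp [Function.comp_def, hvtx]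
  rw [hρ, ← LinearMap.comp_apply (subdivide R E ^ k), subdivide_pow_comp_map]
  refine eqOn_supportedOn (f := map lab ∘ₗ map ρ) (g := map θ ∘ₗ map lab) (fun l' hl' => ?_) hmem
  simp only [LinearMap.comp_apply, map_single, List.map_map]
  congr 1
  exact List.map_congr_left fun x hx => hlab x (hl' x hx)

/-- After iterated subdivision, labelling the vertices induces a chain map equivariantly homotopic
to the one induced by the model labelling `ψ`. -/
theorem exists_small_simplex_cocycle_ne_zero [Nonempty V] {τ : G → V → V} {ρ : G → E →ₗ[ℝ] E}
    {θ : G → Γ → Γ} (hP : ∀ l l', P l → l'.Sublist l → P l') {c : OrderedChain R V}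
    (hcP : c ∈ supportedOn R P) (hc : IsCycleModOrbits τ P c) {u : OrderedChain R Γ →ₗ[R] R}
    (hu : u ∘ₗ boundary = 0) (huθ : ∀ g, u ∘ₗ map (θ g) = u)
    (hvtx : ∀ g v, vtx (τ g v) = ρ g (vtx v)) (hXb : Bornology.IsBounded X)
    (hX : ∀ l, P l → convexHull ℝ {x | x ∈ l.map vtx} ⊆ X) {lab : E → Γ}
    (hlab : ∀ g, ∀ x ∈ X, lab (ρ g x) = θ g (lab x)) {ψ : V → Γ}
    (hψ : ∀ g v, ψ (τ g v) = θ g (ψ v)) (hne : u (map ψ c) ≠ 0) {δ : ℝ} (hδ : 0 < δ) :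
    ∃ l : List E, (∀ x ∈ l, x ∈ X) ∧ (∀ x ∈ l, ∀ y ∈ l, dist x y < δ) ∧
      u (single (l.map lab) 1) ≠ 0 := by
  obtain ⟨k, hk⟩ := exists_subdivide_pow_map_mem_supportedOn hXb hX hcP hδ
  let Φ : OrderedChain R V →ₗ[R] OrderedChain R Γ := map lab ∘ₗ (subdivide R E ^ k) ∘ₗ map vtx
  have hΦ : boundary ∘ₗ Φ = Φ ∘ₗ boundary := by
    have hsd : boundary ∘ₗ (subdivide R E ^ k) = (subdivide R E ^ k) ∘ₗ boundary :=
      commute_boundary_subdivide.pow_right k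
    rw [← LinearMap.comp_assoc, boundary_comp_map, LinearMap.comp_assoc,
      ← LinearMap.comp_assoc (map vtx), hsd, LinearMap.comp_assoc, boundary_comp_map]
    rfl
  have hΦc : u (Φ c) = u (map ψ c) :=
    hc.cocycle_apply_eq hP hu huθ hψ hΦ (by simp [Φ, subdivide_pow_nil])
      fun g l hl => by
        simpa [Φ] using map_subdivide_pow_map_equivariant hXb hX (hvtx g) (hlab g) k hl
  by_contra! hzero
  refine hne (hΦc ▸ ?_)
  exact apply_mem_of_mem_supportedOn (f := u ∘ₗ map lab) (N := ⊥)
    (fun l hl => by simpa using hzero l hl.1 hl.2) hk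

end OrderedChain

/-! ### The fundamental chain of a product of joins -/

section FundamentalChain

open Finsupp OrderedChain

variable {p : ℕ} {I M : Type*}

/-- The matching `(i, j) ↔ (j, i)` pairs off the off-diagonal terms; dividing by two instead would
fail in characteristic two. -/
lemma sum_sum_eq_sum_diagonal [Fintype I] [AddCommGroup M] (F : I → I → M)
    (h : ∀ i j, i ≠ j → F i j = -F j i) : ∑ i, ∑ j, F i j = ∑ i, F i i := by
  classical
  have hoff : ∑ x : I × I, (F x.1 x.2 - if x.1 = x.2 then F x.1 x.1 else 0) = 0 := by
    refine Finset.sum_involution (fun x _ => x.swap) ?_ ?_ (by simp) (by simp)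
    · rintro ⟨i, j⟩ -
      by_cases hij : i = j
      · subst hij
        simp
      · simp [hij, Ne.symm hij, h i j hij]
    · rintro ⟨i, j⟩ - hne he
      obtain rfl : j = i := by simpa using congrArg Prod.fst he
      simp at hne
  rw [Finset.sum_sub_distrib, sub_eq_zero] at hoff
  rw [← Fintype.sum_prod_type', hoff, Fintype.sum_prod_type]
  simp

/-- The vertices of the flag complex triangulating a product over `I` of joins of copies of `ℤ/p`:
coordinate `i` is the vertex with label `(v i).2` in the copy number `(v i).1` of the join `i`. -/
abbrev JoinVertex (p : ℕ) (I : Type*) := I → ℕ × ZMod p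

/-- The action of the group `(ℤ/p)^I` on vertices, by translation of the labels. -/
def translateLabels (g : I → ZMod p) (v : JoinVertex p I) : JoinVertex p I :=
  fun i => ((v i).1, (v i).2 + g i)

/-- The coefficients of the differential of the periodic resolution of `ℤ/p`, which is alternately
the norm element and `1 - t`. -/
def resolutionCoeff (j : ℕ) (s : ZMod p) : ZMod p :=
  if Even j then 1 else (if s = 0 then 1 else 0) - (if s = -1 then 1 else 0)

lemma sum_resolutionCoeff [NeZero p] (j : ℕ) : ∑ s : ZMod p, resolutionCoeff j s = 0 := by
  unfold resolutionCoeff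
  split_ifs <;> simp

lemma sum_resolutionCoeff_mul [NeZero p] (j : ℕ) (a : ZMod p) :
    ∑ s, resolutionCoeff j s * resolutionCoeff (j + 1) (a - s) = 0 := by
  by_cases h : Even j
  · have hzero : ∀ s : ZMod p, a - s = 0 ↔ s = a := fun s => by rw [sub_eq_zero, eq_comm]
    have hone : ∀ s : ZMod p, a - s = -1 ↔ s = a + 1 := fun s => by
      rw [sub_eq_iff_eq_add, neg_add_eq_sub, eq_sub_iff_add_eq, eq_comm]
    simp [resolutionCoeff, h, Nat.even_add_one, Finset.sum_sub_distrib, hzero, hone]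
  · simp [resolutionCoeff, h, Nat.even_add_one]

section Raise

variable [DecidableEq I]

/-- Raise the `i`-th level by one and shift its label by `s`. -/
def raise (v : JoinVertex p I) (i : I) (s : ZMod p) : JoinVertex p I :=
  Function.update v i ((v i).1 + 1, (v i).2 + s)

@[simp] lemma raise_self (v : JoinVertex p I) (i : I) (s : ZMod p) :
    raise v i s i = ((v i).1 + 1, (v i).2 + s) :=
  Function.update_self ..

lemma raise_of_ne (v : JoinVertex p I) {i k : I} (h : k ≠ i) (s : ZMod p) :
    raise v i s k = v k :=
  Function.update_of_ne h ..

lemma raise_raise_comm (v : JoinVertex p I) {i j : I} (h : i ≠ j) (s s' : ZMod p) :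
    raise (raise v i s) j s' = raise (raise v j s') i s := by
  rw [raise, raise_of_ne v h.symm, raise, raise, raise_of_ne v h, raise, Function.update_comm h]

lemma raise_raise_self (v : JoinVertex p I) (i : I) (s s' : ZMod p) :
    raise (raise v i s) i s' = raise (raise v i 0) i (s + s') := by
  simp [raise, add_assoc]

lemma translateLabels_raise (g : I → ZMod p) (v : JoinVertex p I) (i : I) (s : ZMod p) :
    translateLabels g (raise v i s) = raise (translateLabels g v) i s := by
  funext k
  by_cases h : k = i
  · subst h
    simp [translateLabels, add_right_comm]
  · simp [translateLabels, raise_of_ne _ h]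

lemma raise_eq_translateLabels (v : JoinVertex p I) (i : I) (s : ZMod p) :
    raise v i s = translateLabels (Pi.single i s) (raise v i 0) := by
  funext k
  by_cases h : k = i
  · subst h
    simp [translateLabels]
  · simp [translateLabels, raise_of_ne _ h, h]

end Raise

/-- `v` comes before `v'` in a flag: each coordinate is unchanged or has strictly larger level. -/
def Precedes (v v' : JoinVertex p I) : Prop :=
  ∀ i, (v i).1 < (v' i).1 ∨ v i = v' i

lemma Precedes.trans {v v' v'' : JoinVertex p I} (h : Precedes v v') (h' : Precedes v' v'') :
    Precedes v v'' := by
  intro i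
  rcases h i with h | h <;> rcases h' i with h' | h'
  · exact Or.inl (h.trans h')
  · exact Or.inl (h' ▸ h)
  · exact Or.inl (h ▸ h')
  · exact Or.inr (h.trans h')

lemma precedes_raise [DecidableEq I] (v : JoinVertex p I) (i : I) (s : ZMod p) :
    Precedes v (raise v i s) := by
  intro k
  by_cases h : k = i
  · subst h
    simp
  · simp [raise_of_ne v h]

/-- The simplices of the flag complex triangulating the product over `I` of the joins of
`n i + 1` copies of `ℤ/p`. -/
structure IsFlag (n : I → ℕ) (l : List (JoinVertex p I)) : Prop where
  pairwise : l.Pairwise Precedes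
  level_le : ∀ v ∈ l, ∀ i, (v i).1 ≤ n i

lemma IsFlag.sublist {n : I → ℕ} {l l' : List (JoinVertex p I)} (h : IsFlag n l)
    (hs : l'.Sublist l) : IsFlag n l' :=
  ⟨h.pairwise.sublist hs, fun v hv => h.level_le v (hs.subset hv)⟩

variable [Fintype I] [LinearOrder I] (n : I → ℕ)

/-- The Koszul sign of raising the `i`-th level. -/
def koszulSign (v : JoinVertex p I) (i : I) : ZMod p := (-1) ^ ∑ k with k < i, (v k).1

/-- The incidence coefficient of `raise v i s` over `v`; zero if level `i` is at its top `n i`. -/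
def raiseCoeff (v : JoinVertex p I) (i : I) (s : ZMod p) : ZMod p :=
  if (v i).1 < n i then koszulSign v i * resolutionCoeff (v i).1 s else 0

lemma koszulSign_mul_self (v : JoinVertex p I) (i : I) : koszulSign v i * koszulSign v i = 1 := by
  rw [koszulSign, ← pow_add, ← two_mul, pow_mul, neg_one_sq, one_pow]

lemma koszulSign_raise_of_lt (v : JoinVertex p I) {i j : I} (h : i < j) (s : ZMod p) :
    koszulSign (raise v i s) j = -koszulSign v j := by
  have hi : i ∈ Finset.univ.filter (· < j) := by simp [h]
  have hne : ∀ k ∈ (Finset.univ.filter (· < j)).erase i, (raise v i s k).1 = (v k).1 :=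
    fun k hk => by rw [raise_of_ne v (Finset.ne_of_mem_erase hk)]
  rw [koszulSign, koszulSign, ← Finset.add_sum_erase _ _ hi, ← Finset.add_sum_erase _ _ hi,
    Finset.sum_congr rfl hne, raise_self, add_right_comm, pow_succ, mul_neg_one]

lemma koszulSign_raise_of_le (v : JoinVertex p I) {i j : I} (h : j ≤ i) (s : ZMod p) :
    koszulSign (raise v i s) j = koszulSign v j := by
  rw [koszulSign, koszulSign]
  congr 1
  refine Finset.sum_congr rfl fun k hk => ?_
  rw [raise_of_ne v ((Finset.mem_filter.1 hk).2.trans_le h).ne]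

lemma raiseCoeff_translateLabels (g : I → ZMod p) (v : JoinVertex p I) :
    raiseCoeff n (translateLabels g v) = raiseCoeff n v := rfl

lemma raiseCoeff_mul_raiseCoeff_anticomm (v : JoinVertex p I) {i j : I} (h : i ≠ j)
    (s s' : ZMod p) :
    raiseCoeff n v i s * raiseCoeff n (raise v i s) j s' =
      -(raiseCoeff n v j s' * raiseCoeff n (raise v j s') i s) := by
  wlog hlt : i < j generalizing i j s s'
  · rw [this h.symm s' s (lt_of_le_of_ne (not_lt.1 hlt) h.symm), neg_neg]
  simp only [raiseCoeff, raise_of_ne v h, raise_of_ne v h.symm, koszulSign_raise_of_lt v hlt,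
    koszulSign_raise_of_le v hlt.le]
  split_ifs <;> ring

lemma raiseCoeff_mul_raiseCoeff_self (v : JoinVertex p I) (i : I) (s s' : ZMod p) :
    raiseCoeff n v i s * raiseCoeff n (raise v i s) i s' =
      if (v i).1 + 1 < n i then resolutionCoeff (v i).1 s * resolutionCoeff ((v i).1 + 1) s'
      else 0 := by
  simp only [raiseCoeff, koszulSign_raise_of_le v le_rfl, raise_self]
  by_cases h : (v i).1 + 1 < n i
  · rw [if_pos h, if_pos ((Nat.lt_succ_self _).trans h), if_pos h]
    linear_combination (resolutionCoeff (v i).1 s * resolutionCoeff ((v i).1 + 1) s') *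
      koszulSign_mul_self v i
  · simp [h]

/-- The boundary of `fundamentalChain n k v`, opposite to its first vertex `v`. -/
def fundamentalLink [NeZero p] : ℕ → JoinVertex p I → OrderedChain (ZMod p) (JoinVertex p I)
  | 0, _ => single [] 1
  | k + 1, v => ∑ i, ∑ s, raiseCoeff n v i s • cone (raise v i s) (fundamentalLink k (raise v i s))

/-- The weighted sum of the `k`-dimensional flags that start at `v` and raise one level by one in
each step. -/
def fundamentalChain [NeZero p] (k : ℕ) (v : JoinVertex p I) :
    OrderedChain (ZMod p) (JoinVertex p I) :=
  cone v (fundamentalLink n k v)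

lemma sum_raiseCoeff_smul_sum_raiseCoeff_smul [NeZero p] [AddCommGroup M] [Module (ZMod p) M]
    (v : JoinVertex p I) (f : I → ZMod p → I → ZMod p → M)
    (hf : ∀ i j, i ≠ j → ∀ s s', f i s j s' = f j s' i s) :
    ∑ i, ∑ s, raiseCoeff n v i s • ∑ j, ∑ s', raiseCoeff n (raise v i s) j s' • f i s j s' =
      ∑ i, ∑ s, ∑ s', (if (v i).1 + 1 < n i then
        resolutionCoeff (v i).1 s * resolutionCoeff ((v i).1 + 1) s' else 0) • f i s i s' := by
  let F : I → I → M := fun i j => ∑ s, ∑ s',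
    (raiseCoeff n v i s * raiseCoeff n (raise v i s) j s') • f i s j s'
  have hF : ∀ i j, i ≠ j → F i j = -F j i := fun i j hij => by
    simp only [F]
    rw [Finset.sum_comm]
    simp only [← Finset.sum_neg_distrib, raiseCoeff_mul_raiseCoeff_anticomm n v hij, hf i j hij,
      neg_smul]
  calc _ = ∑ i, ∑ j, F i j := by
        refine Finset.sum_congr rfl fun i _ => ?_
        simp only [F, Finset.smul_sum, smul_smul]
        exact Finset.sum_comm
    _ = _ := by simp only [sum_sum_eq_sum_diagonal F hF, F, raiseCoeff_mul_raiseCoeff_self]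

variable [NeZero p]

lemma fundamentalLink_succ (k : ℕ) (v : JoinVertex p I) :
    fundamentalLink n (k + 1) v =
      ∑ i, ∑ s, raiseCoeff n v i s • fundamentalChain n k (raise v i s) := rfl

lemma fundamentalChain_succ (k : ℕ) (v : JoinVertex p I) :
    fundamentalChain n (k + 1) v =
      ∑ i, ∑ s, raiseCoeff n v i s • cone v (fundamentalChain n k (raise v i s)) := by
  rw [fundamentalChain, fundamentalLink_succ]
  simp only [map_sum, map_smul]

lemma sum_sum_raiseCoeff (v : JoinVertex p I) : ∑ i, ∑ s, raiseCoeff n v i s = 0 := by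
  refine Finset.sum_eq_zero fun i _ => ?_
  unfold raiseCoeff
  split_ifs
  · rw [← Finset.mul_sum, sum_resolutionCoeff, mul_zero]
  · simp

/-- Two different levels raised in either order cancel by the Koszul sign; raising the same level
twice cancels because consecutive differentials of the periodic resolution compose to zero. -/
lemma sum_raiseCoeff_smul_fundamentalLink_raise (k : ℕ) (v : JoinVertex p I) :
    ∑ i, ∑ s, raiseCoeff n v i s • fundamentalLink n k (raise v i s) = 0 := by
  cases k with
  | zero => simp only [fundamentalLink, ← Finset.sum_smul, sum_sum_raiseCoeff, zero_smul]
  | succ k =>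
    simp only [fundamentalLink_succ]
    rw [sum_raiseCoeff_smul_sum_raiseCoeff_smul n v
      (fun i s j s' => fundamentalChain n k (raise (raise v i s) j s'))
      fun i j hij s s' => by rw [raise_raise_comm v hij]]
    refine Finset.sum_eq_zero fun i _ => ?_
    split_ifs with hi
    · calc ∑ s, ∑ s', (resolutionCoeff (v i).1 s * resolutionCoeff ((v i).1 + 1) s') •
              fundamentalChain n k (raise (raise v i s) i s')
          = ∑ s, ∑ a, (resolutionCoeff (v i).1 s * resolutionCoeff ((v i).1 + 1) (a - s)) •
              fundamentalChain n k (raise (raise v i 0) i a) := by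
            refine Finset.sum_congr rfl fun s _ =>
              Fintype.sum_equiv (Equiv.addLeft s) _ _ fun s' => ?_
            simp [raise_raise_self v i s s']
        _ = 0 := by
            rw [Finset.sum_comm]
            simp only [← Finset.sum_smul, sum_resolutionCoeff_mul, zero_smul,
              Finset.sum_const_zero]
    · simp

lemma boundary_fundamentalChain (k : ℕ) (v : JoinVertex p I) :
    boundary (fundamentalChain n k v) = fundamentalLink n k v := by
  suffices h : boundary (fundamentalLink n k v) = 0 by
    rw [fundamentalChain, boundary_cone, h, map_zero, sub_zero]
  induction k generalizing v with
  | zero => simp [fundamentalLink]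
  | succ k ih =>
    simp only [fundamentalLink_succ, map_sum, map_smul, fundamentalChain, boundary_cone, ih,
      map_zero, sub_zero, sum_raiseCoeff_smul_fundamentalLink_raise]

lemma fundamentalChain_translateLabels (g : I → ZMod p) (k : ℕ) (v : JoinVertex p I) :
    fundamentalChain n k (translateLabels g v) =
      map (translateLabels g) (fundamentalChain n k v) := by
  induction k generalizing v with
  | zero => simp [fundamentalChain, fundamentalLink]
  | succ k ih =>
    rw [fundamentalChain, fundamentalChain, map_cone]
    simp only [fundamentalLink_succ, map_sum, map_smul, raiseCoeff_translateLabels,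
      ← translateLabels_raise, ih]

lemma fundamentalChain_mem_supportedOn (k : ℕ) {v : JoinVertex p I} (hv : ∀ i, (v i).1 ≤ n i) :
    fundamentalChain n k v ∈
      supportedOn (ZMod p) fun l => IsFlag n l ∧ ∀ v' ∈ l, v' = v ∨ Precedes v v' := by
  suffices h : fundamentalLink n k v ∈
      supportedOn (ZMod p) fun l => IsFlag n l ∧ ∀ v' ∈ l, Precedes v v' by
    refine cone_mem_supportedOn (fun l hl => ⟨⟨List.pairwise_cons.2 ⟨hl.2, hl.1.pairwise⟩,
      List.forall_mem_cons.2 ⟨hv, hl.1.level_le⟩⟩, List.forall_mem_cons.2 ⟨Or.inl rfl,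
      fun v' hv' => Or.inr (hl.2 v' hv')⟩⟩) h
  induction k generalizing v with
  | zero => exact single_mem_supportedOn ⟨⟨by simp, by simp⟩, by simp⟩ _
  | succ k ih =>
    refine Submodule.sum_mem _ fun i _ => Submodule.sum_mem _ fun s _ => ?_
    by_cases hi : (v i).1 < n i
    · have hvi : ∀ k, (raise v i s k).1 ≤ n k := fun k => by
        by_cases h : k = i
        · subst h
          simpa using hi
        · simpa [raise_of_ne v h] using hv k
      refine Submodule.smul_mem _ _ (cone_mem_supportedOn (fun l hl => ?_) (ih hvi))
      exact ⟨⟨List.pairwise_cons.2 ⟨hl.2, hl.1.pairwise⟩, List.forall_mem_cons.2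
        ⟨hvi, hl.1.level_le⟩⟩, List.forall_mem_cons.2 ⟨precedes_raise v i s,
        fun v' hv' => (precedes_raise v i s).trans (hl.2 v' hv')⟩⟩
    · simp [raiseCoeff, hi]

/-- The simplices in the boundary come in full orbits of `ℤ/p`, with constant coefficients since the
differential of the resolution starts with the norm element. -/
lemma isCycleModOrbits_fundamentalChain (k : ℕ) :
    IsCycleModOrbits translateLabels (IsFlag n) (fundamentalChain n k (0 : JoinVertex p I)) := by
  intro Λ hΛ0 hΛ
  rw [boundary_fundamentalChain]
  cases k with
  | zero => exact hΛ0
  | succ k =>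
    simp only [fundamentalLink_succ, map_sum, map_smul]
    refine Finset.sum_eq_zero fun i _ => ?_
    by_cases hi : 0 < n i
    · have hlevel : ∀ k, (raise (0 : JoinVertex p I) i 0 k).1 ≤ n k := fun k => by
        by_cases h : k = i
        · subst h
          rw [raise_self]
          exact hi
        · simp [raise_of_ne _ h]
      have hconst : ∀ s : ZMod p, Λ (fundamentalChain n k (raise 0 i s)) =
          Λ (fundamentalChain n k (raise 0 i 0)) := fun s => by
        rw [raise_eq_translateLabels, fundamentalChain_translateLabels]
        exact hΛ _ _ (supportedOn_mono (fun l hl => hl.1)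
          (fundamentalChain_mem_supportedOn n k hlevel))
      simp [hconst, raiseCoeff, resolutionCoeff]
    · simp [raiseCoeff, hi]

end FundamentalChain

/-! ### Cup products of cochains -/

namespace OrderedChain

open Finsupp

variable {R V W : Type*} [CommRing R]

lemma linearCombination_cone (α : List V → R) (x : V) (c : OrderedChain R V) :
    linearCombination R α (cone x c) = linearCombination R (fun l => α (x :: l)) c := by
  have : linearCombination R α ∘ₗ cone x = linearCombination R fun l => α (x :: l) :=
    linearMap_ext fun l => by simp
  exact LinearMap.congr_fun this c

lemma linearCombination_simplexBoundary_cons (α : List V → R) (x : V) (l : List V) :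
    linearCombination R α (simplexBoundary R (x :: l)) =
      α l - linearCombination R (fun l => α (x :: l)) (simplexBoundary R l) := by
  simp [simplexBoundary_cons, linearCombination_cone]

lemma linearCombination_simplexBoundary_eq_zero {α : List V → R} {l : List V}
    (h : ∀ l', l'.length + 1 = l.length → α l' = 0) :
    linearCombination R α (simplexBoundary R l) = 0 :=
  apply_mem_of_mem_supportedOn (N := ⊥) (fun l' hl' => by simpa using h l' hl'.2)
    (simplexBoundary_mem_supportedOn_isFacet l)

lemma linearCombination_const_mul (a : R) (α : List V → R) (c : OrderedChain R V) :
    linearCombination R (fun l => a * α l) c = a * linearCombination R α c := by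
  have : linearCombination R (fun l => a * α l) = a • linearCombination R α :=
    linearMap_ext fun l => by simp
  exact LinearMap.congr_fun this c

/-- A cochain `α`, given by its values on simplices, with zero coboundary. -/
def IsCocycle (α : List V → R) : Prop :=
  ∀ l, linearCombination R α (simplexBoundary R l) = 0

lemma IsCocycle.comp_boundary {α : List V → R} (h : IsCocycle α) :
    linearCombination R α ∘ₗ boundary = 0 :=
  linearMap_ext fun l => by simp [h l]

lemma linearCombination_comp_map {α : List W → R} {β : List V → R} {f : V → W}
    (h : ∀ l, α (l.map f) = β l) :
    linearCombination R α ∘ₗ map f = linearCombination R β :=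
  linearMap_ext fun l => by simp [h]

/-- The cup product of a cochain of degree `q` with a cochain of any degree. -/
def cup (q : ℕ) (α β : List V → R) (l : List V) : R :=
  α (l.take (q + 1)) * β (l.drop q)

lemma linearCombination_cup_simplexBoundary (q : ℕ) (α β : List V → R) {l : List V}
    (hl : q + 2 ≤ l.length) :
    linearCombination R (cup q α β) (simplexBoundary R l) =
      linearCombination R α (simplexBoundary R (l.take (q + 2))) * β (l.drop (q + 1)) +
        (-1) ^ q * α (l.take (q + 1)) * linearCombination R β (simplexBoundary R (l.drop q)) := by
  induction q generalizing l α with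
  | zero =>
    obtain _ | ⟨x, _ | ⟨y, l⟩⟩ := l
    · simp at hl
    · simp at hl
    · have hx : (fun c => cup 0 α β (x :: c)) = fun c => α [x] * β (x :: c) := by
        funext c
        simp [cup]
      simp only [linearCombination_simplexBoundary_cons, hx, linearCombination_const_mul]
      simp [cup, linearCombination_simplexBoundary_cons]
      ring
  | succ q ih =>
    obtain _ | ⟨x, l⟩ := l
    · simp at hl
    · have hx : (fun c => cup (q + 1) α β (x :: c)) = cup q (fun c => α (x :: c)) β := rfl
      rw [linearCombination_simplexBoundary_cons, hx, ih _ (by simpa using hl),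
        List.take_succ_cons, linearCombination_simplexBoundary_cons]
      simp only [cup, List.take_succ_cons, List.drop_succ_cons]
      ring

lemma IsCocycle.cup {q : ℕ} {α β : List V → R} (hα : IsCocycle α) (hβ : IsCocycle β)
    (hq : ∀ l, l.length ≠ q + 1 → α l = 0) : IsCocycle (cup q α β) := by
  intro l
  by_cases hl : q + 2 ≤ l.length
  · rw [linearCombination_cup_simplexBoundary q α β hl, hα, hβ, zero_mul, mul_zero, add_zero]
  · refine linearCombination_simplexBoundary_eq_zero fun l' hl' => ?_
    rw [OrderedChain.cup, hq _ (by rw [List.length_take]; omega), zero_mul]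

/-- The unit of the cup product. -/
def cupUnit (l : List V) : R := if l.length = 1 then 1 else 0

lemma isCocycle_cupUnit : IsCocycle (cupUnit : List V → R) := by
  intro l
  obtain _ | ⟨x, _ | ⟨y, _ | ⟨z, l⟩⟩⟩ := l
  · simp
  · simp [simplexBoundary_cons, cupUnit]
  · simp [simplexBoundary_cons, cupUnit]
  · exact linearCombination_simplexBoundary_eq_zero fun l' hl' => by
      simp only [List.length_cons] at hl'
      rw [cupUnit, if_neg (by omega)]

variable {B Λ : Type*}

/-- The cup product of the pullbacks of a cochain `κ` of degree `q` along a list of coordinates. -/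
def cupPullback (q : ℕ) (κ : List Λ → R) : List B → List (B → Λ) → R
  | [] => cupUnit
  | b :: bs => cup q (fun l => κ (l.map (· b))) (cupPullback q κ bs)

variable {q : ℕ} {κ : List Λ → R}

lemma IsCocycle.cupPullback (hκ : IsCocycle κ) (hq : ∀ l, l.length ≠ q + 1 → κ l = 0)
    (bs : List B) : IsCocycle (cupPullback q κ bs) := by
  induction bs with
  | nil => exact isCocycle_cupUnit
  | cons b bs ih =>
    refine IsCocycle.cup (fun l => ?_) ih fun l hl => hq _ (by simpa using hl)
    rw [← linearCombination_comp_map (f := fun x : B → Λ => x b) (α := κ) fun _ => rfl,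
      LinearMap.comp_apply, map_simplexBoundary, hκ]

lemma cupPullback_map {f : B → Λ → Λ} (hf : ∀ b l, κ (l.map (f b)) = κ l) (bs : List B)
    (l : List (B → Λ)) :
    cupPullback q κ bs (l.map fun x b => f b (x b)) = cupPullback q κ bs l := by
  induction bs generalizing l with
  | nil => simp [cupPullback, cupUnit]
  | cons b bs ih =>
    simp only [cupPullback, cup, ← List.map_take, ← List.map_drop, ih]
    rw [← hf b ((l.take (q + 1)).map (· b)), List.map_map, List.map_map]
    rfl

lemma exists_subset_of_cupPullback_ne_zero {bs : List B} {l : List (B → Λ)}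
    (h : cupPullback q κ bs l ≠ 0) {b : B} (hb : b ∈ bs) :
    ∃ l' ⊆ l, κ (l'.map (· b)) ≠ 0 := by
  induction bs generalizing l with
  | nil => simp at hb
  | cons b' bs ih =>
    rcases List.mem_cons.1 hb with rfl | hb
    · exact ⟨_, List.take_subset _ l, left_ne_zero_of_mul h⟩
    · obtain ⟨l', hl', hne⟩ := ih (right_ne_zero_of_mul h) hb
      exact ⟨l', fun _ hx => List.drop_subset _ l (hl' hx), hne⟩

lemma cupPullback_nil (hq : ∀ l, l.length ≠ q + 1 → κ l = 0) (bs : List B) :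
    cupPullback q κ bs [] = 0 := by
  cases bs <;> simp [cupPullback, cupUnit, cup, hq]

end OrderedChain

/-! ### Cup products on the fundamental chain -/

section Evaluation

open Finsupp OrderedChain

/-- The linear form with coefficients `a`. -/
def linearForm {R I : Type*} [CommSemiring R] [Fintype I] (a : I → R) : MvPolynomial I R :=
  ∑ i, a i • MvPolynomial.X i

lemma coeff_linearForm_mul {R I : Type*} [CommSemiring R] [Fintype I] (a : I → R)
    (f : MvPolynomial I R) (m : I →₀ ℕ) :
    MvPolynomial.coeff m (linearForm a * f) =
      ∑ i, if m i ≠ 0 then a i * MvPolynomial.coeff (m - single i 1) f else 0 := by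
  classical
  simp [linearForm, Finset.sum_mul, MvPolynomial.coeff_sum, MvPolynomial.coeff_X_mul']

lemma coeff_single_linearForm {R I : Type*} [CommSemiring R] [Fintype I] (a : I → R) (i : I) :
    MvPolynomial.coeff (single i 1) (linearForm a) = a i := by
  classical
  simp [linearForm, MvPolynomial.coeff_sum, MvPolynomial.coeff_X, Finsupp.single_left_inj]

lemma exists_eq_single_of_mem_support_linearForm {R I : Type*} [CommSemiring R] [Fintype I]
    {a : I → R} {d : I →₀ ℕ} (hd : d ∈ (linearForm a).support) :
    ∃ k, a k ≠ 0 ∧ d = single k 1 := by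
  classical
  rw [MvPolynomial.mem_support_iff, linearForm, MvPolynomial.coeff_sum] at hd
  obtain ⟨k, -, hk⟩ := Finset.exists_ne_zero_of_sum_ne_zero hd
  rw [MvPolynomial.coeff_smul, MvPolynomial.coeff_X, smul_eq_mul, mul_ite, mul_one, mul_zero,
    ite_ne_right_iff] at hk
  exact ⟨k, hk.2, hk.1.symm⟩

lemma lex_degree_linearForm {R I : Type*} [CommRing R] [Fintype I] [LinearOrder I]
    {a : I → R} {i : I} (hi : a i ≠ 0) (hlt : ∀ k < i, a k = 0) :
    MonomialOrder.lex.degree (linearForm a) = single i 1 := by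
  refine MonomialOrder.lex.toSyn.injective (le_antisymm ?_ ?_)
  · refine MonomialOrder.lex.degree_le_iff.2 fun d hd => ?_
    obtain ⟨k, hk, rfl⟩ := exists_eq_single_of_mem_support_linearForm hd
    exact Lex.single_le_iff.2 (not_lt.1 fun h => hk (hlt k h))
  · refine MonomialOrder.lex.le_degree ?_
    rwa [MvPolynomial.mem_support_iff, coeff_single_linearForm]

/-- Each linear form contributes its leading term for the lexicographic order. -/
lemma coeff_prod_linearForm {R I B : Type*} [CommRing R] [Fintype I] [LinearOrder I] [Fintype B]
    {χ : B → I → R} {lead : B → I} (hlead : ∀ b, χ b (lead b) ≠ 0)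
    (hlt : ∀ b, ∀ i < lead b, χ b i = 0) :
    MvPolynomial.coeff (∑ b, single (lead b) 1) (∏ b, linearForm (χ b)) = ∏ b, χ b (lead b) := by
  have h := MonomialOrder.lex.coeff_prod_sum_degree (fun b => linearForm (χ b)) Finset.univ
  simpa only [lex_degree_linearForm (hlead _) (hlt _), MonomialOrder.leadingCoeff,
    coeff_single_linearForm] using h

section ModelLabel

variable {p : ℕ} {I B Λ : Type*} [Fintype I] [AddCommGroup Λ] (θ : ZMod p →+ Λ)
  (χ : B → I → ZMod p)

/-- The action of `(ℤ/p)^I` on labels: translation of coordinate `b` through the character `χ b`. -/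
def characterAct (g : I → ZMod p) (x : B → Λ) : B → Λ :=
  fun b => x b + θ (∑ i, χ b i * g i)

/-- The labelling of the vertices obtained by applying the characters `χ` to their labels. -/
def characterLabel (v : JoinVertex p I) : B → Λ :=
  fun b => θ (∑ i, χ b i * (v i).2)

lemma characterLabel_translateLabels (g : I → ZMod p) (v : JoinVertex p I) :
    characterLabel θ χ (translateLabels g v) = characterAct θ χ g (characterLabel θ χ v) := by
  funext b
  simp [characterLabel, characterAct, translateLabels, mul_add, Finset.sum_add_distrib]

lemma characterLabel_raise [DecidableEq I] (v : JoinVertex p I) (i : I) (s : ZMod p) (b : B) :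
    characterLabel θ χ (raise v i s) b = characterLabel θ χ v b + θ (χ b i * s) := by
  rw [raise_eq_translateLabels, characterLabel_translateLabels]
  have h0 : characterLabel θ χ (raise v i 0) = characterLabel θ χ v := by
    funext b
    refine congrArg θ (Finset.sum_congr rfl fun k _ => ?_)
    by_cases h : k = i
    · subst h
      simp
    · simp [raise_of_ne v h]
  simp [h0, characterAct, Pi.single_apply]

lemma linearCombination_cupPullback_translateLabels [NeZero p] [LinearOrder I] {n : I → ℕ} {q : ℕ}
    {κ : List Λ → ZMod p} (hκ : ∀ t l, κ (l.map (· + t)) = κ l) (bs : List B) (k : ℕ)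
    (g : I → ZMod p) (v : JoinVertex p I) :
    linearCombination _ (cupPullback q κ bs)
        (map (characterLabel θ χ) (fundamentalChain n k (translateLabels g v))) =
      linearCombination _ (cupPullback q κ bs)
        (map (characterLabel θ χ) (fundamentalChain n k v)) := by
  have hlabel : characterLabel θ χ ∘ translateLabels g = characterAct θ χ g ∘ characterLabel θ χ :=
    funext (characterLabel_translateLabels θ χ g)
  have hcup : linearCombination _ (cupPullback q κ bs) ∘ₗ map (characterAct θ χ g) =
      linearCombination _ (cupPullback q κ bs) :=
    linearCombination_comp_map (cupPullback_map (fun b l => hκ _ l) bs)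
  rw [fundamentalChain_translateLabels, ← LinearMap.comp_apply (map _), map_comp_map, hlabel,
    ← map_comp_map, LinearMap.comp_apply, ← LinearMap.comp_apply, hcup]

end ModelLabel

lemma linearCombination_cup_one_cone_cone {R W : Type*} [CommRing R] (α β : List W → R) (x y : W)
    (c : OrderedChain R W) :
    linearCombination _ (cup 1 α β) (cone x (cone y c)) =
      α [x, y] * linearCombination _ β (cone y c) := by
  simp only [linearCombination_cone]
  exact linearCombination_const_mul (α [x, y]) (fun l => β (y :: l)) c

lemma linearCombination_cup_two_cone_cone_cone {R W : Type*} [CommRing R] (α β : List W → R)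
    (x y z : W) (c : OrderedChain R W) :
    linearCombination _ (cup 2 α β) (cone x (cone y (cone z c))) =
      α [x, y, z] * linearCombination _ β (cone z c) := by
  simp only [linearCombination_cone]
  exact linearCombination_const_mul (α [x, y, z]) (fun l => β (z :: l)) c

section Steps

variable {p : ℕ} [NeZero p] {I W : Type*} [Fintype I] [LinearOrder I] (n : I → ℕ)
  {ψ : JoinVertex p I → W} {α β : List W → ZMod p} {k : ℕ} {v : JoinVertex p I} {a : I → ZMod p}

/-- One level is raised; modulo two the sum over its labels is that of `0` and `1`. -/
lemma linearCombination_cup_one_fundamentalChain (hp : p = 2)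
    (hβ : ∀ g v, linearCombination _ β (map ψ (fundamentalChain n k (translateLabels g v))) =
      linearCombination _ β (map ψ (fundamentalChain n k v)))
    (hα : ∀ i s, α [ψ v, ψ (raise v i s)] = a i * s) :
    linearCombination _ (cup 1 α β) (map ψ (fundamentalChain n (k + 1) v)) =
      ∑ i, if (v i).1 < n i then
        a i * linearCombination _ β (map ψ (fundamentalChain n k (raise v i 0))) else 0 := by
  have hedge : ∀ i s, linearCombination _ (cup 1 α β)
      (cone (ψ v) (map ψ (fundamentalChain n k (raise v i s)))) =
        s * (a i * linearCombination _ β (map ψ (fundamentalChain n k (raise v i 0)))) :=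
    fun i s => by
      rw [← hβ (Pi.single i s), ← raise_eq_translateLabels, fundamentalChain, map_cone,
        linearCombination_cup_one_cone_cone, hα, mul_comm (a i), mul_assoc]
  have hsum : ∀ j, ∑ s : ZMod p, resolutionCoeff j s * s = 1 := fun j => by
    subst hp
    have htwo : ∀ f : ZMod 2 → ZMod 2, ∑ s, f s = f 0 + f 1 := fun f => Fin.sum_univ_two f
    by_cases hj : Even j
    · simp [htwo, resolutionCoeff, hj]
    · simp only [htwo, resolutionCoeff, hj, if_false]
      decide
  have hsign : ∀ i, koszulSign v i = 1 := fun i => by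
    subst hp
    rw [koszulSign, CharTwo.neg_eq, one_pow]
  simp only [fundamentalChain_succ, map_sum, map_smul, map_cone, hedge, smul_eq_mul,
    ← mul_assoc, ← Finset.sum_mul]
  refine Finset.sum_congr rfl fun i _ => ?_
  split_ifs with hi <;> simp [raiseCoeff, hi, hsign, hsum]

/-- Two levels are raised; different ones cancel since `α` is symmetric while the incidence
coefficients are antisymmetric. -/
lemma linearCombination_cup_two_fundamentalChain
    (hβ : ∀ g v, linearCombination _ β (map ψ (fundamentalChain n k (translateLabels g v))) =
      linearCombination _ β (map ψ (fundamentalChain n k v)))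
    {K : I → ZMod p → I → ZMod p → ZMod p} (hK : ∀ i s j s', K i s j s' = K j s' i s)
    (hα : ∀ i s j s', α [ψ v, ψ (raise v i s), ψ (raise (raise v i s) j s')] = K i s j s')
    (hKa : ∀ i, ∑ s, (K i s i 0 - K i s i (-1)) = a i) (hv : ∀ i, Even (v i).1) :
    linearCombination _ (cup 2 α β) (map ψ (fundamentalChain n (k + 2) v)) =
      ∑ i, if (v i).1 + 1 < n i then
        a i * linearCombination _ β (map ψ (fundamentalChain n k (raise (raise v i 0) i 0)))
        else 0 := by
  let e := fun v => linearCombination _ β (map ψ (fundamentalChain n k v))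
  have hedge : ∀ i s j s', linearCombination _ (cup 2 α β) (cone (ψ v) (cone (ψ (raise v i s))
      (map ψ (fundamentalChain n k (raise (raise v i s) j s'))))) =
        K i s j s' * e (raise (raise v i s) j s') := fun i s j s' => by
    rw [← hα, fundamentalChain, map_cone, linearCombination_cup_two_cone_cone_cone, ← map_cone]
    rfl
  have hdiag : ∀ i s s', e (raise (raise v i s) i s') = e (raise (raise v i 0) i 0) :=
    fun i s s' => by
      rw [raise_raise_self, raise_eq_translateLabels]
      exact hβ _ _
  have hodd : ∀ i, ¬ Even ((v i).1 + 1) := fun i => by simpa [Nat.even_add_one] using hv i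
  simp only [fundamentalChain_succ, map_sum, map_smul, map_cone, hedge]
  rw [sum_raiseCoeff_smul_sum_raiseCoeff_smul n v (fun i s j s' => K i s j s' *
    e (raise (raise v i s) j s')) fun i j hij s s' => by rw [hK, raise_raise_comm v hij]]
  simp only [hdiag, smul_eq_mul, ← mul_assoc, ← Finset.sum_mul]
  refine Finset.sum_congr rfl fun i _ => ?_
  split_ifs with hi
  · simp [← hKa, resolutionCoeff, hv, hodd, sub_mul, Finset.sum_sub_distrib, e]
  · simp

end Steps

lemma fst_iterate_raise {p : ℕ} {I : Type*} [DecidableEq I] (v : JoinVertex p I) (i k : I)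
    (q : ℕ) : ((raise · i 0)^[q] v k).1 = (v k).1 + single i q k := by
  induction q with
  | zero => simp
  | succ q ih =>
    rw [Function.iterate_succ_apply']
    by_cases h : k = i
    · subst h
      simp [ih, add_assoc]
    · simp [raise_of_ne _ h, ih, Ne.symm h]

/-- A cocycle `κ` of degree `q`, on labels for the nonzero elements of `𝕂`, representing the
Euler class of the character `e` of `ℤ/p`: it is invariant under translation, vanishes on the labels
of nearby numbers, and each cup product with it expands on the fundamental chain like a
multiplication by a linear form. The homomorphism `θ` is the action of `ℤ/p` on labels. -/
structure IsEulerCocycle {p : ℕ} [NeZero p] {𝕂 Λ : Type*} [NormedField 𝕂] [AddCommGroup Λ]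
    (e : AddChar (ZMod p) 𝕂) (q : ℕ) (label : 𝕂 → Λ) (θ : ZMod p →+ Λ)
    (κ : List Λ → ZMod p) : Prop where
  degree_ne_zero : q ≠ 0
  label_mul : ∀ k z, z ≠ 0 → label (e k * z) = label z + θ k
  isCocycle : IsCocycle κ
  eq_zero_of_length_ne : ∀ l, l.length ≠ q + 1 → κ l = 0
  map_add_right : ∀ t l, κ (l.map (· + t)) = κ l
  eq_zero_of_norm_sub_lt : ∀ (L : List 𝕂) (ε : ℝ), 0 < ε → (∀ z ∈ L, ε ≤ ‖z‖) →
    (∀ z ∈ L, ∀ w ∈ L, ‖z - w‖ < ε) → κ (L.map label) = 0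
  cup_step : ∀ {I B : Type} [Fintype I] [LinearOrder I] (n : I → ℕ) (χ : B → I → ZMod p) (b : B)
    (bs : List B) (v : JoinVertex p I), (∀ i, q ∣ (v i).1) → (∀ i, q ∣ n i) →
    linearCombination _ (cupPullback q κ (b :: bs))
        (map (characterLabel θ χ) (fundamentalChain n (q * bs.length + q) v)) =
      ∑ i, if (v i).1 < n i then χ b i * linearCombination _ (cupPullback q κ bs)
        (map (characterLabel θ χ) (fundamentalChain n (q * bs.length) ((raise · i 0)^[q] v)))
        else 0

lemma IsEulerCocycle.linearCombination_cupPullback_fundamentalChain {p : ℕ} [NeZero p]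
    {𝕂 Λ : Type*} [NormedField 𝕂] [AddCommGroup Λ] {e : AddChar (ZMod p) 𝕂} {q : ℕ}
    {label : 𝕂 → Λ} {θ : ZMod p →+ Λ} {κ : List Λ → ZMod p} (h : IsEulerCocycle e q label θ κ)
    {I B : Type} [Fintype I] [LinearOrder I] (n : I → ℕ) (χ : B → I → ZMod p)
    (bs : List B) {v : JoinVertex p I} {m : I →₀ ℕ} (hv : ∀ i, q ∣ (v i).1)
    (hm : ∀ i, (v i).1 + q * m i = n i) (hdeg : m.degree = bs.length) :
    linearCombination _ (cupPullback q κ bs) (map (characterLabel θ χ)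
        (fundamentalChain n (q * bs.length) v)) =
      MvPolynomial.coeff m (bs.map fun b => linearForm (χ b)).prod := by
  have hn : ∀ i, q ∣ n i := fun i => hm i ▸ (hv i).add (dvd_mul_right q (m i))
  induction bs generalizing v m with
  | nil =>
    obtain rfl : m = 0 := (Finsupp.degree_eq_zero_iff m).1 hdeg
    simp [fundamentalChain, fundamentalLink, cupPullback, cupUnit]
  | cons b bs ih =>
    rw [List.length_cons, mul_add_one, h.cup_step n χ b bs v hv hn, List.map_cons, List.prod_cons,
      coeff_linearForm_mul]
    refine Finset.sum_congr rfl fun i _ => ?_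
    by_cases hmi : m i = 0
    · simp [hmi, ← hm i]
    obtain ⟨m, rfl⟩ : ∃ m', m = m' + single i 1 :=
      ⟨m - single i 1, (tsub_add_cancel_of_le (by simpa [Nat.one_le_iff_ne_zero])).symm⟩
    have hlt : (v i).1 < n i := by
      rw [← hm i]
      exact Nat.lt_add_of_pos_right (Nat.mul_pos h.degree_ne_zero.bot_lt (Nat.pos_of_ne_zero hmi))
    rw [if_pos hlt, if_pos hmi, add_tsub_cancel_right]
    congr 1
    refine ih (fun k => ?_) (fun k => ?_) (by simpa using hdeg)
    · rw [fst_iterate_raise, single_apply]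
      split_ifs
      · exact (hv k).add dvd_rfl
      · exact hv k
    · rw [fst_iterate_raise, ← hm k]
      simp only [Finsupp.add_apply, single_apply]
      split_ifs <;> ring

end Evaluation

/-! ### The product of joins as a configuration space -/

section JoinProduct

variable {p : ℕ} {Blk : Type*} {rk N : Blk → ℕ}

/-- Indices of the cyclic factors of a product of groups `(ℤ/p)^(rk β)`. -/
abbrev CyclicIndex (rk : Blk → ℕ) := Σ β, Fin (rk β)

/-- The group of block `β`. -/
abbrev BlockGroup (p : ℕ) (rk : Blk → ℕ) (β : Blk) := Fin (rk β) → ZMod p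

/-- The ambient space of the product over the blocks `β` of the joins of `N β + 1` copies of the
group of the block. -/
abbrev JoinSpace (p : ℕ) (rk N : Blk → ℕ) := ∀ β, Fin (N β + 1) → BlockGroup p rk β → ℝ

/-- The component in block `β` of an element of the product group. -/
def blockComponent (g : CyclicIndex rk → ZMod p) (β : Blk) : BlockGroup p rk β :=
  fun j => g ⟨β, j⟩

/-- The action of the product group on the ambient space by translation. -/
def translateJoin (g : CyclicIndex rk → ZMod p) : JoinSpace p rk N →ₗ[ℝ] JoinSpace p rk N where
  toFun x := fun β k h => x β k (h - blockComponent g β)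
  map_add' _ _ := rfl
  map_smul' _ _ := rfl

lemma translateJoin_apply (g : CyclicIndex rk → ZMod p) (x : JoinSpace p rk N) (β : Blk)
    (k : Fin (N β + 1)) (h : BlockGroup p rk β) :
    translateJoin g x β k h = x β k (h - blockComponent g β) := rfl

/-- The realization of a vertex of the flag complex: in block `β` it is the group element formed by
the labels, in the copy whose number is the sum of the levels. -/
def realize (v : JoinVertex p (CyclicIndex rk)) : JoinSpace p rk N := fun β k h =>
  if (k : ℕ) = ∑ j, (v ⟨β, j⟩).1 ∧ h = fun j => (v ⟨β, j⟩).2 then 1 else 0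

lemma realize_translateLabels (g : CyclicIndex rk → ZMod p) (v : JoinVertex p (CyclicIndex rk)) :
    (realize (translateLabels g v) : JoinSpace p rk N) = translateJoin g (realize v) := by
  funext β k h
  exact if_congr (and_congr Iff.rfl sub_eq_iff_eq_add.symm) rfl rfl

lemma realize_mul_realize_of_eq {v v' : JoinVertex p (CyclicIndex rk)} {β : Blk}
    (hvv' : ∑ j, (v ⟨β, j⟩).1 = ∑ j, (v' ⟨β, j⟩).1 → ∀ j, v ⟨β, j⟩ = v' ⟨β, j⟩)
    (k : Fin (N β + 1)) {h h' : BlockGroup p rk β} (hne : h ≠ h') :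
    (realize v : JoinSpace p rk N) β k h * (realize v' : JoinSpace p rk N) β k h' = 0 := by
  by_contra hmul
  have hv := left_ne_zero_of_mul hmul
  have hv' := right_ne_zero_of_mul hmul
  simp only [realize, ne_eq, ite_eq_right_iff, one_ne_zero, imp_false, not_not] at hv hv'
  refine hne ?_
  rw [hv.2, hv'.2]
  exact funext fun j => congrArg Prod.snd (hvv' (hv.1.symm.trans hv'.1) j)

lemma Precedes.eq_of_sum_eq {v v' : JoinVertex p (CyclicIndex rk)} (h : Precedes v v') {β : Blk}
    (hsum : ∑ j, (v ⟨β, j⟩).1 = ∑ j, (v' ⟨β, j⟩).1) (j : Fin (rk β)) :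
    v ⟨β, j⟩ = v' ⟨β, j⟩ := by
  refine (h ⟨β, j⟩).resolve_left fun hlt => hsum.not_lt ?_
  refine Finset.sum_lt_sum (fun j _ => ?_) ⟨j, Finset.mem_univ j, hlt⟩
  exact (h ⟨β, j⟩).elim le_of_lt fun heq => heq ▸ le_rfl

lemma IsFlag.eq_of_sum_eq {n : CyclicIndex rk → ℕ} {l : List (JoinVertex p (CyclicIndex rk))}
    (hl : IsFlag n l) {v v' : JoinVertex p (CyclicIndex rk)} (hv : v ∈ l) (hv' : v' ∈ l) {β : Blk}
    (hsum : ∑ j, (v ⟨β, j⟩).1 = ∑ j, (v' ⟨β, j⟩).1) (j : Fin (rk β)) :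
    v ⟨β, j⟩ = v' ⟨β, j⟩ := by
  by_cases heq : v = v'
  · rw [heq]
  let R := fun v v' : JoinVertex p (CyclicIndex rk) => Precedes v v' ∨ Precedes v' v
  have : Std.Symm R := ⟨fun _ _ => Or.symm⟩
  have hR : l.Pairwise R := hl.pairwise.imp Or.inl
  rcases hR.forall hv hv' heq with h | h
  · exact h.eq_of_sum_eq hsum j
  · exact (h.eq_of_sum_eq hsum.symm j).symm

/-- A copy of the group of block `β` in use at `x`, chosen depending only on the set of copies in
use. -/
def blockVertex (x : JoinSpace p rk N) (β : Blk) : Fin (N β + 1) :=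
  Classical.epsilon fun k => ∃ h, x β k h ≠ 0

/-- The group element in use at `x` in the copy `blockVertex x β`. -/
def blockLabel (x : JoinSpace p rk N) (β : Blk) : BlockGroup p rk β :=
  Classical.epsilon fun h => x β (blockVertex x β) h ≠ 0

lemma blockVertex_translateJoin (g : CyclicIndex rk → ZMod p) (x : JoinSpace p rk N) (β : Blk) :
    blockVertex (translateJoin g x) β = blockVertex x β := by
  refine congrArg Classical.epsilon (funext fun k => propext ?_)
  exact (Equiv.subRight (blockComponent g β)).exists_congr_left.trans (by simp [translateJoin])

variable [NeZero p]

/-- In each block, `x` is a convex combination of group elements in different copies. -/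
structure IsJoinPoint (x : JoinSpace p rk N) : Prop where
  nonneg : ∀ β k h, 0 ≤ x β k h
  sum_eq_one : ∀ β, ∑ k, ∑ h, x β k h = 1
  mul_eq_zero : ∀ β k h h', h ≠ h' → x β k h * x β k h' = 0

/-- The product over the blocks `β` of the joins of `N β + 1` copies of the group of the block. -/
def joinProduct (p : ℕ) [NeZero p] {Blk : Type*} (rk N : Blk → ℕ) : Set (JoinSpace p rk N) :=
  {x | IsJoinPoint x}

lemma IsJoinPoint.le_one {x : JoinSpace p rk N} (hx : IsJoinPoint x) (β : Blk)
    (k : Fin (N β + 1)) (h : BlockGroup p rk β) : x β k h ≤ 1 :=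
  calc x β k h ≤ ∑ h, x β k h :=
        Finset.single_le_sum (fun h _ => hx.nonneg β k h) (Finset.mem_univ h)
    _ ≤ ∑ k, ∑ h, x β k h :=
        Finset.single_le_sum (f := fun k => ∑ h, x β k h)
          (fun k _ => Finset.sum_nonneg fun h _ => hx.nonneg β k h) (Finset.mem_univ k)
    _ = 1 := hx.sum_eq_one β

lemma isCompact_joinProduct : IsCompact (joinProduct p rk N) := by
  refine (isCompact_Icc (a := (0 : JoinSpace p rk N)) (b := 1)).of_isClosed_subset ?_
    fun x hx => ⟨hx.nonneg, hx.le_one⟩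
  have heq : joinProduct p rk N = {x | ∀ β k h, 0 ≤ x β k h} ∩ {x | ∀ β, ∑ k, ∑ h, x β k h = 1} ∩
      {x | ∀ β k h h', h ≠ h' → x β k h * x β k h' = 0} :=
    Set.ext fun x => ⟨fun hx => ⟨⟨hx.nonneg, hx.sum_eq_one⟩, hx.mul_eq_zero⟩,
      fun hx => ⟨hx.1.1, hx.1.2, hx.2⟩⟩
  rw [heq]
  simp only [Set.ofPred_forall]
  refine (IsClosed.inter ?_ ?_).inter ?_
  · exact isClosed_iInter fun β => isClosed_iInter fun k => isClosed_iInter fun h =>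
      isClosed_le (by fun_prop) (by fun_prop)
  · exact isClosed_iInter fun β => isClosed_eq (by fun_prop) (by fun_prop)
  · exact isClosed_iInter fun β => isClosed_iInter fun k => isClosed_iInter fun h =>
      isClosed_iInter fun h' => isClosed_iInter fun _ => isClosed_eq (by fun_prop) (by fun_prop)

lemma translateJoin_mem_joinProduct {x : JoinSpace p rk N} (hx : x ∈ joinProduct p rk N)
    (g : CyclicIndex rk → ZMod p) : translateJoin g x ∈ joinProduct p rk N where
  nonneg _ _ _ := hx.nonneg ..
  sum_eq_one β := by
    rw [← hx.sum_eq_one β]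
    exact Finset.sum_congr rfl fun k _ =>
      Fintype.sum_equiv (Equiv.subRight (blockComponent g β)) _ _ fun h => rfl
  mul_eq_zero _ _ _ _ hne := hx.mul_eq_zero _ _ _ _ (by simpa using hne)

lemma realize_mem_joinProduct {v : JoinVertex p (CyclicIndex rk)}
    (hv : ∀ β, ∑ j, (v ⟨β, j⟩).1 ≤ N β) : realize v ∈ joinProduct p rk N where
  nonneg _ _ _ := by
    unfold realize
    split_ifs <;> norm_num
  sum_eq_one β := by
    rw [Finset.sum_eq_single ⟨_, Nat.lt_succ_iff.2 (hv β)⟩,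
      Finset.sum_eq_single fun j => (v ⟨β, j⟩).2]
    · simp [realize]
    · intro h _ hne
      simp [realize, hne]
    · simp
    · intro k _ hne
      simp [realize, Fin.ext_iff.not.1 hne]
    · simp
  mul_eq_zero _ _ _ _ := realize_mul_realize_of_eq (fun _ _ => rfl) _

lemma convexHull_subset_joinProduct {A : Set (JoinSpace p rk N)} (hA : A ⊆ joinProduct p rk N)
    (hmul : ∀ x ∈ A, ∀ y ∈ A, ∀ β k h h', h ≠ h' → x β k h * y β k h' = 0) :
    convexHull ℝ A ⊆ joinProduct p rk N := by
  have hlin : ∀ (φ : JoinSpace p rk N →ₗ[ℝ] ℝ) (c : ℝ), (∀ x ∈ A, φ x = c) →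
      ∀ x ∈ convexHull ℝ A, φ x = c := fun φ c h =>
    convexHull_min h (convex_hyperplane φ.isLinear c)
  let coord : ∀ β (_ : Fin (N β + 1)) (_ : BlockGroup p rk β), JoinSpace p rk N →ₗ[ℝ] ℝ :=
    fun β k h => LinearMap.proj h ∘ₗ LinearMap.proj k ∘ₗ LinearMap.proj β
  refine fun x hx => ⟨fun β k h => ?_, fun β => ?_, fun β k h h' hne => ?_⟩
  · exact convexHull_min (fun y hy => (hA hy).nonneg) (convex_Ici (0 : JoinSpace p rk N)) hx β k h
  · simpa [coord] using hlin (∑ k, ∑ h, coord β k h) 1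
      (fun y hy => by simpa [coord] using (hA hy).sum_eq_one β) x hx
  · have hleft : ∀ y ∈ A, x β k h * y β k h' = 0 := fun y hy =>
      (mul_comm _ _).trans <| hlin (y β k h' • coord β k h) 0 (fun z hz => by
        simpa [coord, or_comm] using hmul z hz y hy β k h h' hne) x hx
    exact hlin (x β k h • coord β k h') 0 hleft x hx

lemma IsFlag.convexHull_realize_subset {n : CyclicIndex rk → ℕ}
    (hn : ∀ β, ∑ j, n ⟨β, j⟩ ≤ N β) {l : List (JoinVertex p (CyclicIndex rk))}
    (hl : IsFlag n l) : convexHull ℝ {x | x ∈ l.map realize} ⊆ joinProduct p rk N := by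
  refine convexHull_subset_joinProduct (fun x hx => ?_) fun x hx y hy β k h h' hne => ?_
  · obtain ⟨v, hv, rfl⟩ := List.mem_map.1 hx
    exact realize_mem_joinProduct fun β =>
      (Finset.sum_le_sum fun j _ => hl.level_le v hv ⟨β, j⟩).trans (hn β)
  · obtain ⟨v, hv, rfl⟩ := List.mem_map.1 hx
    obtain ⟨v', hv', rfl⟩ := List.mem_map.1 hy
    exact realize_mul_realize_of_eq (fun hsum => hl.eq_of_sum_eq hv hv' hsum) k hne

lemma apply_blockLabel_ne_zero {x : JoinSpace p rk N} (hx : x ∈ joinProduct p rk N) (β : Blk) :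
    x β (blockVertex x β) (blockLabel x β) ≠ 0 := by
  have hex : ∃ k h, x β k h ≠ 0 := by
    by_contra! hzero
    simpa [hzero] using hx.sum_eq_one β
  exact Classical.epsilon_spec (Classical.epsilon_spec hex)

lemma blockLabel_translateJoin {x : JoinSpace p rk N} (hx : x ∈ joinProduct p rk N)
    (g : CyclicIndex rk → ZMod p) (β : Blk) :
    blockLabel (translateJoin g x) β = blockLabel x β + blockComponent g β := by
  have h := apply_blockLabel_ne_zero (translateJoin_mem_joinProduct hx g) β
  rw [blockVertex_translateJoin, translateJoin_apply] at h
  by_contra hne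
  exact mul_ne_zero h (apply_blockLabel_ne_zero hx β)
    (hx.mul_eq_zero _ _ _ _ fun heq => hne (sub_eq_iff_eq_add.1 heq))

end JoinProduct

/-! ### A Borsuk–Ulam theorem for products of joins -/

section BorsukUlam

open Finsupp OrderedChain

lemma exists_forall_le_norm_of_isCompact {E B 𝕂 : Type*} [PseudoMetricSpace E] [Finite B]
    [SeminormedAddCommGroup 𝕂] {X : Set E} (hX : IsCompact X) {F : B → E → 𝕂}
    (hF : ∀ b, ContinuousOn (F b) X) (hne : ∀ x ∈ X, ∃ b, ‖F b x‖ ≠ 0) :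
    ∃ ε > 0, ∃ δ > 0, ∀ S ⊆ X, S.Nonempty → (∀ x ∈ S, ∀ y ∈ S, dist x y < δ) →
      ∃ b, (∀ x ∈ S, ε ≤ ‖F b x‖) ∧ ∀ x ∈ S, ∀ y ∈ S, ‖F b x - F b y‖ < ε := by
  have := Fintype.ofFinite B
  rcases X.eq_empty_or_nonempty with rfl | hX0
  · exact ⟨1, one_pos, 1, one_pos, fun S hS hS0 => absurd (Set.subset_empty_iff.1 hS) hS0.ne_empty⟩
  let G : E → B → 𝕂 := fun x b => F b x
  have hG : ContinuousOn G X := continuousOn_pi.2 hF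
  obtain ⟨x₀, hx₀, hmin⟩ := hX.exists_isMinOn hX0 hG.norm
  have hpos : 0 < ‖G x₀‖ := by
    obtain ⟨b, hb⟩ := hne x₀ hx₀
    exact (lt_of_le_of_ne' (norm_nonneg _) hb).trans_le (norm_le_pi_norm (G x₀) b)
  obtain ⟨δ, hδ, hGδ⟩ := Metric.uniformContinuousOn_iff.1
    (hX.uniformContinuousOn_of_continuous hG) (‖G x₀‖ / 2) (half_pos hpos)
  refine ⟨‖G x₀‖ / 2, half_pos hpos, δ, hδ, fun S hS ⟨x, hx⟩ hdist => ?_⟩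
  obtain ⟨b, hb⟩ : ∃ b, ‖G x₀‖ ≤ ‖F b x‖ := by
    by_contra! hlt
    exact (hmin (hS hx)).not_gt ((pi_norm_lt_iff hpos).2 hlt)
  have hclose : ∀ y ∈ S, ∀ z ∈ S, ‖F b y - F b z‖ < ‖G x₀‖ / 2 := fun y hy z hz =>
    (norm_le_pi_norm (G y - G z) b).trans_lt <| by
      simpa [dist_eq_norm] using hGδ y (hS hy) z (hS hz) (hdist y hy z hz)
  refine ⟨b, fun y hy => ?_, hclose⟩
  linarith [norm_sub_norm_le (F b x) (F b y), hclose x hx y hy]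

variable {p : ℕ} [NeZero p] {𝕂 : Type*} [NormedField 𝕂] {e : AddChar (ZMod p) 𝕂} {q : ℕ}

lemma IsEulerCocycle.cupPullback_map_eq_zero {Λ X B : Type*} [AddCommGroup Λ] {label : 𝕂 → Λ}
    {θ : ZMod p →+ Λ} {κ : List Λ → ZMod p} (h : IsEulerCocycle e q label θ κ) {bs : List B} {b : B}
    (hb : b ∈ bs) {lab : X → B → Λ} {F : X → 𝕂} {l : List X} {ε : ℝ} (hε : 0 < ε)
    (hlab : ∀ x ∈ l, lab x b = label (F x)) (hle : ∀ x ∈ l, ε ≤ ‖F x‖)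
    (hclose : ∀ x ∈ l, ∀ y ∈ l, ‖F x - F y‖ < ε) : cupPullback q κ bs (l.map lab) = 0 := by
  by_contra hl
  obtain ⟨l', hsub, hl'⟩ := exists_subset_of_cupPullback_ne_zero hl hb
  obtain ⟨t, rfl⟩ : l' ∈ Set.range (List.map fun x : {x // x ∈ l} => lab x) := by
    rw [Set.range_list_map]
    exact fun a ha => by simpa using hsub ha
  have hlabel : (t.map fun x : {x // x ∈ l} => lab x).map (· b) =
      (t.map fun x : {x // x ∈ l} => F x).map label := by
    simp only [List.map_map]
    exact List.map_congr_left fun x _ => hlab x x.2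
  refine hl' ?_
  rw [hlabel]
  refine h.eq_zero_of_norm_sub_lt _ ε hε (List.forall_mem_map.2 fun x _ => hle x x.2) ?_
  exact List.forall_mem_map.2 fun x _ => List.forall_mem_map.2 fun y _ => hclose x x.2 y y.2

/-- Where `F b` does not vanish its label does; the other values of the labelling are irrelevant, as
on a small simplex some `F b` is bounded away from zero, and only have to be equivariant. -/
lemma IsEulerCocycle.exists_common_zero [Fact p.Prime] {Λ : Type*} [AddCommGroup Λ]
    {label : 𝕂 → Λ} {θ : ZMod p →+ Λ} {κ : List Λ → ZMod p} (h : IsEulerCocycle e q label θ κ)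
    {Blk : Type} [Fintype Blk] {rk N : Blk → ℕ} [LinearOrder (CyclicIndex rk)]
    {B : Type} {χ : B → CyclicIndex rk → ZMod p} {bs : List B} (hbs : ∀ b, b ∈ bs)
    {n : CyclicIndex rk → ℕ} (hn : ∀ β, ∑ j, n ⟨β, j⟩ ≤ N β)
    (hne : linearCombination _ (cupPullback q κ bs) (map (characterLabel θ χ)
      (fundamentalChain n (q * bs.length) 0)) ≠ 0)
    {F : B → JoinSpace p rk N → 𝕂} (hFc : ∀ b, ContinuousOn (F b) (joinProduct p rk N))
    (hF : ∀ b g, ∀ x ∈ joinProduct p rk N,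
      F b (translateJoin g x) = e (∑ i, χ b i * g i) * F b x) :
    ∃ x ∈ joinProduct p rk N, ∀ b, F b x = 0 := by
  classical
  have : Finite B := Set.finite_univ_iff.1 ((List.finite_toSet bs).subset fun b _ => hbs b)
  by_contra! hzero
  obtain ⟨ε, hε, δ, hδ, hsmall⟩ := exists_forall_le_norm_of_isCompact isCompact_joinProduct
    hFc fun x hx => (hzero x hx).imp fun b => norm_ne_zero_iff.2
  let lab : JoinSpace p rk N → B → Λ := fun x b =>
    if F b x = 0 then θ (∑ i, χ b i * blockLabel x i.1 i.2) else label (F b x)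
  have hlab : ∀ g, ∀ x ∈ joinProduct p rk N,
      lab (translateJoin g x) = characterAct θ χ g (lab x) := fun g x hx => by
    funext b
    simp only [lab, characterAct, hF b g x hx, mul_eq_zero, (e.val_isUnit _).ne_zero, false_or]
    split_ifs with hb
    · simp [blockLabel_translateJoin hx, blockComponent, mul_add, Finset.sum_add_distrib]
    · exact h.label_mul _ _ hb
  have hcup : linearCombination _ (cupPullback q κ bs) ∘ₗ boundary = 0 :=
    (h.isCocycle.cupPullback h.eq_zero_of_length_ne bs).comp_boundary
  obtain ⟨l, hlX, hlδ, hl⟩ := exists_small_simplex_cocycle_ne_zero (θ := characterAct θ χ)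
    (fun l l' hl hsub => IsFlag.sublist hl hsub)
    (supportedOn_mono (fun l hl => hl.1)
      (fundamentalChain_mem_supportedOn n _ fun i => Nat.zero_le (n i)))
    (isCycleModOrbits_fundamentalChain n (q * bs.length))
    hcup (fun g => linearCombination_comp_map (cupPullback_map (fun b l => h.map_add_right _ l) bs))
    realize_translateLabels isCompact_joinProduct.isBounded
    (fun l hl => hl.convexHull_realize_subset hn) hlab (characterLabel_translateLabels θ χ) hne hδ
  rw [linearCombination_single, one_smul] at hl
  have hl0 : l ≠ [] := by
    rintro rfl
    exact hl (cupPullback_nil h.eq_zero_of_length_ne bs)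
  obtain ⟨b, hle, hclose⟩ := hsmall {x | x ∈ l} hlX (List.exists_mem_of_ne_nil l hl0) hlδ
  refine hl (h.cupPullback_map_eq_zero (hbs b) hε (fun x hx => ?_) hle hclose)
  exact if_neg (norm_pos_iff.1 (hε.trans_le (hle x hx)))

/-- The Borsuk–Ulam property of the character `e` of `ℤ/p` with values in the field `𝕂` of real
dimension `q`: equivariant functions on a product of joins have a common zero if the characters `χ`
are triangular with respect to the leading indices `lead`, the indices being ordered by the weights
`wt`, and every block has `q` vertices to spare for each function whose leading index it
contains. -/
def BorsukUlamProperty (q : ℕ) (e : AddChar (ZMod p) 𝕂) : Prop :=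
  ∀ (Blk : Type) [Fintype Blk] [DecidableEq Blk] (rk N : Blk → ℕ) (B : Type) [Fintype B]
    (χ : B → CyclicIndex rk → ZMod p) (lead : B → CyclicIndex rk) (wt : CyclicIndex rk → ℕ),
    (∀ b, χ b (lead b) ≠ 0) →
    (∀ b i, i ≠ lead b → χ b i ≠ 0 → wt (lead b) < wt i) →
    (∀ β, q * (Finset.univ.filter fun b => (lead b).1 = β).card ≤ N β) →
    ∀ F : B → JoinSpace p rk N → 𝕂, (∀ b, ContinuousOn (F b) (joinProduct p rk N)) →
    (∀ b g, ∀ x ∈ joinProduct p rk N,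
      F b (translateJoin g x) = e (∑ i, χ b i * g i) * F b x) →
    ∃ x ∈ joinProduct p rk N, ∀ b, F b x = 0

lemma exists_linearOrder_lt_of_weight_lt {I : Type*} [Finite I] (wt : I → ℕ) :
    ∃ _ : LinearOrder I, ∀ i j, wt i < wt j → i < j := by
  obtain ⟨k, ⟨f⟩⟩ := Finite.exists_equiv_fin I
  have hinj : Function.Injective fun i => toLex (wt i, f i) := fun i j hij =>
    f.injective (congrArg Prod.snd (toLex.injective hij))
  exact ⟨LinearOrder.lift' _ hinj, fun i j hij => Prod.Lex.toLex_lt_toLex.2 (Or.inl hij)⟩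

lemma coeff_prod_linearForm_ne_zero {R I B : Type*} [CommRing R] [IsDomain R] [Fintype I]
    [Fintype B] {χ : B → I → R} {lead : B → I} {wt : I → ℕ} (hlead : ∀ b, χ b (lead b) ≠ 0)
    (hlt : ∀ b i, i ≠ lead b → χ b i ≠ 0 → wt (lead b) < wt i) :
    MvPolynomial.coeff (∑ b, single (lead b) 1) (∏ b, linearForm (χ b)) ≠ 0 := by
  obtain ⟨_, hwt⟩ := exists_linearOrder_lt_of_weight_lt wt
  have hbelow : ∀ b, ∀ i < lead b, χ b i = 0 := fun b i hi => by
    by_contra hχ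
    exact (hwt _ _ (hlt b i hi.ne hχ)).not_gt hi
  rw [coeff_prod_linearForm hlead hbelow]
  exact Finset.prod_ne_zero_iff.2 fun b _ => hlead b

lemma sum_sum_single_lead {Blk B : Type*} [DecidableEq Blk] [Fintype B] {rk : Blk → ℕ}
    (lead : B → CyclicIndex rk) (β : Blk) :
    ∑ j, (∑ b, single (lead b) 1 : CyclicIndex rk →₀ ℕ) ⟨β, j⟩ =
      (Finset.univ.filter fun b => (lead b).1 = β).card := by
  simp only [Finsupp.finsetSum_apply]
  rw [Finset.sum_comm, Finset.card_filter]
  refine Finset.sum_congr rfl fun b _ => ?_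
  obtain ⟨γ, k⟩ := lead b
  split_ifs with h
  · subst h
    simp [single_apply]
  · exact Finset.sum_eq_zero fun j _ => single_eq_of_ne fun heq => h (congrArg Sigma.fst heq).symm

/-- The value of the cocycle on the fundamental chain is the coefficient of the leading monomial in
the product of the linear forms `χ b`. -/
theorem IsEulerCocycle.borsukUlamProperty [Fact p.Prime] {Λ : Type*} [AddCommGroup Λ]
    {label : 𝕂 → Λ} {θ : ZMod p →+ Λ} {κ : List Λ → ZMod p} (h : IsEulerCocycle e q label θ κ) :
    BorsukUlamProperty q e := by
  intro Blk _ _ rk N B _ χ lead wt hlead hlt hN F hFc hF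
  classical
  let _ : LinearOrder (CyclicIndex rk) := linearOrderOfSTO WellOrderingRel
  let m : CyclicIndex rk →₀ ℕ := ∑ b, single (lead b) 1
  refine h.exists_common_zero (n := fun i => q * m i) (bs := Finset.univ.toList) (by simp)
    (fun β => ?_) ?_ hFc hF
  · rw [← Finset.mul_sum, sum_sum_single_lead]
    exact hN β
  · rw [h.linearCombination_cupPullback_fundamentalChain _ χ _ (m := m) (by simp) (by simp)
      (by simp [m]), Finset.prod_map_toList]
    exact coeff_prod_linearForm_ne_zero hlead hlt

end BorsukUlam

section SignCocycle

open Finsupp OrderedChain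

/-- The sign character of `ℤ/2`. -/
def signChar : AddChar (ZMod 2) ℝ := AddChar.zmodChar 2 (ζ := (-1 : ℝ)) (by norm_num)

lemma signChar_one : signChar 1 = -1 := by
  simp [signChar, AddChar.zmodChar_apply, ZMod.val_one]

lemma signChar_ne_one : signChar ≠ 1 := fun h => by
  have h1 := signChar_one
  rw [h, AddChar.one_apply] at h1
  norm_num at h1

/-- The sign of a nonzero real number as an element of `ℤ/2`. -/
def signLabel (z : ℝ) : ZMod 2 := if z < 0 then 1 else 0

lemma signLabel_neg {z : ℝ} (hz : z ≠ 0) : signLabel (-z) = signLabel z + 1 := by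
  unfold signLabel
  rcases hz.lt_or_gt with h | h
  · rw [if_neg (by linarith), if_pos h]
    rfl
  · rw [if_pos (by linarith), if_neg (by linarith), zero_add]

lemma signLabel_signChar_mul (k : ZMod 2) {z : ℝ} (hz : z ≠ 0) :
    signLabel (signChar k * z) = signLabel z + k := by
  rcases (by decide : ∀ k : ZMod 2, k = 0 ∨ k = 1) k with rfl | rfl
  · simp [AddChar.map_zero_eq_one]
  · rw [signChar_one, neg_one_mul, signLabel_neg hz]

lemma signLabel_eq_of_abs_sub_lt {z w ε : ℝ} (hz : ε ≤ |z|) (hw : ε ≤ |w|) (hzw : |z - w| < ε) :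
    signLabel z = signLabel w := by
  unfold signLabel
  congr 1
  obtain ⟨h1, h2⟩ := abs_lt.1 hzw
  refine propext ⟨fun h => ?_, fun h => ?_⟩
  · rw [abs_of_neg h] at hz
    linarith
  · rw [abs_of_neg h] at hw
    linarith

/-- The coboundary of the labels, as a function of edges. -/
def differenceCochain : List (ZMod 2) → ZMod 2
  | [x, y] => y - x
  | _ => 0

lemma differenceCochain_of_length_ne {l : List (ZMod 2)} (hl : l.length ≠ 2) :
    differenceCochain l = 0 := by
  match l, hl with
  | [], _ => rfl
  | [_], _ => rfl
  | _ :: _ :: _ :: _, _ => rfl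

lemma isCocycle_differenceCochain : IsCocycle differenceCochain := by
  intro l
  by_cases hl : l.length = 3
  · obtain ⟨x, y, z, rfl⟩ := List.length_eq_three.1 hl
    simp only [linearCombination_simplexBoundary_cons, differenceCochain]
    simp [simplexBoundary]
  · exact linearCombination_simplexBoundary_eq_zero fun l' hl' =>
      differenceCochain_of_length_ne (by omega)

lemma differenceCochain_map_eq_zero {A : Type*} {f : A → ZMod 2} {l : List A}
    (h : ∀ x ∈ l, ∀ y ∈ l, f x = f y) : differenceCochain (l.map f) = 0 := by
  match l, h with
  | [], _ => rfl
  | [_], _ => rfl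
  | [x, y], h => exact sub_eq_zero.2 (h y (by simp) x (by simp))
  | _ :: _ :: _ :: _, _ => rfl

lemma isEulerCocycle_signChar :
    IsEulerCocycle signChar 1 signLabel (AddMonoidHom.id (ZMod 2)) differenceCochain := by
  have hadd : ∀ t l, differenceCochain (l.map (· + t)) = differenceCochain l := fun t l =>
    match l with
    | [] => rfl
    | [_] => rfl
    | [_, _] => add_sub_add_right_eq_sub _ _ _
    | _ :: _ :: _ :: _ => rfl
  refine ⟨one_ne_zero, fun k z hz => signLabel_signChar_mul k hz, isCocycle_differenceCochain,
    fun l => differenceCochain_of_length_ne, hadd, fun L ε _ hle hlt =>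
      differenceCochain_map_eq_zero fun z hz w hw =>
        signLabel_eq_of_abs_sub_lt (hle z hz) (hle w hw) (hlt z hz w hw),
    fun n χ b bs v _ _ => ?_⟩
  refine linearCombination_cup_one_fundamentalChain n rfl
    (linearCombination_cupPullback_translateLabels _ χ hadd bs _) fun i s => ?_
  simp [differenceCochain, characterLabel_raise]

theorem borsukUlamProperty_signChar : BorsukUlamProperty 1 signChar :=
  isEulerCocycle_signChar.borsukUlamProperty

end SignCocycle

section CarryCocycle

open Finsupp OrderedChain

variable {p : ℕ}

/-- The carry, in units of `2π`, in the addition of two angles represented in `(-π, π]`. -/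
def angleCarry (a b : Real.Angle) : ℤ :=
  toIocDiv Real.two_pi_pos (-Real.pi) (a.toReal + b.toReal)

lemma toReal_add_eq_sub_angleCarry (a b : Real.Angle) :
    (a + b).toReal = a.toReal + b.toReal - angleCarry a b * (2 * Real.pi) := by
  rw [angleCarry, ← zsmul_eq_mul, self_sub_toIocDiv_zsmul, ← Real.Angle.toReal_coe,
    Real.Angle.coe_add, Real.Angle.coe_toReal, Real.Angle.coe_toReal]

lemma angleCarry_comm (a b : Real.Angle) : angleCarry a b = angleCarry b a := by
  rw [angleCarry, add_comm, angleCarry]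

lemma angleCarry_eq_zero {a b : Real.Angle} (h : |a.toReal + b.toReal| < Real.pi) :
    angleCarry a b = 0 := by
  obtain ⟨h1, h2⟩ := abs_lt.1 h
  refine toIocDiv_eq_of_sub_zsmul_mem_Ioc _ ⟨?_, ?_⟩ <;> rw [zero_smul] <;> linarith

lemma angleCarry_add_angleCarry (a b c : Real.Angle) :
    angleCarry a b + angleCarry (a + b) c = angleCarry b c + angleCarry a (b + c) := by
  have h : (angleCarry a b + angleCarry (a + b) c : ℝ) * (2 * Real.pi) =
      (angleCarry b c + angleCarry a (b + c)) * (2 * Real.pi) := by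
    linear_combination toReal_add_eq_sub_angleCarry a b + toReal_add_eq_sub_angleCarry (a + b) c -
      toReal_add_eq_sub_angleCarry b c - toReal_add_eq_sub_angleCarry a (b + c) -
      congrArg Real.Angle.toReal (add_assoc a b c)
  exact_mod_cast mul_right_cancel₀ Real.two_pi_pos.ne' h

lemma abs_toReal_arg_sub_arg_lt {z w : ℂ} {ε : ℝ} (hε : 0 < ε) (hz : ε ≤ ‖z‖) (hw : ε ≤ ‖w‖)
    (hzw : ‖z - w‖ < ε) : |((w.arg : Real.Angle) - z.arg).toReal| < Real.pi / 2 := by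
  have hz0 : z ≠ 0 := norm_pos_iff.1 (hε.trans_le hz)
  have hw0 : w ≠ 0 := norm_pos_iff.1 (hε.trans_le hw)
  rw [← Complex.arg_div_coe_angle hw0 hz0, Complex.arg_coe_angle_toReal_eq_arg,
    Complex.abs_arg_lt_pi_div_two_iff]
  have hquot : ‖1 - w / z‖ < 1 := by
    rw [one_sub_div hz0, norm_div, div_lt_one (hε.trans_le hz)]
    exact hzw.trans_le hz
  have hre := (Complex.re_le_norm (1 - w / z)).trans_lt hquot
  rw [Complex.sub_re, Complex.one_re] at hre
  exact Or.inl (by linarith)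

/-- The carries in the addition of successive differences of the labels, modulo `p`. -/
def carryCochain (p : ℕ) : List Real.Angle → ZMod p
  | [x, y, z] => angleCarry (y - x) (z - y)
  | _ => 0

lemma carryCochain_of_length_ne {l : List Real.Angle} (hl : l.length ≠ 3) :
    carryCochain p l = 0 := by
  match l, hl with
  | [], _ => rfl
  | [_], _ => rfl
  | [_, _], _ => rfl
  | _ :: _ :: _ :: _ :: _, _ => rfl

lemma isCocycle_carryCochain : IsCocycle (carryCochain p) := by
  intro l
  by_cases hl : l.length = 4
  · obtain ⟨x, y, z, w, rfl⟩ := List.length_eq_four.1 hl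
    have h := congrArg (Int.cast : ℤ → ZMod p) (angleCarry_add_angleCarry (y - x) (z - y) (w - z))
    rw [sub_add_sub_cancel', sub_add_sub_cancel'] at h
    push_cast at h
    simp only [linearCombination_simplexBoundary_cons, carryCochain]
    simp only [simplexBoundary, map_zero]
    linear_combination -h
  · exact linearCombination_simplexBoundary_eq_zero fun l' hl' =>
      carryCochain_of_length_ne (by omega)

lemma carryCochain_map_arg_eq_zero {L : List ℂ} {ε : ℝ} (hε : 0 < ε) (hle : ∀ z ∈ L, ε ≤ ‖z‖)
    (hlt : ∀ z ∈ L, ∀ w ∈ L, ‖z - w‖ < ε) :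
    carryCochain p (L.map fun z => (z.arg : Real.Angle)) = 0 := by
  by_cases hL : L.length = 3
  · obtain ⟨x, y, z, rfl⟩ := List.length_eq_three.1 hL
    have hdiff : ∀ u ∈ [x, y, z], ∀ w ∈ [x, y, z],
        |((w.arg : Real.Angle) - u.arg).toReal| < Real.pi / 2 := fun u hu w hw =>
      abs_toReal_arg_sub_arg_lt hε (hle u hu) (hle w hw) (hlt u hu w hw)
    have hcarry : angleCarry ((y.arg : Real.Angle) - x.arg) (z.arg - y.arg) = 0 :=
      angleCarry_eq_zero <| (abs_add_le _ _).trans_lt <|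
        (add_lt_add (hdiff x (by simp) y (by simp)) (hdiff y (by simp) z (by simp))).trans_eq
          (add_halves _)
    simp [carryCochain, hcarry]
  · exact carryCochain_of_length_ne (by simpa using hL)

variable [NeZero p]

lemma stdAddChar_ne_zero (k : ZMod p) : (ZMod.stdAddChar k : ℂ) ≠ 0 :=
  (ZMod.stdAddChar.val_isUnit k).ne_zero

/-- The argument of the standard character. -/
def charAngle (p : ℕ) [NeZero p] : ZMod p →+ Real.Angle :=
  AddMonoidHom.mk' (fun k => ((ZMod.stdAddChar k : ℂ).arg : Real.Angle)) fun a b => by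
    rw [AddChar.map_add_eq_mul,
      Complex.arg_mul_coe_angle (stdAddChar_ne_zero a) (stdAddChar_ne_zero b)]

lemma charAngle_intCast (t : ℤ) : charAngle p t = ((2 * Real.pi * t / p : ℝ) : Real.Angle) := by
  have hexp : (ZMod.stdAddChar (t : ZMod p) : ℂ) =
      Complex.exp ((2 * Real.pi * t / p : ℝ) * Complex.I) := by
    rw [ZMod.stdAddChar_coe]
    push_cast
    ring_nf
  change (((ZMod.stdAddChar (t : ZMod p) : ℂ).arg : ℝ) : Real.Angle) = _
  rw [hexp, Complex.arg_exp, Complex.im_ofReal_mul, ← Real.Angle.toReal_coe, Real.Angle.coe_toReal]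
  simp

lemma exists_intCast_eq_and_toReal_charAngle (k : ZMod p) :
    ∃ t : ℤ, (t : ZMod p) = k ∧ p * (charAngle p k).toReal = t * (2 * Real.pi) := by
  have hp : (p : ℝ) ≠ 0 := NeZero.ne _
  obtain ⟨t, rfl⟩ := ZMod.intCast_surjective k
  obtain ⟨j, hj⟩ := Real.Angle.angle_eq_iff_two_pi_dvd_sub.1
    ((Real.Angle.coe_toReal _).trans (charAngle_intCast (p := p) t))
  refine ⟨t + p * j, by simp, ?_⟩
  rw [sub_eq_iff_eq_add.1 hj]
  push_cast
  field_simp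
  ring

/-- Summed over an orbit the real representatives of the angles telescope, leaving `p` times one
angle in units of `2π`. -/
lemma sum_angleCarry_charAngle (c c' : ZMod p) :
    ∑ s, (angleCarry (charAngle p (c * s)) (charAngle p (c * c')) : ZMod p) = c * c' := by
  obtain ⟨t, ht, hreal⟩ := exists_intCast_eq_and_toReal_charAngle (c * c')
  have hshift : ∑ s, (charAngle p (c * s) + charAngle p (c * c')).toReal =
      ∑ s, (charAngle p (c * s)).toReal := by
    simp only [← map_add, ← mul_add]
    exact Equiv.sum_comp (Equiv.addRight c') fun s => (charAngle p (c * s)).toReal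
  simp only [toReal_add_eq_sub_angleCarry, Finset.sum_sub_distrib, Finset.sum_add_distrib,
    Finset.sum_const, Finset.card_univ, ZMod.card, nsmul_eq_mul, hreal, ← Finset.sum_mul] at hshift
  have hsum : (∑ s, angleCarry (charAngle p (c * s)) (charAngle p (c * c')) : ℝ) = t :=
    mul_right_cancel₀ Real.two_pi_pos.ne' (by linear_combination -hshift)
  have hsum' : ∑ s, angleCarry (charAngle p (c * s)) (charAngle p (c * c')) = t := by
    exact_mod_cast hsum
  rw [← Int.cast_sum, hsum', ht]

lemma isEulerCocycle_stdAddChar :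
    IsEulerCocycle (ZMod.stdAddChar (N := p)) 2 (fun z => (z.arg : Real.Angle)) (charAngle p)
      (carryCochain p) := by
  have hadd : ∀ t l, carryCochain p (l.map (· + t)) = carryCochain p l := fun t l =>
    match l with
    | [] => rfl
    | [_] => rfl
    | [_, _] => rfl
    | [_, _, _] => by simp [carryCochain]
    | _ :: _ :: _ :: _ :: _ => rfl
  refine ⟨two_ne_zero, fun k z hz => ?_, isCocycle_carryCochain,
    fun l => carryCochain_of_length_ne, hadd, fun L ε hε => carryCochain_map_arg_eq_zero hε,
    fun n χ b bs v hv hn => ?_⟩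
  · rw [Complex.arg_mul_coe_angle (stdAddChar_ne_zero k) hz, add_comm]
    rfl
  · refine (linearCombination_cup_two_fundamentalChain n
      (linearCombination_cupPullback_translateLabels _ χ hadd bs _) (a := χ b)
      (K := fun i s j s' => angleCarry (charAngle p (χ b i * s)) (charAngle p (χ b j * s')))
      (fun i s j s' => by rw [angleCarry_comm]) (fun i s j s' => ?_) (fun i => ?_)
      fun i => even_iff_two_dvd.2 (hv i)).trans ?_
    · simp [carryCochain, characterLabel_raise]
    · rw [Finset.sum_sub_distrib, sum_angleCarry_charAngle, sum_angleCarry_charAngle]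
      ring
    · refine Finset.sum_congr rfl fun i _ => ?_
      have hlt : (v i).1 + 1 < n i ↔ (v i).1 < n i := by
        have := hv i
        have := hn i
        omega
      simp only [hlt]
      rfl

lemma stdAddChar_ne_one [Nontrivial (ZMod p)] :
    (ZMod.stdAddChar : AddChar (ZMod p) ℂ) ≠ 1 := fun h =>
  one_ne_zero <| ZMod.injective_stdAddChar (N := p) <| by
    rw [h, AddChar.one_apply, AddChar.one_apply]

theorem borsukUlamProperty_stdAddChar [Fact p.Prime] :
    BorsukUlamProperty 2 (ZMod.stdAddChar (N := p)) :=
  isEulerCocycle_stdAddChar.borsukUlamProperty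

end CarryCocycle

/-! ### Homogeneous extension of maps of the simplex -/

section HomogeneousExtension

variable {N : ℕ} {E : Type*}

lemma toLp_inv_sum_smul_mem_stdSimp {y : Fin (N + 1) → ℝ} (hy : 0 ≤ y) (hsum : 0 < ∑ k, y k) :
    WithLp.toLp 2 ((∑ k, y k)⁻¹ • y) ∈ stdSimp N := by
  refine ⟨fun k => mul_nonneg (inv_nonneg.2 hsum.le) (hy k), ?_⟩
  simp only [Pi.smul_apply, smul_eq_mul, ← Finset.mul_sum]
  exact inv_mul_cancel₀ hsum.ne'

lemma isCompact_stdSimp : IsCompact (stdSimp N) := by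
  convert (isCompact_stdSimplex ℝ (Fin (N + 1))).image
    (PiLp.continuous_toLp 2 fun _ : Fin (N + 1) => ℝ) using 1
  exact Set.ext fun x => ⟨fun hx => ⟨WithLp.ofLp x, hx, rfl⟩, fun ⟨_, hy, hxy⟩ => hxy ▸ hy⟩

variable [NormedAddCommGroup E] [NormedSpace ℝ E]

/-- The positively homogeneous extension of a map on the simplex to the nonnegative orthant; the
origin is sent to `0`, as the total weight is a factor. -/
def homogeneousExtension (f : EuclideanSpace ℝ (Fin (N + 1)) → E) (y : Fin (N + 1) → ℝ) : E :=
  (∑ k, y k) • f (WithLp.toLp 2 ((∑ k, y k)⁻¹ • y))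

variable {f : EuclideanSpace ℝ (Fin (N + 1)) → E}

lemma norm_homogeneousExtension_le {M : ℝ} (hM : ∀ x ∈ stdSimp N, ‖f x‖ ≤ M)
    {y : Fin (N + 1) → ℝ} (hy : 0 ≤ y) : ‖homogeneousExtension f y‖ ≤ (∑ k, y k) * M := by
  rcases (Finset.sum_nonneg fun k (_ : k ∈ Finset.univ) => hy k).eq_or_lt with h | h
  · simp [homogeneousExtension, ← h]
  · rw [homogeneousExtension, norm_smul, Real.norm_of_nonneg h.le]
    exact mul_le_mul_of_nonneg_left (hM _ (toLp_inv_sum_smul_mem_stdSimp hy h)) h.le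

lemma continuousOn_homogeneousExtension (hf : ContinuousOn f (stdSimp N)) :
    ContinuousOn (homogeneousExtension f) (Set.Ici 0) := by
  have hsum : Continuous fun y : Fin (N + 1) → ℝ => ∑ k, y k := by fun_prop
  intro y hy
  rcases (Finset.sum_nonneg fun k _ => hy k).eq_or_lt with h0 | h0
  · obtain ⟨M, hM⟩ := (isCompact_stdSimp.image_of_continuousOn hf).isBounded.exists_norm_le
    have hlim : Filter.Tendsto (fun z : Fin (N + 1) → ℝ => (∑ k, z k) * M)
        (nhdsWithin y (Set.Ici 0)) (nhds 0) := by
      have := ((hsum.mul_const M).tendsto y).mono_left (nhdsWithin_le_nhds (s := Set.Ici 0))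
      rwa [← h0, zero_mul] at this
    have hy0 : homogeneousExtension f y = 0 := by simp [homogeneousExtension, ← h0]
    rw [ContinuousWithinAt, hy0]
    refine squeeze_zero_norm' ?_ hlim
    filter_upwards [self_mem_nhdsWithin] with z hz
    exact norm_homogeneousExtension_le (fun x hx => hM _ ⟨x, hx, rfl⟩) hz
  · have hnormalize : ContinuousAt (fun z : Fin (N + 1) → ℝ =>
        (WithLp.toLp 2 ((∑ k, z k)⁻¹ • z) : EuclideanSpace ℝ (Fin (N + 1)))) y :=
      (PiLp.continuous_toLp 2 fun _ : Fin (N + 1) => ℝ).continuousAt.comp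
        ((hsum.continuousAt.inv₀ h0.ne').smul continuousAt_id)
    refine hsum.continuousWithinAt.smul (Filter.Tendsto.comp
      (hf _ (toLp_inv_sum_smul_mem_stdSimp hy h0))
      (tendsto_nhdsWithin_iff.2 ⟨hnormalize.continuousWithinAt, ?_⟩))
    filter_upwards [self_mem_nhdsWithin,
      hsum.continuousAt.continuousWithinAt.eventually (lt_mem_nhds h0)] with z hz hpos
    exact toLp_inv_sum_smul_mem_stdSimp hz hpos

end HomogeneousExtension

/-! ### Fourier coefficients -/

section Fourier

variable {p : ℕ} [NeZero p] {𝕂 ι : Type*} [RCLike 𝕂] [Fintype ι] [DecidableEq ι]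
  {e : AddChar (ZMod p) 𝕂}

/-- The Fourier coefficient of a function `y` on `(ℤ/p)^ι` at the character with exponents `χ`
formed from `e`. -/
def fourierCoefficient (e : AddChar (ZMod p) 𝕂) (χ : ι → ZMod p) (y : (ι → ZMod p) → 𝕂) : 𝕂 :=
  ∑ g, e (χ ⬝ᵥ g) * y g

lemma fourierCoefficient_comp_sub (χ : ι → ZMod p) (y : (ι → ZMod p) → 𝕂) (g₀ : ι → ZMod p) :
    fourierCoefficient e χ (fun g => y (g - g₀)) = e (χ ⬝ᵥ g₀) * fourierCoefficient e χ y := by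
  rw [fourierCoefficient, fourierCoefficient, Finset.mul_sum]
  refine Fintype.sum_equiv (Equiv.subRight g₀) _ _ fun g => ?_
  rw [Equiv.subRight_apply, ← mul_assoc, ← AddChar.map_add_eq_mul, ← dotProduct_add,
    add_sub_cancel]

lemma fourierCoefficient_const_mul (χ : ι → ZMod p) (a : 𝕂) (y : (ι → ZMod p) → 𝕂) :
    fourierCoefficient e χ (fun g => a * y g) = a * fourierCoefficient e χ y := by
  simp only [fourierCoefficient, Finset.mul_sum, mul_left_comm]

lemma fourierCoefficient_neg (χ : ι → ZMod p) (y : (ι → ZMod p) → 𝕂) :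
    fourierCoefficient e (-χ) y =
      starRingEnd 𝕂 (fourierCoefficient e χ fun g => starRingEnd 𝕂 (y g)) := by
  simp only [fourierCoefficient, map_sum, map_mul, RCLike.conj_conj, neg_dotProduct,
    AddChar.map_neg_eq_conj]

end Fourier

section FourierInversion

variable {p : ℕ} [Fact p.Prime] {𝕂 ι : Type*} [RCLike 𝕂] [Fintype ι] [DecidableEq ι]
  {e : AddChar (ZMod p) 𝕂}

lemma sum_addChar_dotProduct_eq_zero (he : e ≠ 1) {v : ι → ZMod p} (hv : v ≠ 0) :
    ∑ χ : ι → ZMod p, e (χ ⬝ᵥ v) = 0 := by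
  let φ : (ι → ZMod p) →+ ZMod p :=
    AddMonoidHom.mk' (fun χ => χ ⬝ᵥ v) fun a b => add_dotProduct a b v
  refine AddChar.sum_eq_zero_of_ne_one (ψ := e.compAddMonoidHom φ) fun h => he ?_
  obtain ⟨j, hj⟩ := Function.ne_iff.1 hv
  ext k
  simpa [φ, mul_assoc, inv_mul_cancel₀ hj] using DFunLike.congr_fun h (Pi.single j (k * (v j)⁻¹))

lemma card_mul_eq_sum_of_fourierCoefficient_eq_zero (he : e ≠ 1) {y : (ι → ZMod p) → 𝕂}
    (hy : ∀ χ, χ ≠ 0 → fourierCoefficient e χ y = 0) (g₀ : ι → ZMod p) :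
    (p : 𝕂) ^ Fintype.card ι * y g₀ = ∑ g, y g := by
  have hshift : ∀ χ, fourierCoefficient e χ (fun g => y (g + g₀)) =
      e (χ ⬝ᵥ (-g₀)) * fourierCoefficient e χ y := fun χ => by
    simpa using fourierCoefficient_comp_sub χ y (-g₀)
  have hsum : ∑ χ : ι → ZMod p, fourierCoefficient e χ (fun g => y (g + g₀)) = ∑ g, y g := by
    rw [Finset.sum_eq_single 0 (fun χ _ hχ => by rw [hshift, hy χ hχ, mul_zero]) (by simp),
      hshift]
    simp [fourierCoefficient]
  rw [← hsum]
  simp only [fourierCoefficient]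
  rw [Finset.sum_comm, Finset.sum_eq_single 0]
  · simp [ZMod.card]
  · intro g _ hg
    rw [← Finset.sum_mul, sum_addChar_dotProduct_eq_zero he hg, zero_mul]
  · simp

end FourierInversion

section SignPairs

variable {A : Type*} [AddGroup A]

/-- A set of nonzero elements of a group which meets each pair `{a, -a}` of nonzero elements. A
Fourier transform of a conjugation invariant family vanishes away from `0` once it vanishes on such
a set. -/
structure RepresentsUpToSign (H : Finset A) : Prop where
  ne_zero : ∀ a ∈ H, a ≠ 0
  mem_or_neg_mem : ∀ a, a ≠ 0 → a ∈ H ∨ -a ∈ H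

lemma representsUpToSign_erase_zero [Fintype A] [DecidableEq A] :
    RepresentsUpToSign (Finset.univ.erase (0 : A)) where
  ne_zero _ := Finset.ne_of_mem_erase
  mem_or_neg_mem _ ha := Or.inl (Finset.mem_erase.2 ⟨ha, Finset.mem_univ _⟩)

lemma exists_representsUpToSign [Fintype A] (hA : ∀ a : A, a = -a → a = 0) :
    ∃ H : Finset A, RepresentsUpToSign H ∧ 2 * H.card ≤ Fintype.card A - 1 := by
  classical
  let rank := Fintype.equivFin A
  let H := Finset.univ.filter fun a : A => rank a < rank (-a)
  have hH : RepresentsUpToSign H := by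
    refine ⟨fun a ha h => ?_, fun a ha => ?_⟩
    · simp [H, h] at ha
    · simpa [H] using fun h => ha (hA a (rank.injective h))
  refine ⟨H, hH, ?_⟩
  have hdisj : Disjoint H (H.image Neg.neg) := by
    refine Finset.disjoint_left.2 fun a ha ha' => ?_
    obtain ⟨b, hb, rfl⟩ := Finset.mem_image.1 ha'
    simp only [H, Finset.mem_filter, Finset.mem_univ, true_and, neg_neg] at ha hb
    exact lt_asymm ha hb
  have hsub : H ∪ H.image Neg.neg ⊆ Finset.univ.erase 0 := by
    refine Finset.union_subset (fun a ha => ?_) (Finset.image_subset_iff.2 fun a ha => ?_) <;>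
      simpa using hH.ne_zero a ha
  calc 2 * H.card = (H ∪ H.image Neg.neg).card := by
        rw [Finset.card_union_of_disjoint hdisj, Finset.card_image_of_injective _ neg_injective,
          two_mul]
    _ ≤ (Finset.univ.erase (0 : A)).card := Finset.card_le_card hsub
    _ = Fintype.card A - 1 := by simp

end SignPairs

/-! ### Color counts -/

section ColorExcess

variable {V G : Type*}

/-- A continuous function of a point `y` of the nonnegative orthant which vanishes exactly if at
most one vertex of `C` is in the support of `y`. -/
def colorExcess (C : Finset V) (y : V → ℝ) : ℝ := ∑ v ∈ C.offDiag, min (y v.1) (y v.2)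

lemma continuous_colorExcess (C : Finset V) : Continuous (colorExcess C) := by
  unfold colorExcess
  fun_prop

variable [Fintype V]

/-- The support of `y` as a finite set. -/
def vertexSupport (y : V → ℝ) : Finset V := Finset.univ.filter fun v => y v ≠ 0

lemma mem_vertexSupport {y : V → ℝ} {v : V} : v ∈ vertexSupport y ↔ y v ≠ 0 := by
  simp [vertexSupport]

variable [DecidableEq V]

lemma colorExcess_eq_zero_iff (C : Finset V) {y : V → ℝ} (hy : 0 ≤ y) :
    colorExcess C y = 0 ↔ (vertexSupport y ∩ C).card ≤ 1 := by
  rw [colorExcess, Finset.sum_eq_zero_iff_of_nonneg fun v _ => le_min (hy v.1) (hy v.2),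
    Finset.card_le_one]
  simp only [Finset.mem_inter, mem_vertexSupport]
  constructor
  · rintro h a ⟨ha, haC⟩ b ⟨hb, hbC⟩
    by_contra hab
    exact (lt_min ((hy a).lt_of_ne' ha) ((hy b).lt_of_ne' hb)).ne'
      (h (a, b) (Finset.mem_offDiag.2 ⟨haC, hbC, hab⟩))
  · rintro h ⟨a, b⟩ hab
    obtain ⟨haC, hbC, hab⟩ := Finset.mem_offDiag.1 hab
    by_cases ha : y a = 0
    · exact (min_eq_left (ha.trans_le (hy b))).trans ha
    · have hb : y b = 0 := by_contra fun hb => hab (h a ⟨ha, haC⟩ b ⟨hb, hbC⟩)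
      exact (min_eq_right (hb.trans_le (hy a))).trans hb

variable [Fintype G] [Nonempty G]

lemma exists_card_vertexSupport_inter_le_one {C : Finset V} (hC : C.card ≤ 2 * Fintype.card G - 1)
    {w : G → V → ℝ} (hw : ∀ v g g', g ≠ g' → w g v * w g' v = 0) :
    ∃ g, (vertexSupport (w g) ∩ C).card ≤ 1 := by
  by_contra! hcon
  have hdisj : ∀ g g', g ≠ g' →
      Disjoint (vertexSupport (w g) ∩ C) (vertexSupport (w g') ∩ C) := by
    refine fun g g' hne => Finset.disjoint_left.2 fun v hv hv' => ?_
    simp only [Finset.mem_inter, mem_vertexSupport] at hv hv'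
    exact mul_ne_zero hv.1 hv'.1 (hw v g g' hne)
  have hcard : 2 * Fintype.card G ≤ C.card :=
    calc 2 * Fintype.card G = ∑ _g : G, 2 := by simp [mul_comm]
      _ ≤ ∑ g, (vertexSupport (w g) ∩ C).card := Finset.sum_le_sum fun g _ => hcon g
      _ = (Finset.univ.biUnion fun g => vertexSupport (w g) ∩ C).card :=
        (Finset.card_biUnion fun g _ g' _ => hdisj g g').symm
      _ ≤ C.card :=
        Finset.card_le_card (Finset.biUnion_subset.2 fun _ _ => Finset.inter_subset_right)
  have := Fintype.card_pos (α := G)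
  omega

lemma card_vertexSupport_inter_le_one_of_colorExcess_eq {C : Finset V}
    (hC : C.card ≤ 2 * Fintype.card G - 1) {w : G → V → ℝ} (hnonneg : ∀ g, 0 ≤ w g)
    (hw : ∀ v g g', g ≠ g' → w g v * w g' v = 0)
    (heq : ∀ g g', colorExcess C (w g) = colorExcess C (w g')) (g : G) :
    (vertexSupport (w g) ∩ C).card ≤ 1 := by
  obtain ⟨g', hg'⟩ := exists_card_vertexSupport_inter_le_one hC hw
  rw [← colorExcess_eq_zero_iff C (hnonneg g), heq g g']
  exact (colorExcess_eq_zero_iff C (hnonneg g')).2 hg'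

end ColorExcess

/-! ### Frames -/

section RealPairing

variable {𝕂 : Type*} [RCLike 𝕂] {d : ℕ}

/-- The bilinear pairing of a vector of `𝕂^d` with a real vector. -/
def realPairing (w : Fin d → 𝕂) : EuclideanSpace ℝ (Fin d) →ₗ[ℝ] 𝕂 where
  toFun v := ∑ i, w i * (v i : 𝕂)
  map_add' u v := by simp [mul_add, Finset.sum_add_distrib]
  map_smul' c v := by
    simp only [PiLp.smul_apply, smul_eq_mul, RCLike.ofReal_mul, mul_left_comm (w _),
      RingHom.id_apply, ← Finset.mul_sum, RCLike.real_smul_eq_coe_mul]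

lemma realPairing_apply (w : Fin d → 𝕂) (v : EuclideanSpace ℝ (Fin d)) :
    realPairing w v = ∑ i, w i * (v i : 𝕂) := rfl

lemma realPairing_smul (c : 𝕂) (w : Fin d → 𝕂) (v : EuclideanSpace ℝ (Fin d)) :
    realPairing (c • w) v = c * realPairing w v := by
  simp only [realPairing_apply, Pi.smul_apply, smul_eq_mul, Finset.mul_sum, mul_assoc]

lemma realPairing_star (w : Fin d → 𝕂) (v : EuclideanSpace ℝ (Fin d)) :
    realPairing (star w) v = starRingEnd 𝕂 (realPairing w v) := by
  simp [realPairing_apply]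

lemma continuousOn_realPairing {X : Type*} [TopologicalSpace X] {s : Set X} {w : X → Fin d → 𝕂}
    {v : X → EuclideanSpace ℝ (Fin d)} (hw : ContinuousOn w s) (hv : ContinuousOn v s) :
    ContinuousOn (fun x => realPairing (w x) (v x)) s := by
  simp only [realPairing_apply]
  exact continuousOn_finsetSum _ fun i _ => (continuousOn_pi.1 hw i).mul
    (RCLike.continuous_ofReal.comp_continuousOn
      ((PiLp.continuous_apply 2 (fun _ : Fin d => ℝ) i).comp_continuousOn hv))

end RealPairing

/-- A family of linear subspaces of dimension `m` of `ℝ^d` which depends equivariantly on vectors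
`z s` of `𝕂^d`, each acted on by its own copy of `ℤ/p` through `e`. If the `z s` are nonzero and
satisfy the equations `equation a z = 0`, then the common kernel of the functionals
`functional t z` on real vectors is contained in such a subspace. The weights of the equations are
triangular with leading entries `lead a`, and `conj` is complex conjugation on the functionals. -/
structure FrameSystem {p : ℕ} {𝕂 : Type*} [RCLike 𝕂] (e : AddChar (ZMod p) 𝕂) (d m : ℕ) where
  size : ℕ
  Functional : Type
  [fintypeFunctional : Fintype Functional]
  functional : Functional → (Fin size → Fin d → 𝕂) → Fin d → 𝕂
  continuous_functional : ∀ t, Continuous (functional t)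
  functionalWeight : Functional → Fin size → ZMod p
  functional_smul : ∀ t z (h : Fin size → ZMod p),
    functional t (fun s => e (h s) • z s) = e (functionalWeight t ⬝ᵥ h) • functional t z
  conj : Functional → Functional
  functional_conj : ∀ t z, functional (conj t) z = star (functional t z)
  Equation : Type
  [fintypeEquation : Fintype Equation]
  equation : Equation → (Fin size → Fin d → 𝕂) → 𝕂
  continuous_equation : ∀ a, Continuous (equation a)
  equationWeight : Equation → Fin size → ZMod p
  equation_smul : ∀ a z (h : Fin size → ZMod p),
    equation a (fun s => e (h s) • z s) = e (equationWeight a ⬝ᵥ h) * equation a z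
  lead : Equation → Fin size
  equationWeight_lead : ∀ a, equationWeight a (lead a) ≠ 0
  lead_lt : ∀ a s, s ≠ lead a → equationWeight a s ≠ 0 → lead a < s
  card_functional : Fintype.card Functional = d - m
  card_lead_lt : ∀ s, (Finset.univ.filter fun a => lead a = s).card < d - m
  exists_submodule : ∀ z, (∀ s, z s ≠ 0) → (∀ a, equation a z = 0) →
    ∃ D : Submodule ℝ (EuclideanSpace ℝ (Fin d)), Module.finrank ℝ D = m ∧
      ∀ v, (∀ t, realPairing (functional t z) v = 0) → v ∈ D
  /-- Makes the affine subspaces of different blocks coincide, which is vacuous for `m = 0`. -/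
  functional_eq_zero : m = 0 ∨ ∀ z v, (∀ s, realPairing (z s) v = 0) →
    ∀ t, realPairing (functional t z) v = 0

attribute [instance] FrameSystem.fintypeFunctional FrameSystem.fintypeEquation

lemma exists_submodule_of_dotProduct_eq_zero {d m : ℕ} (hmd : m ≤ d) {ι : Type*} [Fintype ι]
    (hι : Fintype.card ι = d - m) {w : ι → Fin d → ℝ} (hne : ∀ t, w t ≠ 0)
    (horth : ∀ s t, s ≠ t → w s ⬝ᵥ w t = 0) :
    ∃ D : Submodule ℝ (EuclideanSpace ℝ (Fin d)), Module.finrank ℝ D = m ∧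
      ∀ v : EuclideanSpace ℝ (Fin d), (∀ t, w t ⬝ᵥ v = 0) → v ∈ D := by
  let u : ι → EuclideanSpace ℝ (Fin d) := fun t => WithLp.toLp 2 (w t)
  have hinner : ∀ t (v : EuclideanSpace ℝ (Fin d)), inner ℝ (u t) v = w t ⬝ᵥ v := fun t v => by
    simp [u, EuclideanSpace.inner_eq_star_dotProduct, dotProduct_comm]
  have hu : LinearIndependent ℝ u := linearIndependent_of_ne_zero_of_inner_eq_zero
    (fun t h => hne t (by simpa [u] using h)) fun s t hst => (hinner s (u t)).trans (horth s t hst)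
  refine ⟨(Submodule.span ℝ (Set.range u))ᗮ, ?_, fun v hv => ?_⟩
  · have := Submodule.finrank_add_finrank_orthogonal (Submodule.span ℝ (Set.range u))
    rw [finrank_span_eq_card hu, finrank_euclideanSpace_fin] at this
    omega
  · have hle : Submodule.span ℝ (Set.range u) ≤ (ℝ ∙ v)ᗮ := Submodule.span_le.2 <| by
      rintro _ ⟨t, rfl⟩
      exact Submodule.mem_orthogonal_singleton_iff_inner_left.2 ((hinner t v).trans (hv t))
    exact fun w hw => Submodule.mem_orthogonal_singleton_iff_inner_left.1 (hle hw)

lemma card_filter_fst_eq_lt {α β : Type*} [Fintype α] [DecidableEq α] [Fintype β]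
    {P : α × β → Prop} [DecidablePred P] {s : α} {b : β} (hb : ¬P (s, b)) :
    (Finset.univ.filter fun a : Subtype P => a.1.1 = s).card < Fintype.card β := by
  rw [← Fintype.card_subtype]
  refine Fintype.card_lt_of_injective_of_notMem (fun a => a.1.1.2) (b := b) ?_ ?_
  · exact fun a a' h => Subtype.ext (Subtype.ext (Prod.ext (a.2.trans a'.2.symm) h))
  · rintro ⟨⟨⟨a, ha⟩, has⟩, rfl⟩
    exact hb (has ▸ ha)

section Frames

variable {p : ℕ} [Fact p.Prime]

/-- Orthogonal frames of `d - m` real vectors; the subspace is the orthogonal complement of the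
frame. -/
def realFrameSystem (e : AddChar (ZMod p) ℝ) {d m : ℕ} (hmd : m < d) : FrameSystem e d m where
  size := d - m
  Functional := Fin (d - m)
  functional t z := z t
  continuous_functional t := by fun_prop
  functionalWeight t := Pi.single t 1
  functional_smul t z h := by simp
  conj := id
  functional_conj t z := by simp
  Equation := {a : Fin (d - m) × Fin (d - m) // a.1 < a.2}
  equation a z := z a.1.1 ⬝ᵥ z a.1.2
  continuous_equation a := by fun_prop
  equationWeight a := Pi.single a.1.1 1 + Pi.single a.1.2 1
  equation_smul a z h := by
    simp only [add_dotProduct, single_dotProduct, AddChar.map_add_eq_mul, one_mul,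
      smul_dotProduct, dotProduct_smul, smul_eq_mul, mul_assoc]
    exact mul_left_comm _ _ _
  lead a := a.1.1
  equationWeight_lead a := by simp [a.2.ne]
  lead_lt a s hs hw := by
    obtain rfl : s = a.1.2 := by
      by_contra h
      simp [hs, h] at hw
    exact a.2
  card_functional := by simp
  card_lead_lt s := (card_filter_fst_eq_lt (b := s) (lt_irrefl s)).trans_eq (by simp)
  exists_submodule z hz hort := by
    obtain ⟨D, hD, hmem⟩ := exists_submodule_of_dotProduct_eq_zero hmd.le
      (Fintype.card_fin (d - m)) hz fun s t hst => hst.lt_or_gt.elim (fun h => hort ⟨(s, t), h⟩)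
        fun h => (dotProduct_comm _ _).trans (hort ⟨(t, s), h⟩)
    exact ⟨D, hD, fun v hv => hmem v hv⟩
  functional_eq_zero := Or.inr fun _ _ h t => h t

/-- The coordinate functionals; the subspace is zero. -/
def trivialFrameSystem {𝕂 : Type*} [RCLike 𝕂] (e : AddChar (ZMod p) 𝕂) {d : ℕ} :
    FrameSystem e d 0 where
  size := 0
  Functional := Fin d
  functional t _ := Pi.single t 1
  continuous_functional t := by fun_prop
  functionalWeight _ := 0
  functional_smul t _ h := by simp
  conj := id
  functional_conj t _ := by simp
  Equation := Empty
  equation a := a.elim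
  continuous_equation a := a.elim
  equationWeight a := a.elim
  equation_smul a := a.elim
  lead a := a.elim
  equationWeight_lead a := a.elim
  lead_lt a := a.elim
  card_functional := by simp
  card_lead_lt s := s.elim0
  exists_submodule z _ _ := by
    refine ⟨⊥, by simp, fun v hv => (Submodule.mem_bot ℝ).2 (PiLp.ext fun t => ?_)⟩
    simpa [realPairing_apply, Pi.single_apply] using hv t
  functional_eq_zero := Or.inl rfl

end Frames

section ComplexFrames

variable {d : ℕ}

/-- The real part of `w`, or the imaginary part if `b` is `true`. -/
def realComponent (b : Bool) (w : Fin d → ℂ) : Fin d → ℝ := fun i =>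
  if b then (w i).im else (w i).re

lemma realComponent_of_dotProduct_eq_zero {z w : Fin d → ℂ} (h : z ⬝ᵥ w = 0) :
    realComponent false z ⬝ᵥ realComponent false w =
        realComponent true z ⬝ᵥ realComponent true w ∧
      realComponent false z ⬝ᵥ realComponent true w =
        -(realComponent true z ⬝ᵥ realComponent false w) := by
  have hre := congrArg Complex.re h
  have him := congrArg Complex.im h
  simp only [dotProduct, Complex.re_sum, Complex.im_sum, Complex.mul_re, Complex.mul_im,
    Finset.sum_sub_distrib, Finset.sum_add_distrib, Complex.zero_re, Complex.zero_im] at hre him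
  simp only [dotProduct, realComponent, if_true, Bool.false_eq_true, if_false]
  constructor <;> linarith

lemma realComponent_false_star (w : Fin d → ℂ) :
    realComponent false (star w) = realComponent false w := by
  funext i
  simp [realComponent]

lemma realComponent_true_star (w : Fin d → ℂ) :
    realComponent true (star w) = -realComponent true w := by
  funext i
  simp [realComponent]

lemma realComponent_dotProduct_realComponent {z w : Fin d → ℂ} (h : z ⬝ᵥ w = 0)
    (hstar : z ⬝ᵥ star w = 0) (b c : Bool) : realComponent b z ⬝ᵥ realComponent c w = 0 := by
  obtain ⟨h1, h2⟩ := realComponent_of_dotProduct_eq_zero h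
  obtain ⟨h3, h4⟩ := realComponent_of_dotProduct_eq_zero hstar
  rw [realComponent_false_star, realComponent_true_star, dotProduct_neg] at h3 h4
  cases b <;> cases c <;> linarith

lemma realComponent_dotProduct_realComponent_self {z : Fin d → ℂ} (h : z ⬝ᵥ z = 0) {b c : Bool}
    (hbc : b ≠ c) : realComponent b z ⬝ᵥ realComponent c z = 0 := by
  have h2 := (realComponent_of_dotProduct_eq_zero h).2
  have hcomm := dotProduct_comm (realComponent true z) (realComponent false z)
  cases b <;> cases c <;> first | exact absurd rfl hbc | linarith

lemma realComponent_ne_zero {z : Fin d → ℂ} (h : z ⬝ᵥ z = 0) (hz : z ≠ 0) (b : Bool) :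
    realComponent b z ≠ 0 := by
  intro hb
  have hself := (realComponent_of_dotProduct_eq_zero h).1
  have hzero : realComponent false z = 0 ∧ realComponent true z = 0 := by
    cases b <;> rw [hb, zero_dotProduct] at hself
    · exact ⟨hb, dotProduct_self_eq_zero.1 hself.symm⟩
    · exact ⟨dotProduct_self_eq_zero.1 hself, hb⟩
  exact hz (funext fun i => Complex.ext (congrFun hzero.1 i) (congrFun hzero.2 i))

lemma realComponent_dotProduct_eq_zero {z : Fin d → ℂ} {v : EuclideanSpace ℝ (Fin d)}
    (h : realPairing z v = 0) (b : Bool) : realComponent b z ⬝ᵥ v = 0 := by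
  have hre := congrArg Complex.re h
  have him := congrArg Complex.im h
  simp only [realPairing_apply, Complex.coe_algebraMap, Complex.re_sum, Complex.mul_re,
    Complex.ofReal_re, Complex.ofReal_im, mul_zero, sub_zero, Complex.zero_re, Complex.im_sum,
    Complex.mul_im, zero_add, Complex.zero_im] at hre him
  cases b
  · exact hre
  · exact him

/-- The vector `w`, or its complex conjugate if `b` is `true`. -/
def conjIf (b : Bool) (w : Fin d → ℂ) : Fin d → ℂ := if b then star w else w

lemma continuous_conjIf (b : Bool) : Continuous (conjIf b : (Fin d → ℂ) → Fin d → ℂ) := by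
  cases b
  · exact continuous_id
  · exact continuous_star

lemma conjIf_not (b : Bool) (w : Fin d → ℂ) : conjIf (!b) w = star (conjIf b w) := by
  cases b <;> simp [conjIf]

lemma exists_submodule_of_isotropic {m k : ℕ} (hmd : m ≤ d) (hk : d - m = 2 * k)
    {z : Fin k → Fin d → ℂ} (hz : ∀ s, z s ≠ 0) (hbil : ∀ s t, s ≤ t → z s ⬝ᵥ z t = 0)
    (hstar : ∀ s t, s < t → z s ⬝ᵥ star (z t) = 0) :
    ∃ D : Submodule ℝ (EuclideanSpace ℝ (Fin d)), Module.finrank ℝ D = m ∧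
      ∀ v, (∀ s, realPairing (z s) v = 0) → v ∈ D := by
  have hlt : ∀ {s t}, s < t → ∀ b c, realComponent b (z s) ⬝ᵥ realComponent c (z t) = 0 :=
    fun {s t} hst => realComponent_dotProduct_realComponent (hbil s t hst.le) (hstar s t hst)
  obtain ⟨D, hD, hmem⟩ := exists_submodule_of_dotProduct_eq_zero hmd
    (w := fun t : Fin k × Bool => realComponent t.2 (z t.1)) (by simp [hk, mul_comm])
    (fun t => realComponent_ne_zero (hbil _ _ le_rfl) (hz t.1) t.2) fun ⟨s, b⟩ ⟨t, c⟩ hne => by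
      rcases lt_trichotomy s t with h | rfl | h
      · exact hlt h b c
      · exact realComponent_dotProduct_realComponent_self (hbil _ _ le_rfl) (by simpa using hne)
      · exact (dotProduct_comm _ _).trans (hlt h c b)
  exact ⟨D, hD, fun v hv => hmem v fun t => realComponent_dotProduct_eq_zero (hv t.1) _⟩

variable {p : ℕ} [Fact p.Prime] {e : AddChar (ZMod p) ℂ}

lemma conjIf_smul (b : Bool) (k : ZMod p) (w : Fin d → ℂ) :
    conjIf b (e k • w) = e ((if b then -1 else 1) * k) • conjIf b w := by
  cases b
  · simp [conjIf]
  · simp [conjIf, AddChar.map_neg_eq_conj]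

variable (e) in
/-- For `d - m = 2 k`, frames of `k` complex vectors which are isotropic and orthogonal to each
other and to each other's conjugates. Their real and imaginary parts are an orthogonal frame of
`2 k` real vectors, whose orthogonal complement is the subspace. -/
def complexFrameSystem (hp : p ≠ 2) {d m k : ℕ} (hmd : m < d) (hk : d - m = 2 * k) :
    FrameSystem e d m where
  size := k
  Functional := Fin k × Bool
  functional t z := conjIf t.2 (z t.1)
  continuous_functional t := (continuous_conjIf t.2).comp (continuous_apply t.1)
  functionalWeight t := Pi.single t.1 (if t.2 then -1 else 1)
  functional_smul t z h := by rw [conjIf_smul, single_dotProduct]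
  conj t := (t.1, !t.2)
  functional_conj t z := conjIf_not t.2 (z t.1)
  Equation := {a : Fin k × Fin k × Bool // a.1 < a.2.1 ∨ (a.1 = a.2.1 ∧ a.2.2 = false)}
  equation a z := z a.1.1 ⬝ᵥ conjIf a.1.2.2 (z a.1.2.1)
  continuous_equation a :=
    (continuous_apply a.1.1).dotProduct ((continuous_conjIf a.1.2.2).comp (continuous_apply _))
  equationWeight a := Pi.single a.1.1 1 + Pi.single a.1.2.1 (if a.1.2.2 then -1 else 1)
  equation_smul a z h := by
    simp only [conjIf_smul, add_dotProduct, single_dotProduct, AddChar.map_add_eq_mul, one_mul,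
      smul_dotProduct, dotProduct_smul, smul_eq_mul, mul_assoc]
    exact mul_left_comm _ _ _
  lead a := a.1.1
  equationWeight_lead := by
    rintro ⟨⟨s, t, b⟩, hst | hst⟩
    · simp [(show s < t from hst).ne]
    · obtain ⟨rfl, rfl⟩ : s = t ∧ b = false := hst
      simpa [one_add_one_eq_two] using
        Ring.two_ne_zero (R := ZMod p) (by rwa [ZMod.ringChar_zmod_n])
  lead_lt a s hs hw := by
    obtain rfl : s = a.1.2.1 := by
      by_contra h
      simp [hs, h] at hw
    exact a.2.resolve_right fun h => hs h.1.symm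
  card_functional := by simp [hk, mul_comm]
  card_lead_lt s := (card_filter_fst_eq_lt (b := (s, true)) (by simp)).trans_eq
    (by simp [hk, mul_comm])
  exists_submodule z hz hort := by
    obtain ⟨D, hD, hmem⟩ := exists_submodule_of_isotropic hmd.le hk hz
      (fun s t hst => hort ⟨(s, t, false), hst.lt_or_eq.imp_right fun h => ⟨h, rfl⟩⟩)
      fun s t hst => hort ⟨(s, t, true), Or.inl hst⟩
    exact ⟨D, hD, fun v hv => hmem v fun s => hv (s, false)⟩
  functional_eq_zero := Or.inr fun z v h ⟨s, b⟩ => by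
    cases b
    · exact h s
    · exact (realPairing_star (z s) v).trans ((congrArg _ (h s)).trans (map_zero _))

end ComplexFrames

section FrameVector

variable {p : ℕ} {𝕂 : Type*} [RCLike 𝕂]

/-- Nonnegative combinations of at most `q` values of the character `e` do not cancel. -/
def NoCancellation (e : AddChar (ZMod p) 𝕂) (q : ℕ) : Prop :=
  ∀ {n : ℕ} {A : Finset (Fin n)}, A.card ≤ q → ∀ {a : Fin n → ℝ} {h : Fin n → ZMod p},
    (∀ k, 0 ≤ a k) → ∑ k ∈ A, (a k : 𝕂) * e (h k) = 0 → ∀ k ∈ A, a k = 0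

lemma noCancellation_one {e : AddChar (ZMod p) 𝕂} : NoCancellation e 1 := by
  intro n A hA a h _ hsum k hk
  obtain rfl : A = {k} := Finset.eq_singleton_iff_unique_mem.2
    ⟨hk, fun k' hk' => Finset.card_le_one.1 hA k' hk' k hk⟩
  rw [Finset.sum_singleton] at hsum
  exact_mod_cast (mul_eq_zero.1 hsum).resolve_right (e.val_isUnit _).ne_zero

variable [NeZero p]

/-- The vector of `𝕂^d` read off from a point `x` of a join of copies of `ℤ/p`: the vertices
`q i, …, q i + q - 1` of the simplex contribute to the coordinate `i`. -/
def frameVector (e : AddChar (ZMod p) 𝕂) (q d : ℕ) {n : ℕ} (x : Fin n → (Fin 1 → ZMod p) → ℝ) :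
    Fin d → 𝕂 := fun i =>
  ∑ k ∈ Finset.univ.filter fun k : Fin n => (k : ℕ) / q = i, ∑ h, (x k h : 𝕂) * e (h 0)

variable {e : AddChar (ZMod p) 𝕂} {q d n : ℕ}

lemma continuous_frameVector :
    Continuous (frameVector e q d : (Fin n → (Fin 1 → ZMod p) → ℝ) → Fin d → 𝕂) := by
  unfold frameVector
  refine continuous_pi fun i => continuous_finsetSum _ fun k _ => continuous_finsetSum _ fun h _ =>
    (RCLike.continuous_ofReal.comp ?_).mul continuous_const
  fun_prop

lemma frameVector_comp_sub (x : Fin n → (Fin 1 → ZMod p) → ℝ) (g : Fin 1 → ZMod p) :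
    frameVector e q d (fun k h => x k (h - g)) = e (g 0) • frameVector e q d x := by
  funext i
  simp only [frameVector, Pi.smul_apply, smul_eq_mul, Finset.mul_sum]
  refine Finset.sum_congr rfl fun k _ => Fintype.sum_equiv (Equiv.subRight g) _ _ fun h => ?_
  rw [mul_left_comm, ← AddChar.map_add_eq_mul]
  simp

lemma noCancellation_two (hp : Odd p) : NoCancellation e 2 := by
  intro n A hA a h ha hsum k hk
  rcases hA.lt_or_eq with hlt | heq
  · exact noCancellation_one (Nat.lt_succ_iff.1 hlt) ha hsum k hk
  obtain ⟨k₁, k₂, hne, rfl⟩ := Finset.card_eq_two.1 heq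
  have hroot : ∀ k, e k ^ p = 1 := fun k => by
    rw [← AddChar.map_nsmul_eq_pow, nsmul_eq_mul, CharP.cast_eq_zero, zero_mul,
      AddChar.map_zero_eq_one]
  rw [Finset.sum_pair hne] at hsum
  -- taking `p`-th powers removes the roots of unity
  have hpow : a k₁ ^ p = -a k₂ ^ p := by
    have := congrArg (· ^ p) (eq_neg_of_add_eq_zero_left hsum)
    simp only [mul_pow, hroot, mul_one, hp.neg_pow] at this
    exact_mod_cast this
  have h₁ := pow_nonneg (ha k₁) p
  have h₂ := pow_nonneg (ha k₂) p
  rcases Finset.mem_insert.1 hk with rfl | hk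
  · exact (pow_eq_zero_iff (NeZero.ne p)).1 (by linarith)
  · rw [Finset.mem_singleton.1 hk]
    exact (pow_eq_zero_iff (NeZero.ne p)).1 (by linarith)

lemma exists_eq_zero_of_ne_of_mul_eq_zero {G : Type*} [Nonempty G] {y : G → ℝ}
    (hy : ∀ h h', h ≠ h' → y h * y h' = 0) : ∃ h, ∀ h', h' ≠ h → y h' = 0 := by
  by_cases hex : ∃ h, y h ≠ 0
  · obtain ⟨h, hh⟩ := hex
    exact ⟨h, fun h' hne => (mul_eq_zero.1 (hy h' h hne)).resolve_right hh⟩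
  · push Not at hex
    exact ⟨Classical.arbitrary G, fun h' _ => hex h'⟩

lemma card_filter_div_eq_le (hq : 0 < q) (i : ℕ) :
    (Finset.univ.filter fun k : Fin n => (k : ℕ) / q = i).card ≤ q := by
  calc _ ≤ (Finset.Ico (q * i) (q * i + q)).card := by
        refine Finset.card_le_card_of_injOn (fun k : Fin n => (k : ℕ)) ?_ Fin.val_injective.injOn
        intro k hk
        obtain rfl : (k : ℕ) / q = i := by simpa using hk
        exact Finset.mem_coe.2 (Finset.mem_Ico.2 ⟨Nat.mul_div_le _ _, Nat.lt_mul_div_succ _ hq⟩)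
    _ = q := by simp

lemma frameVector_ne_zero (hq : 0 < q) (hn : n ≤ q * d) (hcancel : NoCancellation e q)
    {x : Fin n → (Fin 1 → ZMod p) → ℝ} (hx : ∀ k h, 0 ≤ x k h) (hx0 : x ≠ 0)
    (hmul : ∀ k h h', h ≠ h' → x k h * x k h' = 0) : frameVector e q d x ≠ 0 := by
  intro hzero
  choose label hlabel using fun k => exists_eq_zero_of_ne_of_mul_eq_zero (hmul k)
  have hsum : ∀ k, ∑ h, (x k h : 𝕂) * e (h 0) = (x k (label k) : 𝕂) * e (label k 0) := fun k =>
    Fintype.sum_eq_single _ fun h hne => by rw [hlabel k h hne, RCLike.ofReal_zero, zero_mul]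
  refine hx0 (funext₂ fun k h => ?_)
  by_cases hh : h = label k
  · have hcoord := congrFun hzero ⟨(k : ℕ) / q, Nat.div_lt_of_lt_mul (k.2.trans_le hn)⟩
    simp only [frameVector, hsum, Pi.zero_apply] at hcoord
    rw [hh]
    exact hcancel (card_filter_div_eq_le hq _) (fun k => hx k (label k)) hcoord k (by simp)
  · exact hlabel k h hh

end FrameVector

/-! ### Test functions on the configuration space -/

section Configurations

variable {p m : ℕ}

/-- The ranks of the groups acting on the configuration space: one copy of `ℤ/p` for each of the
`S` vectors of a frame and `(ℤ/p)^(r ℓ)` for the simplex `ℓ`. -/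
abbrev configRank (S : ℕ) (r : Fin (m + 1) → ℕ) : Fin S ⊕ Fin (m + 1) → ℕ :=
  Sum.elim (fun _ => 1) r

/-- The dimensions of the simplices of which the configuration space is made: `n` for each of the
`S` vectors of a frame and `N ℓ` for the simplex `ℓ`. -/
abbrev configDim (S n : ℕ) (N : Fin (m + 1) → ℕ) : Fin S ⊕ Fin (m + 1) → ℕ :=
  Sum.elim (fun _ => n) N

/-- The ambient space of the pairs of a frame of `S` vectors and, for each `ℓ`, a family of
pairwise disjoint faces of the simplex `ℓ`, indexed by `(ℤ/p)^(r ℓ)`, with a point in each. -/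
abbrev ConfigSpace (p S n : ℕ) (r N : Fin (m + 1) → ℕ) : Type :=
  JoinSpace p (configRank S r) (configDim S n N)

variable {S n : ℕ} {r N : Fin (m + 1) → ℕ}

/-- The component in the frame blocks of an element of the group of the configuration space. -/
def frameShift (g : CyclicIndex (configRank S r) → ZMod p) (s : Fin S) : ZMod p :=
  g ⟨Sum.inl s, (0 : Fin 1)⟩

/-- The component in the block of the simplex `ℓ` of an element of the group of the configuration
space. -/
def simplexShift (g : CyclicIndex (configRank S r) → ZMod p) (ℓ : Fin (m + 1)) :
    Fin (r ℓ) → ZMod p := fun j => g ⟨Sum.inr ℓ, j⟩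

/-- The character of the group of the configuration space with given components. -/
def blockCharacter (A : Fin S → ZMod p) (D : ∀ ℓ, Fin (r ℓ) → ZMod p) :
    CyclicIndex (configRank S r) → ZMod p
  | ⟨Sum.inl s, _⟩ => A s
  | ⟨Sum.inr ℓ, j⟩ => D ℓ j

lemma blockCharacter_dotProduct (A : Fin S → ZMod p) (D : ∀ ℓ, Fin (r ℓ) → ZMod p)
    (g : CyclicIndex (configRank S r) → ZMod p) :
    blockCharacter A D ⬝ᵥ g = A ⬝ᵥ frameShift g + ∑ ℓ, D ℓ ⬝ᵥ simplexShift g ℓ := by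
  rw [dotProduct, Fintype.sum_sigma, Fintype.sum_sum_type]
  exact congrArg (· + _) (Finset.sum_congr rfl fun s _ => Fin.sum_univ_one _)

lemma blockCharacter_single_dotProduct (A : Fin S → ZMod p) (ℓ : Fin (m + 1))
    (χ : Fin (r ℓ) → ZMod p) (g : CyclicIndex (configRank S r) → ZMod p) :
    blockCharacter A (Pi.single ℓ χ) ⬝ᵥ g = A ⬝ᵥ frameShift g + χ ⬝ᵥ simplexShift g ℓ := by
  rw [blockCharacter_dotProduct, Fintype.sum_eq_single ℓ, Pi.single_eq_same]
  intro ℓ' h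
  rw [Pi.single_eq_of_ne h, zero_dotProduct]

/-- The barycentric coordinates of the point of the configuration `x` in the face with index `g`
of the simplex `ℓ`, up to a positive factor. -/
def vertexWeights (x : ConfigSpace p S n r N) (ℓ : Fin (m + 1)) (g : Fin (r ℓ) → ZMod p) :
    Fin (N ℓ + 1) → ℝ := fun k => x (Sum.inr ℓ) k g

lemma continuous_vertexWeights (ℓ : Fin (m + 1)) (g : Fin (r ℓ) → ZMod p) :
    Continuous fun x : ConfigSpace p S n r N => vertexWeights x ℓ g := by
  unfold vertexWeights
  fun_prop

variable [NeZero p] {𝕂 : Type*} [RCLike 𝕂] {d : ℕ}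

/-- The vectors encoded by the frame blocks of a configuration. -/
def frameVectors (e : AddChar (ZMod p) 𝕂) (q d : ℕ) (x : ConfigSpace p S n r N) (s : Fin S) :
    Fin d → 𝕂 := frameVector e q d (x (Sum.inl s))

lemma continuous_frameVectors {e : AddChar (ZMod p) 𝕂} {q : ℕ} :
    Continuous (frameVectors e q d : ConfigSpace p S n r N → Fin S → Fin d → 𝕂) :=
  continuous_pi fun s => continuous_frameVector.comp (continuous_apply (Sum.inl s))

lemma frameVectors_translateJoin {e : AddChar (ZMod p) 𝕂} {q : ℕ}
    (g : CyclicIndex (configRank S r) → ZMod p) (x : ConfigSpace p S n r N) :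
    frameVectors e q d (translateJoin g x) =
      fun s => e (frameShift g s) • frameVectors e q d x s :=
  funext fun s => frameVector_comp_sub (x (Sum.inl s)) (blockComponent g (Sum.inl s))

variable (f : ∀ ℓ : Fin (m + 1), EuclideanSpace ℝ (Fin (N ℓ + 1)) → EuclideanSpace ℝ (Fin d))

/-- The image under `f ℓ` of the point of the configuration `x` in the face with index `g`,
weighted by the total weight of that face. -/
def weightedImage (x : ConfigSpace p S n r N) (ℓ : Fin (m + 1)) (g : Fin (r ℓ) → ZMod p) :
    EuclideanSpace ℝ (Fin d) := homogeneousExtension (f ℓ) (vertexWeights x ℓ g)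

/-- The barycenter of the weighted images in the block of the simplex `ℓ`. -/
def imageBarycenter (x : ConfigSpace p S n r N) (ℓ : Fin (m + 1)) : EuclideanSpace ℝ (Fin d) :=
  ∑ g, weightedImage f x ℓ g

lemma imageBarycenter_translateJoin (g : CyclicIndex (configRank S r) → ZMod p)
    (x : ConfigSpace p S n r N) (ℓ : Fin (m + 1)) :
    imageBarycenter f (translateJoin g x) ℓ = imageBarycenter f x ℓ :=
  Fintype.sum_equiv (Equiv.subRight (simplexShift g ℓ)) _ _ fun _ => rfl

variable {f}

lemma continuousOn_weightedImage {ℓ : Fin (m + 1)} (hf : ContinuousOn (f ℓ) (stdSimp (N ℓ)))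
    (g : Fin (r ℓ) → ZMod p) :
    ContinuousOn (fun x : ConfigSpace p S n r N => weightedImage f x ℓ g)
      (joinProduct p (configRank S r) (configDim S n N)) :=
  (continuousOn_homogeneousExtension hf).comp (continuous_vertexWeights ℓ g).continuousOn
    fun _ hx k => IsJoinPoint.nonneg hx (Sum.inr ℓ) k g

lemma continuousOn_imageBarycenter {ℓ : Fin (m + 1)} (hf : ContinuousOn (f ℓ) (stdSimp (N ℓ))) :
    ContinuousOn (fun x : ConfigSpace p S n r N => imageBarycenter f x ℓ)
      (joinProduct p (configRank S r) (configDim S n N)) :=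
  continuousOn_finsetSum _ fun g _ => continuousOn_weightedImage hf g

end Configurations

section FaceInvariants

variable {p m d n c : ℕ} [NeZero p] {𝕂 : Type*} [RCLike 𝕂] {e : AddChar (ZMod p) 𝕂}
  {r N : Fin (m + 1) → ℕ} (Φ : FrameSystem e d m)

/-- The labels of the quantities attached to each face of a configuration: its total weight, its
color excess for each of the `c` colors, and the functionals of `Φ` on its weighted image. -/
abbrev InvariantIndex (c : ℕ) : Type := Option (Fin c) ⊕ Φ.Functional

variable (q : ℕ) (C : ∀ ℓ : Fin (m + 1), Fin c → Finset (Fin (N ℓ + 1)))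
  (f : ∀ ℓ : Fin (m + 1), EuclideanSpace ℝ (Fin (N ℓ + 1)) → EuclideanSpace ℝ (Fin d))

/-- The quantities attached to the faces of a configuration which do not depend on the face when
the configuration is balanced. -/
def faceInvariant (x : ConfigSpace p Φ.size n r N) (ℓ : Fin (m + 1)) :
    InvariantIndex Φ c → (Fin (r ℓ) → ZMod p) → 𝕂
  | Sum.inl none, g => ((∑ k, vertexWeights x ℓ g k : ℝ) : 𝕂)
  | Sum.inl (some i), g => (colorExcess (C ℓ i) (vertexWeights x ℓ g) : 𝕂)
  | Sum.inr t, g => realPairing (Φ.functional t (frameVectors e q d x)) (weightedImage f x ℓ g)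

variable {Φ}

/-- The weight of an invariant under the group of the frame blocks. -/
def invariantWeight : InvariantIndex Φ c → Fin Φ.size → ZMod p
  | Sum.inl _ => 0
  | Sum.inr t => Φ.functionalWeight t

/-- The label of the complex conjugate of an invariant. -/
def conjInvariant : InvariantIndex Φ c → InvariantIndex Φ c
  | Sum.inl o => Sum.inl o
  | Sum.inr t => Sum.inr (Φ.conj t)

variable {q C f}

lemma faceInvariant_translateJoin (g : CyclicIndex (configRank Φ.size r) → ZMod p)
    (x : ConfigSpace p Φ.size n r N) (ℓ : Fin (m + 1)) (o : InvariantIndex Φ c)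
    (h : Fin (r ℓ) → ZMod p) :
    faceInvariant Φ q C f (translateJoin g x) ℓ o h = e (invariantWeight o ⬝ᵥ frameShift g) *
      faceInvariant Φ q C f x ℓ o (h - simplexShift g ℓ) := by
  rcases o with (_ | i) | t
  · simp only [invariantWeight, zero_dotProduct, AddChar.map_zero_eq_one, one_mul]
    rfl
  · simp only [invariantWeight, zero_dotProduct, AddChar.map_zero_eq_one, one_mul]
    rfl
  · simp only [faceInvariant, frameVectors_translateJoin, Φ.functional_smul, realPairing_smul]
    rfl

lemma faceInvariant_conjInvariant (x : ConfigSpace p Φ.size n r N) (ℓ : Fin (m + 1))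
    (o : InvariantIndex Φ c) (g : Fin (r ℓ) → ZMod p) :
    faceInvariant Φ q C f x ℓ (conjInvariant o) g =
      starRingEnd 𝕂 (faceInvariant Φ q C f x ℓ o g) := by
  rcases o with (_ | i) | t
  · exact (RCLike.conj_ofReal _).symm
  · exact (RCLike.conj_ofReal _).symm
  · simp only [conjInvariant, faceInvariant, Φ.functional_conj, realPairing_star]

lemma fourierCoefficient_faceInvariant_translateJoin
    (g : CyclicIndex (configRank Φ.size r) → ZMod p) (x : ConfigSpace p Φ.size n r N)
    (ℓ : Fin (m + 1)) (o : InvariantIndex Φ c) (χ : Fin (r ℓ) → ZMod p) :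
    fourierCoefficient e χ (faceInvariant Φ q C f (translateJoin g x) ℓ o) =
      e (invariantWeight o ⬝ᵥ frameShift g + χ ⬝ᵥ simplexShift g ℓ) *
        fourierCoefficient e χ (faceInvariant Φ q C f x ℓ o) := by
  rw [funext (faceInvariant_translateJoin g x ℓ o), fourierCoefficient_const_mul,
    fourierCoefficient_comp_sub, AddChar.map_add_eq_mul, mul_assoc]

lemma fourierCoefficient_neg_conjInvariant (x : ConfigSpace p Φ.size n r N) (ℓ : Fin (m + 1))
    (o : InvariantIndex Φ c) (χ : Fin (r ℓ) → ZMod p) :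
    fourierCoefficient e (-χ) (faceInvariant Φ q C f x ℓ o) =
      starRingEnd 𝕂 (fourierCoefficient e χ (faceInvariant Φ q C f x ℓ (conjInvariant o))) := by
  rw [fourierCoefficient_neg, funext (faceInvariant_conjInvariant x ℓ o)]

lemma continuousOn_faceInvariant (hf : ∀ ℓ, ContinuousOn (f ℓ) (stdSimp (N ℓ))) (ℓ : Fin (m + 1))
    (o : InvariantIndex Φ c) (g : Fin (r ℓ) → ZMod p) :
    ContinuousOn (fun x : ConfigSpace p Φ.size n r N => faceInvariant Φ q C f x ℓ o g)
      (joinProduct p (configRank Φ.size r) (configDim Φ.size n N)) := by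
  have hw := continuous_vertexWeights (S := Φ.size) (n := n) (N := N) ℓ g
  rcases o with (_ | i) | t
  · exact (RCLike.continuous_ofReal.comp
      (continuous_finsetSum _ fun k _ => (continuous_apply k).comp hw)).continuousOn
  · exact (RCLike.continuous_ofReal.comp ((continuous_colorExcess _).comp hw)).continuousOn
  · exact continuousOn_realPairing
      ((Φ.continuous_functional t).comp continuous_frameVectors).continuousOn
      (continuousOn_weightedImage (hf ℓ) g)

end FaceInvariants

lemma exists_ne_zero_and_forall_lt {α M : Type*} [Finite α] [LinearOrder α] [Zero M] {χ : α → M}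
    (hχ : χ ≠ 0) : ∃ j, χ j ≠ 0 ∧ ∀ j', j' ≠ j → χ j' ≠ 0 → j < j' := by
  classical
  have := Fintype.ofFinite α
  have hne : (Finset.univ.filter fun j => χ j ≠ 0).Nonempty := by
    simpa [Finset.filter_nonempty_iff] using Function.ne_iff.1 hχ
  exact ⟨_, (Finset.mem_filter.1 (Finset.min'_mem _ hne)).2, fun j' hj' hχj' =>
    (Finset.min'_le _ _ (by simpa using hχj')).lt_of_ne hj'.symm⟩

section TestFunctions

variable {p m d n c : ℕ} {𝕂 : Type*} [RCLike 𝕂] {e : AddChar (ZMod p) 𝕂}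
  {r N : Fin (m + 1) → ℕ} (Φ : FrameSystem e d m) (c)
  (H : ∀ ℓ, Finset (Fin (r ℓ) → ZMod p))

/-- The labels of the test functions: the Fourier coefficients at the characters in `H ℓ` of the
invariants of the faces of the simplex `ℓ`, the equations of `Φ`, and the pairings of the vectors
of the frame with the differences of two image barycenters. -/
abbrev TestIndex : Type :=
  (Σ ℓ, H ℓ × InvariantIndex Φ c) ⊕ Φ.Equation ⊕ Fin Φ.size × Fin m

variable {Φ c H}

/-- The character by which the group of the configuration space acts on a test function. -/
def testCharacter : TestIndex Φ c H → CyclicIndex (configRank Φ.size r) → ZMod p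
  | Sum.inl ⟨ℓ, χ, o⟩ => blockCharacter (invariantWeight o) (Pi.single ℓ χ.1)
  | Sum.inr (Sum.inl a) => blockCharacter (Φ.equationWeight a) 0
  | Sum.inr (Sum.inr (s, _)) => blockCharacter (Pi.single s 1) 0

/-- The leading coordinate of the character of a test function, given those of the characters in
`H ℓ`. -/
def testLead (lead : ∀ ℓ, H ℓ → Fin (r ℓ)) : TestIndex Φ c H → CyclicIndex (configRank Φ.size r)
  | Sum.inl ⟨ℓ, χ, _⟩ => ⟨Sum.inr ℓ, lead ℓ χ⟩
  | Sum.inr (Sum.inl a) => ⟨Sum.inl (Φ.lead a), (0 : Fin 1)⟩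
  | Sum.inr (Sum.inr (s, _)) => ⟨Sum.inl s, (0 : Fin 1)⟩

/-- An order of the coordinates in which the frame blocks come after the simplex blocks. -/
def coordinateRank {S : ℕ} : CyclicIndex (configRank S r) → ℕ
  | ⟨Sum.inl s, _⟩ => (∑ ℓ, r ℓ) + s
  | ⟨Sum.inr ℓ, j⟩ => (j : Fin (r ℓ))

lemma coordinateRank_inr_lt_coordinateRank_inl {S : ℕ} (ℓ : Fin (m + 1)) (j : Fin (r ℓ))
    (s : Fin S) : coordinateRank (⟨Sum.inr ℓ, j⟩ : CyclicIndex (configRank S r)) <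
      coordinateRank (⟨Sum.inl s, (0 : Fin 1)⟩ : CyclicIndex (configRank S r)) :=
  j.2.trans_le ((Finset.single_le_sum (fun _ _ => Nat.zero_le _) (Finset.mem_univ ℓ)).trans
    (Nat.le_add_right _ _))

lemma testCharacter_testLead_ne_zero [NeZero (1 : ZMod p)] {lead : ∀ ℓ, H ℓ → Fin (r ℓ)}
    (hlead : ∀ ℓ (χ : H ℓ), χ.1 (lead ℓ χ) ≠ 0) (b : TestIndex Φ c H) :
    testCharacter b (testLead lead b) ≠ 0 := by
  rcases b with ⟨ℓ, χ, _⟩ | a | ⟨s, _⟩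
  · exact (congrFun (Pi.single_eq_same (M := fun ℓ => Fin (r ℓ) → ZMod p) ℓ χ.1) _).trans_ne
      (hlead ℓ χ)
  · exact Φ.equationWeight_lead a
  · exact (Pi.single_eq_same (M := fun _ => ZMod p) s 1).trans_ne (NeZero.ne 1)

lemma coordinateRank_testLead_lt {lead : ∀ ℓ, H ℓ → Fin (r ℓ)}
    (hlead : ∀ ℓ (χ : H ℓ) j, j ≠ lead ℓ χ → χ.1 j ≠ 0 → lead ℓ χ < j) (b : TestIndex Φ c H)
    {i : CyclicIndex (configRank Φ.size r)} (hi : i ≠ testLead lead b)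
    (hb : testCharacter b i ≠ 0) : coordinateRank (testLead lead b) < coordinateRank i := by
  rcases b with ⟨ℓ, χ, o⟩ | a | ⟨s, ℓ⟩ <;> rcases i with ⟨s' | ℓ', j⟩
  · exact coordinateRank_inr_lt_coordinateRank_inl ℓ _ s'
  · replace hb : (Pi.single ℓ χ.1 : ∀ ℓ, Fin (r ℓ) → ZMod p) ℓ' j ≠ 0 := hb
    obtain rfl : ℓ' = ℓ := by
      by_contra h
      rw [Pi.single_eq_of_ne h] at hb
      exact hb rfl
    rw [Pi.single_eq_same] at hb
    exact hlead ℓ' χ j (fun h => hi (congrArg _ h)) hb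
  · obtain rfl : j = (0 : Fin 1) := Subsingleton.elim (α := Fin 1) _ _
    exact Nat.add_lt_add_left (Φ.lead_lt a s' (fun h => hi (by rw [h]; rfl)) hb) _
  · exact absurd rfl hb
  · obtain rfl : j = (0 : Fin 1) := Subsingleton.elim (α := Fin 1) _ _
    exact absurd (Pi.single_eq_of_ne (fun h => hi (by rw [h]; rfl)) 1) hb
  · exact absurd rfl hb

lemma card_testLead_inl_lt (lead : ∀ ℓ, H ℓ → Fin (r ℓ)) (s : Fin Φ.size) :
    (Finset.univ.filter fun b : TestIndex Φ c H => (testLead lead b).1 = Sum.inl s).card <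
      d - m + m := by
  have hfunctional := Φ.card_lead_lt s
  rw [Finset.card_filter] at hfunctional ⊢
  rw [Fintype.sum_sum_type, Fintype.sum_sum_type, Fintype.sum_prod_type]
  simpa [testLead] using hfunctional

lemma card_testLead_inr (lead : ∀ ℓ, H ℓ → Fin (r ℓ)) (ℓ : Fin (m + 1)) :
    (Finset.univ.filter fun b : TestIndex Φ c H => (testLead lead b).1 = Sum.inr ℓ).card =
      (H ℓ).card * (c + 1 + (d - m)) := by
  rw [Finset.card_filter, Fintype.sum_sum_type, Fintype.sum_sum_type, Fintype.sum_sigma,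
    Fintype.sum_eq_single ℓ (fun ℓ' h => by simp [testLead, h])]
  simp [testLead, Φ.card_functional]

variable [NeZero p] (q : ℕ) (C : ∀ ℓ : Fin (m + 1), Fin c → Finset (Fin (N ℓ + 1)))
  (f : ∀ ℓ : Fin (m + 1), EuclideanSpace ℝ (Fin (N ℓ + 1)) → EuclideanSpace ℝ (Fin d))

/-- The test functions, whose common zeros are the balanced configurations. -/
def testFunction : TestIndex Φ c H → ConfigSpace p Φ.size n r N → 𝕂
  | Sum.inl ⟨ℓ, χ, o⟩, x => fourierCoefficient e χ.1 (faceInvariant Φ q C f x ℓ o)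
  | Sum.inr (Sum.inl a), x => Φ.equation a (frameVectors e q d x)
  | Sum.inr (Sum.inr (s, ℓ)), x => realPairing (frameVectors e q d x s)
      (imageBarycenter f x ℓ.succ - imageBarycenter f x 0)

variable {f}

lemma continuousOn_testFunction (hf : ∀ ℓ, ContinuousOn (f ℓ) (stdSimp (N ℓ)))
    (b : TestIndex Φ c H) :
    ContinuousOn (testFunction q C f b)
      (joinProduct p (configRank Φ.size r) (configDim Φ.size n N)) := by
  rcases b with ⟨ℓ, χ, o⟩ | a | ⟨s, ℓ⟩
  · exact continuousOn_finsetSum _ fun g _ =>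
      continuousOn_const.mul (continuousOn_faceInvariant hf ℓ o g)
  · exact ((Φ.continuous_equation a).comp continuous_frameVectors).continuousOn
  · exact continuousOn_realPairing
      ((continuous_apply s).comp continuous_frameVectors).continuousOn
      ((continuousOn_imageBarycenter (hf _)).sub (continuousOn_imageBarycenter (hf _)))

lemma testFunction_translateJoin (b : TestIndex Φ c H)
    (g : CyclicIndex (configRank Φ.size r) → ZMod p) (x : ConfigSpace p Φ.size n r N) :
    testFunction q C f b (translateJoin g x) =
      e (testCharacter b ⬝ᵥ g) * testFunction q C f b x := by
  rcases b with ⟨ℓ, χ, o⟩ | a | ⟨s, ℓ⟩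
  · simp only [testFunction, testCharacter, blockCharacter_single_dotProduct,
      fourierCoefficient_faceInvariant_translateJoin]
  · simp only [testFunction, testCharacter, blockCharacter_dotProduct, Pi.zero_apply,
      zero_dotProduct, Finset.sum_const_zero, add_zero, frameVectors_translateJoin,
      Φ.equation_smul]
  · simp only [testFunction, testCharacter, blockCharacter_dotProduct, Pi.zero_apply,
      zero_dotProduct, Finset.sum_const_zero, add_zero, frameVectors_translateJoin,
      single_dotProduct, one_mul, imageBarycenter_translateJoin, realPairing_smul]

end TestFunctions

section BalancedConfigurations

variable {p m d n c : ℕ} [Fact p.Prime] {𝕂 : Type*} [RCLike 𝕂] {e : AddChar (ZMod p) 𝕂}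
  {r N : Fin (m + 1) → ℕ} (Φ : FrameSystem e d m) (q : ℕ)
  (C : ∀ ℓ : Fin (m + 1), Fin c → Finset (Fin (N ℓ + 1)))
  (f : ∀ ℓ : Fin (m + 1), EuclideanSpace ℝ (Fin (N ℓ + 1)) → EuclideanSpace ℝ (Fin d))

/-- A configuration whose face invariants do not depend on the face, whose frame solves the
equations of `Φ`, and whose image barycenters are not separated by the frame. -/
structure IsBalanced (x : ConfigSpace p Φ.size n r N) : Prop where
  isJoinPoint : IsJoinPoint x
  card_mul_faceInvariant : ∀ ℓ o g,
    (p : 𝕂) ^ r ℓ * faceInvariant Φ q C f x ℓ o g = ∑ g', faceInvariant Φ q C f x ℓ o g'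
  equation_eq_zero : ∀ a, Φ.equation a (frameVectors e q d x) = 0
  realPairing_sub_eq_zero : ∀ s (ℓ : Fin m), realPairing (frameVectors e q d x s)
    (imageBarycenter f x ℓ.succ - imageBarycenter f x 0) = 0

variable {Φ q C f}

lemma fourierCoefficient_faceInvariant_eq_zero {x : ConfigSpace p Φ.size n r N}
    {H : ∀ ℓ, Finset (Fin (r ℓ) → ZMod p)} (hH : ∀ ℓ, RepresentsUpToSign (H ℓ))
    (hx : ∀ ℓ, ∀ χ ∈ H ℓ, ∀ o, fourierCoefficient e χ (faceInvariant Φ q C f x ℓ o) = 0)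
    (ℓ : Fin (m + 1)) (o : InvariantIndex Φ c) (χ : Fin (r ℓ) → ZMod p) (hχ : χ ≠ 0) :
    fourierCoefficient e χ (faceInvariant Φ q C f x ℓ o) = 0 := by
  rcases (hH ℓ).mem_or_neg_mem χ hχ with h | h
  · exact hx ℓ χ h o
  · rw [← neg_neg χ, fourierCoefficient_neg_conjInvariant, hx ℓ _ h, map_zero]

lemma exists_isBalanced (hBU : BorsukUlamProperty q e) (he : e ≠ 1) (hmd : m < d)
    (hf : ∀ ℓ, ContinuousOn (f ℓ) (stdSimp (N ℓ))) {H : ∀ ℓ, Finset (Fin (r ℓ) → ZMod p)}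
    (hH : ∀ ℓ, RepresentsUpToSign (H ℓ))
    (hN : ∀ ℓ, q * (H ℓ).card * (c + 1 + (d - m)) ≤ N ℓ) (hn : q * (d - 1) ≤ n) :
    ∃ x : ConfigSpace p Φ.size n r N, IsBalanced Φ q C f x := by
  choose lead hlead hlt using fun ℓ (χ : H ℓ) =>
    exists_ne_zero_and_forall_lt ((hH ℓ).ne_zero χ.1 χ.2)
  have hcard : ∀ β, q * (Finset.univ.filter fun b : TestIndex Φ c H => (testLead lead b).1 = β).card
      ≤ configDim Φ.size n N β := by
    rintro (s | ℓ)
    · have := card_testLead_inl_lt (c := c) lead s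
      exact (Nat.mul_le_mul_left q (by omega)).trans hn
    · rw [card_testLead_inr, ← mul_assoc]
      exact hN ℓ
  obtain ⟨x, hx, hzero⟩ := hBU _ (configRank Φ.size r) (configDim Φ.size n N) (TestIndex Φ c H)
    testCharacter (testLead lead) coordinateRank (testCharacter_testLead_ne_zero hlead)
    (fun b i => coordinateRank_testLead_lt hlt b) hcard (testFunction q C f)
    (continuousOn_testFunction q C hf) fun b g x _ => testFunction_translateJoin q C b g x
  refine ⟨x, hx, fun ℓ o => ?_, fun a => hzero (Sum.inr (Sum.inl a)),
    fun s ℓ => hzero (Sum.inr (Sum.inr (s, ℓ)))⟩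
  have hcoeff := fourierCoefficient_faceInvariant_eq_zero hH
    (fun ℓ χ hχ o => hzero (Sum.inl ⟨ℓ, ⟨χ, hχ⟩, o⟩)) ℓ o
  simpa only [Fintype.card_fin] using
    card_mul_eq_sum_of_fourierCoefficient_eq_zero he hcoeff

end BalancedConfigurations

/-! ### From balanced configurations to transversals -/

section Transversals

variable {p m d n c q : ℕ} [Fact p.Prime] {𝕂 : Type*} [RCLike 𝕂] {e : AddChar (ZMod p) 𝕂}
  {r N : Fin (m + 1) → ℕ} {Φ : FrameSystem e d m}
  {C : ∀ ℓ : Fin (m + 1), Fin c → Finset (Fin (N ℓ + 1))}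
  {f : ∀ ℓ : Fin (m + 1), EuclideanSpace ℝ (Fin (N ℓ + 1)) → EuclideanSpace ℝ (Fin d)}
  {x : ConfigSpace p Φ.size n r N}

/-- The affine subspace `L` meets the images under `f` of pairwise disjoint rainbow faces indexed
by `ι`, where rainbow means at most one vertex in each of the sets `C i`. -/
def MeetsRainbowFaces (ι : Type*) {N : ℕ} (C : Fin c → Finset (Fin (N + 1)))
    (f : EuclideanSpace ℝ (Fin (N + 1)) → EuclideanSpace ℝ (Fin d))
    (L : AffineSubspace ℝ (EuclideanSpace ℝ (Fin d))) : Prop :=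
  ∃ σ : ι → Finset (Fin (N + 1)), (∀ j, (σ j).Nonempty) ∧ (∀ j j', j ≠ j' → Disjoint (σ j) (σ j')) ∧
    (∀ j, ∀ i : Fin c, (σ j ∩ C i).card ≤ 1) ∧
    ∀ j, (f '' simpFace N (σ j) ∩ (L : Set (EuclideanSpace ℝ (Fin d)))).Nonempty

lemma MeetsRainbowFaces.comp_equiv {ι ι' : Type*} {N : ℕ} {C : Fin c → Finset (Fin (N + 1))}
    {f : EuclideanSpace ℝ (Fin (N + 1)) → EuclideanSpace ℝ (Fin d)}
    {L : AffineSubspace ℝ (EuclideanSpace ℝ (Fin d))} (h : MeetsRainbowFaces ι C f L)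
    (E : ι' ≃ ι) : MeetsRainbowFaces ι' C f L := by
  obtain ⟨σ, hne, hdisj, hrainbow, hmeet⟩ := h
  exact ⟨σ ∘ E, fun j => hne _, fun j j' hj => hdisj _ _ (E.injective.ne hj), fun j => hrainbow _,
    fun j => hmeet _⟩

/-- The point of the configuration `x` in the face with index `g` of the simplex `ℓ`. -/
def facePoint (x : ConfigSpace p Φ.size n r N) (ℓ : Fin (m + 1)) (g : Fin (r ℓ) → ZMod p) :
    EuclideanSpace ℝ (Fin (N ℓ + 1)) :=
  WithLp.toLp 2 ((∑ k, vertexWeights x ℓ g k)⁻¹ • vertexWeights x ℓ g)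

namespace IsBalanced

lemma vertexWeights_nonneg (hx : IsBalanced Φ q C f x) (ℓ : Fin (m + 1))
    (g : Fin (r ℓ) → ZMod p) : 0 ≤ vertexWeights x ℓ g := fun k =>
  hx.isJoinPoint.nonneg (Sum.inr ℓ) k g

lemma vertexWeights_mul_eq_zero (hx : IsBalanced Φ q C f x) (ℓ : Fin (m + 1)) (k : Fin (N ℓ + 1))
    (g g' : Fin (r ℓ) → ZMod p) (h : g ≠ g') : vertexWeights x ℓ g k * vertexWeights x ℓ g' k = 0 :=
  hx.isJoinPoint.mul_eq_zero (Sum.inr ℓ) k g g' h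

lemma card_mul_sum_vertexWeights (hx : IsBalanced Φ q C f x) (ℓ : Fin (m + 1))
    (g : Fin (r ℓ) → ZMod p) : (p : ℝ) ^ r ℓ * ∑ k, vertexWeights x ℓ g k = 1 := by
  have h := hx.card_mul_faceInvariant ℓ (Sum.inl none) g
  simp only [faceInvariant] at h
  refine Eq.trans (by exact_mod_cast h) ?_
  exact Finset.sum_comm.trans (hx.isJoinPoint.sum_eq_one (Sum.inr ℓ))

lemma sum_vertexWeights_pos (hx : IsBalanced Φ q C f x) (ℓ : Fin (m + 1))
    (g : Fin (r ℓ) → ZMod p) : 0 < ∑ k, vertexWeights x ℓ g k :=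
  pos_of_mul_pos_right (zero_lt_one.trans_eq (hx.card_mul_sum_vertexWeights ℓ g).symm)
    (by positivity)

lemma colorExcess_vertexWeights_eq (hx : IsBalanced Φ q C f x) (ℓ : Fin (m + 1)) (i : Fin c)
    (g g' : Fin (r ℓ) → ZMod p) :
    colorExcess (C ℓ i) (vertexWeights x ℓ g) = colorExcess (C ℓ i) (vertexWeights x ℓ g') := by
  have hp : (p : 𝕂) ^ r ℓ ≠ 0 := pow_ne_zero _ (Nat.cast_ne_zero.2 (NeZero.ne p))
  have h := (hx.card_mul_faceInvariant ℓ (Sum.inl (some i)) g).trans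
    (hx.card_mul_faceInvariant ℓ (Sum.inl (some i)) g').symm
  exact RCLike.ofReal_injective (mul_left_cancel₀ hp h)

lemma card_vertexSupport_inter_le_one (hx : IsBalanced Φ q C f x) {ℓ : Fin (m + 1)} {i : Fin c}
    (hC : (C ℓ i).card ≤ 2 * p ^ r ℓ - 1) (g : Fin (r ℓ) → ZMod p) :
    (vertexSupport (vertexWeights x ℓ g) ∩ C ℓ i).card ≤ 1 :=
  card_vertexSupport_inter_le_one_of_colorExcess_eq (by simpa using hC) (hx.vertexWeights_nonneg ℓ)
    (hx.vertexWeights_mul_eq_zero ℓ) (hx.colorExcess_vertexWeights_eq ℓ i) g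

lemma facePoint_mem_simpFace (hx : IsBalanced Φ q C f x) (ℓ : Fin (m + 1))
    (g : Fin (r ℓ) → ZMod p) :
    facePoint x ℓ g ∈ simpFace (N ℓ) (vertexSupport (vertexWeights x ℓ g)) :=
  ⟨toLp_inv_sum_smul_mem_stdSimp (hx.vertexWeights_nonneg ℓ g) (hx.sum_vertexWeights_pos ℓ g),
    fun _ hk => mem_vertexSupport.2 (right_ne_zero_of_mul hk)⟩

lemma apply_facePoint (hx : IsBalanced Φ q C f x) (ℓ : Fin (m + 1)) (g : Fin (r ℓ) → ZMod p) :
    f ℓ (facePoint x ℓ g) = (p : ℝ) ^ r ℓ • weightedImage f x ℓ g := by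
  rw [weightedImage, homogeneousExtension, smul_smul, hx.card_mul_sum_vertexWeights, one_smul]
  rfl

lemma realPairing_apply_facePoint (hx : IsBalanced Φ q C f x) (ℓ : Fin (m + 1))
    (g : Fin (r ℓ) → ZMod p) (t : Φ.Functional) :
    realPairing (Φ.functional t (frameVectors e q d x)) (f ℓ (facePoint x ℓ g)) =
      realPairing (Φ.functional t (frameVectors e q d x)) (imageBarycenter f x ℓ) := by
  rw [hx.apply_facePoint, map_smul, imageBarycenter, map_sum, RCLike.real_smul_eq_coe_mul]
  exact_mod_cast hx.card_mul_faceInvariant ℓ (Sum.inr t) g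

lemma realPairing_imageBarycenter_sub (hx : IsBalanced Φ q C f x) (ℓ : Fin (m + 1))
    (t : Φ.Functional) : realPairing (Φ.functional t (frameVectors e q d x))
      (imageBarycenter f x ℓ - imageBarycenter f x 0) = 0 := by
  cases ℓ using Fin.cases with
  | zero => rw [sub_self, map_zero]
  | succ ℓ =>
    rcases Φ.functional_eq_zero with hm | h
    · exact absurd ℓ.2 (by omega)
    · exact h _ _ (fun s => hx.realPairing_sub_eq_zero s ℓ) t

lemma meetsRainbowFaces (hx : IsBalanced Φ q C f x) {ℓ : Fin (m + 1)}
    (hC : ∀ i, (C ℓ i).card ≤ 2 * p ^ r ℓ - 1) {L : AffineSubspace ℝ (EuclideanSpace ℝ (Fin d))}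
    (hL : ∀ g, f ℓ (facePoint x ℓ g) ∈ L) :
    MeetsRainbowFaces (Fin (p ^ r ℓ)) (C ℓ) (f ℓ) L := by
  have h : MeetsRainbowFaces (Fin (r ℓ) → ZMod p) (C ℓ) (f ℓ) L := by
    refine ⟨fun g => vertexSupport (vertexWeights x ℓ g), fun g => ?_, fun g g' hne => ?_,
      fun g i => hx.card_vertexSupport_inter_le_one (hC i) g,
      fun g => ⟨_, ⟨_, hx.facePoint_mem_simpFace ℓ g, rfl⟩, hL g⟩⟩
    · obtain ⟨k, -, hk⟩ := Finset.exists_ne_zero_of_sum_ne_zero (hx.sum_vertexWeights_pos ℓ g).ne'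
      exact ⟨k, mem_vertexSupport.2 hk⟩
    · exact Finset.disjoint_left.2 fun k hk hk' => mul_ne_zero (mem_vertexSupport.1 hk)
        (mem_vertexSupport.1 hk') (hx.vertexWeights_mul_eq_zero ℓ k g g' hne)
  exact h.comp_equiv (Fintype.equivFinOfCardEq (by simp)).symm

lemma exists_affineSubspace (hx : IsBalanced Φ q C f x) (hz : ∀ s, frameVectors e q d x s ≠ 0)
    (hC : ∀ ℓ i, (C ℓ i).card ≤ 2 * p ^ r ℓ - 1) :
    ∃ L : AffineSubspace ℝ (EuclideanSpace ℝ (Fin d)),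
      (L : Set (EuclideanSpace ℝ (Fin d))).Nonempty ∧ Module.finrank ℝ L.direction = m ∧
        ∀ ℓ, MeetsRainbowFaces (Fin (p ^ r ℓ)) (C ℓ) (f ℓ) L := by
  obtain ⟨D, hD, hmem⟩ := Φ.exists_submodule _ hz hx.equation_eq_zero
  refine ⟨AffineSubspace.mk' (imageBarycenter f x 0) D, ⟨_, AffineSubspace.self_mem_mk' _ _⟩,
    by rwa [AffineSubspace.direction_mk'],
    fun ℓ => hx.meetsRainbowFaces (hC ℓ) fun g => AffineSubspace.mem_mk'.2 (hmem _ fun t => ?_)⟩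
  rw [vsub_eq_sub, map_sub, hx.realPairing_apply_facePoint, ← map_sub]
  exact hx.realPairing_imageBarycenter_sub ℓ t

end IsBalanced

lemma frameVectors_ne_zero {S : ℕ} {x : ConfigSpace p S n r N} (hx : IsJoinPoint x) (hq : 0 < q)
    (hn : n < q * d) (hcancel : NoCancellation e q) (s : Fin S) :
    frameVectors e q d x s ≠ 0 := by
  refine frameVector_ne_zero hq hn hcancel (hx.nonneg (Sum.inl s)) (fun h => ?_)
    (hx.mul_eq_zero (Sum.inl s))
  exact zero_ne_one <| (Finset.sum_eq_zero fun k _ => Finset.sum_eq_zero fun g _ =>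
    congrFun₂ h k g).symm.trans (hx.sum_eq_one (Sum.inl s))

theorem exists_transversal (Φ : FrameSystem e d m) (hBU : BorsukUlamProperty q e) (he : e ≠ 1)
    (hcancel : NoCancellation e q) (hq : 0 < q)
    (hrep : ∀ n, ∃ H : Finset (Fin n → ZMod p), RepresentsUpToSign H ∧ q * H.card ≤ p ^ n - 1)
    (hmd : m < d) (hN : ∀ ℓ, (p ^ r ℓ - 1) * (c + 1 + (d - m)) ≤ N ℓ)
    (hC : ∀ ℓ i, (C ℓ i).card ≤ 2 * p ^ r ℓ - 1)
    (hf : ∀ ℓ, ContinuousOn (f ℓ) (stdSimp (N ℓ))) :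
    ∃ L : AffineSubspace ℝ (EuclideanSpace ℝ (Fin d)),
      (L : Set (EuclideanSpace ℝ (Fin d))).Nonempty ∧ Module.finrank ℝ L.direction = m ∧
        ∀ ℓ, MeetsRainbowFaces (Fin (p ^ r ℓ)) (C ℓ) (f ℓ) L := by
  choose H hH hcard using hrep
  obtain ⟨x, hx⟩ := exists_isBalanced (Φ := Φ) (C := C) hBU he hmd hf (fun ℓ => hH (r ℓ))
    (fun ℓ => (Nat.mul_le_mul_right _ (hcard (r ℓ))).trans (hN ℓ)) le_rfl
  have hn : q * (d - 1) < q * d := Nat.mul_lt_mul_of_pos_left (by omega) hq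
  exact hx.exists_affineSubspace (frameVectors_ne_zero hx.isJoinPoint hq hn hcancel) hC

end Transversals

lemma exists_representsUpToSign_zmod_two (n : ℕ) :
    ∃ H : Finset (Fin n → ZMod 2), RepresentsUpToSign H ∧ 1 * H.card ≤ 2 ^ n - 1 :=
  ⟨_, representsUpToSign_erase_zero, by simp⟩

lemma exists_representsUpToSign_zmod {p : ℕ} [Fact p.Prime] (hp : p ≠ 2) (n : ℕ) :
    ∃ H : Finset (Fin n → ZMod p), RepresentsUpToSign H ∧ 2 * H.card ≤ p ^ n - 1 := by
  have hneg : ∀ a : Fin n → ZMod p, a = -a → a = 0 := fun a ha => funext fun i =>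
    (Ring.eq_self_iff_eq_zero_of_char_ne_two (by rwa [ZMod.ringChar_zmod_n])).1 (congrFun ha i).symm
  simpa using exists_representsUpToSign hneg

lemma nonempty_frameSystem {p d m : ℕ} [Fact p.Prime] (hp : p ≠ 2) (hmd : m < d)
    (heven : Even (p * (d - m)) ∨ m = 0) (e : AddChar (ZMod p) ℂ) :
    Nonempty (FrameSystem e d m) := by
  have hodd : Odd p := (Fact.out : p.Prime).odd_of_ne_two hp
  rcases heven with h | rfl
  · obtain ⟨k, hk⟩ := (Nat.even_mul.1 h).resolve_left (Nat.not_even_iff_odd.2 hodd)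
    exact ⟨complexFrameSystem e hp hmd (hk.trans (two_mul k).symm)⟩
  · exact ⟨trivialFrameSystem e⟩

theorem topological_transversal_weak_colored_tverberg_general (m d p c : ℕ) (hp : p.Prime)
    (hmd : m < d) (e : Fin (m + 1) → ℕ) (heven : Even (p * (d - m)) ∨ m = 0)
    (N : Fin (m + 1) → ℕ) (hN : ∀ ℓ, (p ^ e ℓ - 1) * (c + 1 + (d - m)) ≤ N ℓ)
    (C : ∀ ℓ : Fin (m + 1), Fin c → Finset (Fin (N ℓ + 1)))
    (hCcard : ∀ ℓ i, (C ℓ i).card ≤ 2 * p ^ e ℓ - 1)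
    (f : ∀ ℓ : Fin (m + 1), EuclideanSpace ℝ (Fin (N ℓ + 1)) → EuclideanSpace ℝ (Fin d))
    (hf : ∀ ℓ, ContinuousOn (f ℓ) (stdSimp (N ℓ))) :
    ∃ L : AffineSubspace ℝ (EuclideanSpace ℝ (Fin d)),
      (L : Set (EuclideanSpace ℝ (Fin d))).Nonempty ∧ Module.finrank ℝ L.direction = m ∧
        ∀ ℓ, MeetsRainbowFaces (Fin (p ^ e ℓ)) (C ℓ) (f ℓ) L := by
  have : Fact p.Prime := ⟨hp⟩
  by_cases hp2 : p = 2
  · subst hp2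
    exact exists_transversal (realFrameSystem signChar hmd) borsukUlamProperty_signChar
      signChar_ne_one noCancellation_one one_pos exists_representsUpToSign_zmod_two hmd hN hCcard hf
  · obtain ⟨Φ⟩ := nonempty_frameSystem hp2 hmd heven ZMod.stdAddChar
    exact exists_transversal Φ borsukUlamProperty_stdAddChar stdAddChar_ne_one
      (noCancellation_two (hp.odd_of_ne_two hp2)) two_pos (exists_representsUpToSign_zmod hp2) hmd
      hN hCcard hf

/-- The topological transversal weak colored Tverberg theorem. -/
theorem topological_transversal_weak_colored_tverberg
    (m d p : ℕ) (hp : p.Prime) (hmd : m < d)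
    (e : Fin (m + 1) → ℕ)
    (heven : Even (p * (d - m)) ∨ m = 0)
    (N : Fin (m + 1) → ℕ) (hN : ∀ ℓ, N ℓ = (p ^ e ℓ - 1) * (2 * d + 2 - m))
    (C : ∀ ℓ : Fin (m + 1), Fin (d + 1) → Finset (Fin (N ℓ + 1)))
    (hCdisj : ∀ ℓ, ∀ i i' : Fin (d + 1), i ≠ i' → Disjoint (C ℓ i) (C ℓ i'))
    (hCcover : ∀ ℓ, ∀ v : Fin (N ℓ + 1), ∃ i, v ∈ C ℓ i)
    (hCcard : ∀ ℓ i, (C ℓ i).card ≤ 2 * p ^ e ℓ - 1)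
    (f : ∀ ℓ : Fin (m + 1), EuclideanSpace ℝ (Fin (N ℓ + 1)) → EuclideanSpace ℝ (Fin d))
    (hf : ∀ ℓ, ContinuousOn (f ℓ) (stdSimp (N ℓ))) :
    ∃ L : AffineSubspace ℝ (EuclideanSpace ℝ (Fin d)),
      (L : Set (EuclideanSpace ℝ (Fin d))).Nonempty ∧
      Module.finrank ℝ L.direction = m ∧
      ∀ ℓ : Fin (m + 1), ∃ σ : Fin (p ^ e ℓ) → Finset (Fin (N ℓ + 1)),
        (∀ j, (σ j).Nonempty) ∧
        (∀ j j', j ≠ j' → Disjoint (σ j) (σ j')) ∧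
        (∀ j, ∀ i : Fin (d + 1), (σ j ∩ C ℓ i).card ≤ 1) ∧
        (∀ j, (f ℓ '' simpFace (N ℓ) (σ j) ∩ (L : Set (EuclideanSpace ℝ (Fin d)))).Nonempty) :=
  topological_transversal_weak_colored_tverberg_general m d p (d + 1) hp hmd e heven N
    (fun ℓ => by rw [hN ℓ, show d + 1 + 1 + (d - m) = 2 * d + 2 - m by omega]) C hCcard f hf
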